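/- arXiv:2101.00228 — 5 statements merged into one kernel-verified Lean document; each statement's English description precedes it below -/
import Mathlib

section
/- Let n ≥ 2 and 0 < λ ≤ Λ. There is a constant c ∈ (0,1) depending only on n, λ, Λ with the following property: if u is continuous on B₁⁺ ∪ T₁, belongs to the viscosity Pucci class S(λ,Λ,0) in B₁⁺, satisfies u ≥ 0 in B₁⁺, u = 0 on T₁, and u(eₙ/2) ≥ 1, then u(x) ≥ c·xₙ for all x ∈ B⁺_{1/2}. -/
open MeasureTheory Set

noncomputable section

/-- Euclidean space `ℝⁿ`. -/
abbrev EucSp (n : ℕ) := EuclideanSpace ℝ (Fin n)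

/-- The last coordinate `xₙ` of a point `x ∈ ℝⁿ`. -/
def lastCoord (n : ℕ) (x : EucSp n) : ℝ :=
  if h : 0 < n then x ⟨n - 1, Nat.sub_lt h Nat.one_pos⟩ else 0

/-- The standard basis vector `eₙ`. -/
def lastBasis (n : ℕ) : EucSp n :=
  if h : 0 < n then EuclideanSpace.single ⟨n - 1, Nat.sub_lt h Nat.one_pos⟩ 1 else 0

/-- The norm `|x′|` of the horizontal part of `x = (x′, xₙ)`. -/
def primeNorm (n : ℕ) (x : EucSp n) : ℝ := ‖x - lastCoord n x • lastBasis n‖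

/-- The Hessian matrix `D²φ(x)` of a function `φ` at `x`. -/
def hessianMatrix (n : ℕ) (φ : EucSp n → ℝ) (x : EucSp n) : Matrix (Fin n) (Fin n) ℝ :=
  Matrix.of fun i j =>
    iteratedFDeriv ℝ 2 φ x ![EuclideanSpace.single i 1, EuclideanSpace.single j 1]

/-- `A` is a symmetric matrix with `λ I ≼ A ≼ Λ I` in the Loewner order. -/
def IsElliptic (n : ℕ) (lam Lam : ℝ) (A : Matrix (Fin n) (Fin n) ℝ) : Prop :=
  A.IsSymm ∧ (A - lam • (1 : Matrix (Fin n) (Fin n) ℝ)).PosSemidef ∧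
    ((Lam • (1 : Matrix (Fin n) (Fin n) ℝ)) - A).PosSemidef

/-- The viscosity Pucci class `S*(λ, Λ, f)` on an open set `U`. For `f = 0` this is
the class `S(λ, Λ, 0)`. -/
def InPucciStar (n : ℕ) (lam Lam : ℝ) (f : EucSp n → ℝ) (U : Set (EucSp n))
    (u : EucSp n → ℝ) : Prop :=
  ∀ φ : EucSp n → ℝ, ContDiff ℝ 2 φ →
    (∀ x ∈ U, IsLocalMaxOn (fun y => u y - φ y) U x →
      ∃ A : Matrix (Fin n) (Fin n) ℝ, IsElliptic n lam Lam A ∧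
        -|f x| ≤ (A * hessianMatrix n φ x).trace) ∧
    (∀ x ∈ U, IsLocalMinOn (fun y => u y - φ y) U x →
      ∃ A : Matrix (Fin n) (Fin n) ℝ, IsElliptic n lam Lam A ∧
        (A * hessianMatrix n φ x).trace ≤ |f x|)

/-- The `Lⁿ` norm `‖f‖_{Lⁿ(E)} = (∫_E |f|ⁿ)^{1/n}`. -/
def lnNorm (n : ℕ) (f : EucSp n → ℝ) (E : Set (EucSp n)) : ℝ :=
  (∫ x in E, |f x| ^ (n : ℝ)) ^ ((n : ℝ)⁻¹)

/-- A modulus of continuity: nonnegative, nondecreasing on `[0,∞)`, tending to `0` at `0⁺`. -/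
def IsModulus (ω : ℝ → ℝ) : Prop :=
  (∀ r, 0 ≤ ω r) ∧ MonotoneOn ω (Ici 0) ∧
    Filter.Tendsto ω (nhdsWithin 0 (Ioi 0)) (nhds 0)

/-- A Dini function: a modulus of continuity with `∫₀¹ ω(r)/r dr < ∞`. -/
def IsDini (ω : ℝ → ℝ) : Prop :=
  IsModulus ω ∧ IntegrableOn (fun r => ω r / r) (Ioc 0 1) volume

/-- The upper half ball `B_r⁺`. -/
def upperHalfBall (n : ℕ) (r : ℝ) : Set (EucSp n) :=
  {x | x ∈ Metric.ball (0 : EucSp n) r ∧ 0 < lastCoord n x}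

/-- The flat part `T_r = B_r ∩ {xₙ = 0}`. -/
def flatPart (n : ℕ) (r : ℝ) : Set (EucSp n) :=
  {x | x ∈ Metric.ball (0 : EucSp n) r ∧ lastCoord n x = 0}


/-- Supersolution half of the Pucci class, with plain local minima. -/
def PSuper (n : ℕ) (lam Lam : ℝ) (U : Set (EucSp n)) (u : EucSp n → ℝ) : Prop :=
  ∀ φ : EucSp n → ℝ, ContDiff ℝ 2 φ → ∀ x ∈ U, IsLocalMin (fun y => u y - φ y) x →
    ∃ A : Matrix (Fin n) (Fin n) ℝ, IsElliptic n lam Lam A ∧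
      (A * hessianMatrix n φ x).trace ≤ 0

theorem PSuper.mono {n : ℕ} {lam Lam : ℝ} {U V : Set (EucSp n)} {u : EucSp n → ℝ}
    (h : PSuper n lam Lam U u) (hV : V ⊆ U) : PSuper n lam Lam V u :=
  fun φ hφ x hx => h φ hφ x (hV hx)

theorem InPucciStar.psuper {n : ℕ} {lam Lam : ℝ} {U : Set (EucSp n)} {u : EucSp n → ℝ}
    (h : InPucciStar n lam Lam 0 U u) : PSuper n lam Lam U u := by
  intro φ hφ x hx hm
  simpa using (h φ hφ).2 x hx (hm.on U)

theorem InPucciStar.psuper_neg {n : ℕ} {lam Lam : ℝ} {U : Set (EucSp n)} {u : EucSp n → ℝ}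
    (h : InPucciStar n lam Lam 0 U u) (c : ℝ) : PSuper n lam Lam U (fun x => c - u x) := by
  intro φ hφ x hx hm
  have h1 : IsLocalMaxOn (fun y => u y - (-φ) y) U x := by
    refine IsLocalMax.on ?_ U
    filter_upwards [hm] with y hy
    simp only [Pi.neg_apply]
    linarith
  obtain ⟨A, hA, hA2⟩ := (h (-φ) hφ.neg).1 x hx h1
  refine ⟨A, hA, ?_⟩
  have h2 : hessianMatrix n (-φ) x = - hessianMatrix n φ x := by
    ext i j
    simp [hessianMatrix, iteratedFDeriv_neg]
  rw [h2] at hA2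
  simpa using hA2

/-- Hessian from the gradient field. -/
theorem hessianMatrix_of_gradient {n : ℕ} {φ : EucSp n → ℝ} {G : EucSp n → EucSp n}
    {G' : EucSp n →L[ℝ] EucSp n} {x : EucSp n}
    (h1 : ∀ y, HasFDerivAt φ (innerSL ℝ (G y)) y) (h2 : HasFDerivAt G G' x) (i j : Fin n) :
    hessianMatrix n φ x i j = G' (EuclideanSpace.single i 1) j := by
  have e1 : fderiv ℝ φ = fun y => innerSL ℝ (G y) := funext fun y => (h1 y).fderiv
  have e2 : HasFDerivAt (fun y => innerSL ℝ (G y)) ((innerSL ℝ (E := EucSp n)).comp G') x :=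
    (innerSL ℝ (E := EucSp n)).hasFDerivAt.comp x h2
  simp only [hessianMatrix, Matrix.of_apply, iteratedFDeriv_two_apply, e1, e2.fderiv]
  simp [EuclideanSpace.inner_single_right]

theorem elliptic_trace {n : ℕ} {lam Lam : ℝ} {A : Matrix (Fin n) (Fin n) ℝ}
    (hA : IsElliptic n lam Lam A) : A.trace ≤ n * Lam := by
  have := hA.2.2.trace_nonneg
  simp [Matrix.trace_sub, Matrix.trace_smul] at this
  linarith

theorem elliptic_quad {n : ℕ} {lam Lam : ℝ} {A : Matrix (Fin n) (Fin n) ℝ}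
    (hA : IsElliptic n lam Lam A) (v : EucSp n) :
    lam * ‖v‖ ^ 2 ≤ ∑ i, ∑ j, A i j * (v i * v j) := by
  have h := hA.2.1.dotProduct_mulVec_nonneg (x := (fun i => v i))
  rw [EuclideanSpace.real_norm_sq_eq]
  have e : (star fun i => v i) ⬝ᵥ (A - lam • (1 : Matrix (Fin n) (Fin n) ℝ)).mulVec (fun i => v i)
      = ∑ i, ∑ j, A i j * (v i * v j) - lam * ∑ i, v i ^ 2 := by
    rw [Matrix.sub_mulVec, dotProduct_sub, Matrix.smul_mulVec, Matrix.one_mulVec]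
    simp only [dotProduct, Matrix.mulVec, Finset.mul_sum, Pi.star_apply, Pi.smul_apply]
    congr 1
    · refine Finset.sum_congr rfl fun i _ => Finset.sum_congr rfl fun j _ => ?_
      simp; ring
    · refine Finset.sum_congr rfl fun i _ => ?_
      simp; ring
  rw [e] at h
  linarith

/-- Testing with a function whose Hessian is `-α I + β v ⊗ v`. -/
theorem PSuper.test {n : ℕ} {lam Lam : ℝ} {U : Set (EucSp n)} {u : EucSp n → ℝ}
    (h : PSuper n lam Lam U u) {φ : EucSp n → ℝ} (hφ : ContDiff ℝ 2 φ) {x : EucSp n}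
    (hx : x ∈ U) (hm : IsLocalMin (fun y => u y - φ y) x)
    {G : EucSp n → EucSp n} {G' : EucSp n →L[ℝ] EucSp n}
    (h1 : ∀ y, HasFDerivAt φ (innerSL ℝ (G y)) y) (h2 : HasFDerivAt G G' x)
    {α β : ℝ} (hα : 0 ≤ α) (hβ : 0 ≤ β) {v : EucSp n}
    (h3 : ∀ w, G' w = -α • w + (β * inner ℝ v w) • v) :
    β * (lam * ‖v‖ ^ 2) ≤ α * (n * Lam) := by
  obtain ⟨A, hA, hA2⟩ := h φ hφ x hx hm
  have e : (A * hessianMatrix n φ x).trace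
      = -α * A.trace + β * ∑ i, ∑ j, A i j * (v i * v j) := by
    simp only [Matrix.trace, Matrix.diag, Matrix.mul_apply, Finset.mul_sum]
    rw [← Finset.sum_add_distrib]
    refine Finset.sum_congr rfl fun i _ => ?_
    have : ∀ j, A i j * hessianMatrix n φ x j i
        = (if j = i then -α * A i j else 0) + β * (A i j * (v i * v j)) := by
      intro j
      rw [hessianMatrix_of_gradient h1 h2, h3]
      simp only [PiLp.add_apply, PiLp.smul_apply, smul_eq_mul,
        EuclideanSpace.inner_single_right, PiLp.single_apply]
      by_cases hij : j = i
      · simp [hij]; ring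
      · have : ¬ i = j := fun h => hij h.symm
        simp [hij, this]; ring
    simp only [this, Finset.sum_add_distrib]
    simp
  rw [e] at hA2
  have t1 := mul_le_mul_of_nonneg_left (elliptic_trace hA) hα
  have t2 := mul_le_mul_of_nonneg_left (elliptic_quad hA v) hβ
  linarith


/-- The exponential (Hopf) barrier. -/
theorem barrier {n : ℕ} {lam Lam : ℝ} (hlam : 0 < lam)
    {u : EucSp n → ℝ} {z : EucSp n} {ρ ρ₁ m α : ℝ} (hρ₁ : 0 < ρ₁) (hm : 0 < m)
    (hα : 0 < α) (hα2 : n * Lam < 2 * α * lam * ρ₁ ^ 2)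
    (hs : PSuper n lam Lam (Metric.ball z ρ) u)
    (hc : ContinuousOn u (Metric.closedBall z ρ))
    (h0 : ∀ x ∈ Metric.closedBall z ρ, 0 ≤ u x)
    (h1 : ∀ x ∈ Metric.closedBall z ρ₁, m ≤ u x) :
    ∀ x ∈ Metric.closedBall z ρ,
      m * (Real.exp (-α * ‖x - z‖ ^ 2) - Real.exp (-α * ρ ^ 2)) ≤ u x := by
  set φ : EucSp n → ℝ := fun x => m * (Real.exp (-α * ‖x - z‖ ^ 2) - Real.exp (-α * ρ ^ 2))
    with hφdef
  have hφ : ContDiff ℝ 2 φ := by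
    refine contDiff_const.mul ((Real.contDiff_exp.comp (contDiff_const.mul ?_)).sub contDiff_const)
    exact (contDiff_id.sub contDiff_const).norm_sq ℝ
  have hcont : ContinuousOn (fun x => u x - φ x) (Metric.closedBall z ρ) :=
    hc.sub hφ.continuous.continuousOn
  intro x hx
  obtain ⟨y, hy, hmin⟩ := (isCompact_closedBall z ρ).exists_isMinOn ⟨x, hx⟩ hcont
  have hxy : u y - φ y ≤ u x - φ x := hmin hx
  by_contra! hcon
  have hneg : u y - φ y < 0 := by
    have : u x - φ x < 0 := by simpa [hφdef] using hcon
    linarith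
  have hyρ : ‖y - z‖ ≤ ρ := by simpa [dist_eq_norm] using hy
  have hy1 : ρ₁ < ‖y - z‖ := by
    by_contra! hle
    have := h1 y (by simpa [dist_eq_norm] using hle)
    have h5 : Real.exp (-α * ‖y - z‖ ^ 2) ≤ 1 := by
      rw [Real.exp_le_one_iff]; nlinarith [sq_nonneg ‖y - z‖]
    have h6 := Real.exp_pos (-α * ρ ^ 2)
    have : φ y ≤ m := by
      simp only [hφdef]
      nlinarith
    linarith
  have hy2 : ‖y - z‖ < ρ := by
    rcases lt_or_eq_of_le hyρ with h | h
    · exact h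
    · exfalso
      have := h0 y hy
      have : φ y = 0 := by simp [hφdef, h]
      linarith
  have hyb : y ∈ Metric.ball z ρ := by simpa [dist_eq_norm] using hy2
  have hloc : IsLocalMin (fun x => u x - φ x) y := by
    filter_upwards [Metric.isOpen_ball.mem_nhds hyb] with w hw
    exact hmin (Metric.ball_subset_closedBall hw)
  have d1 : ∀ w, HasFDerivAt (fun x : EucSp n => Real.exp (-α * ‖x - z‖ ^ 2))
      (innerSL ℝ ((-(2 * α) * Real.exp (-α * ‖w - z‖ ^ 2)) • (w - z))) w := by
    intro w
    refine HasFDerivAt.congr_fderiv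
      (((hasFDerivAt_id w).sub_const z).norm_sq.const_mul (-α)).exp ?_
    ext t
    simp
    ring
  have d2 : ∀ w, HasFDerivAt φ
      (innerSL ℝ ((-(2 * α * m) * Real.exp (-α * ‖w - z‖ ^ 2)) • (w - z))) w := by
    intro w
    refine HasFDerivAt.congr_fderiv
      (((d1 w).sub_const (Real.exp (-α * ρ ^ 2))).const_mul m) ?_
    ext t
    simp
    ring
  have d3 := (((d1 y).const_mul (-(2 * α * m)))).smul ((hasFDerivAt_id y).sub_const z)
  set E := Real.exp (-α * ‖y - z‖ ^ 2) with hE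
  have hEpos : 0 < E := Real.exp_pos _
  have := hs.test hφ hyb hloc d2 d3 (α := 2 * α * m * E) (β := 4 * α ^ 2 * m * E) (v := y - z)
    (by positivity) (by positivity) (by
      intro w
      simp [inner_sub_left]
      congr 1
      ring)
  have h7 : ρ₁ ^ 2 < ‖y - z‖ ^ 2 := by gcongr
  have h8 : 2 * α * m * E * (2 * α * (lam * ‖y - z‖ ^ 2)) ≤ 2 * α * m * E * (n * Lam) := by
    linarith
  have h9 := le_of_mul_le_mul_left h8 (by positivity)
  have : 2 * α * lam * ρ₁ ^ 2 < 2 * α * lam * ‖y - z‖ ^ 2 := by gcongr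
  linarith

set_option maxHeartbeats 1000000 in
/-- Contact points of sliding paraboloids: the centre depends Lipschitz-continuously on the
contact point. -/
theorem contact {n : ℕ} (hn : 0 < n) {lam Lam : ℝ} (hlam : 0 < lam) (hLam : lam ≤ Lam)
    {u : EucSp n → ℝ} {V : Set (EucSp n)} {a d S : ℝ} (ha : 0 < a) (hd : 0 < d) (hS : 0 < S)
    (hS2 : 9 * (2 * n * Lam) ≤ lam * (S ^ 2 - 4))
    (hs : PSuper n lam Lam V u) (hc : ContinuousOn u V)
    {x₀ x₁ y₀ y₁ : EucSp n} (hball : Metric.closedBall x₀ (S * d) ⊆ V)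
    (hx₁ : x₁ ∈ V) (hxd : ‖x₁ - x₀‖ ≤ d)
    (h0 : ∀ w ∈ V, u x₀ + a / 2 * ‖x₀ - y₀‖ ^ 2 ≤ u w + a / 2 * ‖w - y₀‖ ^ 2)
    (h1 : ∀ w ∈ V, u x₁ + a / 2 * ‖x₁ - y₁‖ ^ 2 ≤ u w + a / 2 * ‖w - y₁‖ ^ 2) :
    ‖y₁ - y₀‖ ≤ 9 * n * Lam / lam * d := by
  by_contra! hcon
  have hLam0 : 0 < Lam := hlam.trans_le hLam
  have hn' : (0 : ℝ) < n := by exact_mod_cast hn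
  set D := ‖y₁ - y₀‖ with hD
  have hDpos : 0 < D := lt_trans (by positivity) hcon
  obtain ⟨e, hen, hye⟩ : ∃ e : EucSp n, ‖e‖ = 1 ∧ y₁ - y₀ = D • e := by
    refine ⟨D⁻¹ • (y₁ - y₀), ?_, ?_⟩
    · rw [norm_smul, ← hD, Real.norm_of_nonneg (by positivity)]
      field_simp
    · rw [smul_smul, mul_inv_cancel₀ hDpos.ne', one_smul]
  set γ : ℝ := lam / (2 * n * Lam) with hγ
  have hγpos : 0 < γ := by positivity
  set κ : ℝ := a * D / (9 * d) with hκ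
  have hκpos : 0 < κ := by positivity
  -- first estimate: the lower bound by the second paraboloid
  have hx₀ : x₀ ∈ V := hball (Metric.mem_closedBall_self (by positivity))
  have key : ∀ w ∈ V, u x₀ + a / 2 * ‖x₀ - y₀‖ ^ 2 - a / 2 * ‖w - y₀‖ ^ 2
      + a * D * (inner ℝ e (w - x₀) - d) ≤ u w := by
    intro w hw
    have k1 := h1 w hw
    have k0 := h0 x₁ hx₁
    have k2 : inner ℝ e (x₁ - x₀) ≤ d := by
      refine (real_inner_le_norm _ _).trans ?_
      rw [hen]; linarith
    have k3 : a / 2 * ‖x₁ - y₁‖ ^ 2 - a / 2 * ‖x₁ - y₀‖ ^ 2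
        - (a / 2 * ‖w - y₁‖ ^ 2 - a / 2 * ‖w - y₀‖ ^ 2)
        = a * D * (inner ℝ e (w - x₀) - inner ℝ e (x₁ - x₀)) := by
      have hy : y₁ = y₀ + D • e := by rw [← hye]; abel
      have q1 : ‖x₁ - y₁‖ ^ 2 = ‖x₁ - y₀‖ ^ 2 - 2 * inner ℝ (x₁ - y₀) (D • e) + ‖D • e‖ ^ 2 := by
        rw [hy, ← sub_sub, norm_sub_sq_real]
      have q2 : ‖w - y₁‖ ^ 2 = ‖w - y₀‖ ^ 2 - 2 * inner ℝ (w - y₀) (D • e) + ‖D • e‖ ^ 2 := by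
        rw [hy, ← sub_sub, norm_sub_sq_real]
      rw [q1, q2, inner_smul_right, inner_smul_right, real_inner_comm e (x₁ - y₀),
        real_inner_comm e (w - y₀)]
      simp only [inner_sub_right]
      ring
    have k4 : a * D * (inner ℝ e (w - x₀) - d)
        ≤ a * D * (inner ℝ e (w - x₀) - inner ℝ e (x₁ - x₀)) := by gcongr
    linarith
  set φ : EucSp n → ℝ := fun w => u x₀ + a / 2 * ‖x₀ - y₀‖ ^ 2 - a / 2 * ‖w - y₀‖ ^ 2
    + κ * ((inner ℝ e (w - x₀) + d) ^ 2 - γ * (‖w - x₀‖ ^ 2 - (inner ℝ e (w - x₀)) ^ 2))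
    with hφdef
  have hin : ContDiff ℝ 2 (fun w : EucSp n => inner ℝ e (w - x₀)) :=
    contDiff_const.inner ℝ (contDiff_id.sub contDiff_const)
  have hφ : ContDiff ℝ 2 φ := by
    refine (contDiff_const.sub (contDiff_const.mul
      ((contDiff_id.sub contDiff_const).norm_sq ℝ))).add (contDiff_const.mul
      (((hin.add contDiff_const).pow 2).sub (contDiff_const.mul
        (((contDiff_id.sub contDiff_const).norm_sq ℝ).sub (hin.pow 2)))))
  -- the region
  set K : Set (EucSp n) := Metric.closedBall x₀ (S * d) ∩
    {w | -d ≤ inner ℝ e (w - x₀) ∧ inner ℝ e (w - x₀) ≤ 2 * d} with hK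
  have hKc : IsCompact K := by
    refine (isCompact_closedBall x₀ (S * d)).inter_right ?_
    exact (isClosed_le continuous_const hin.continuous).inter
      (isClosed_le hin.continuous continuous_const)
  have hx₀K : x₀ ∈ K := by
    refine ⟨Metric.mem_closedBall_self (by positivity), ?_, ?_⟩ <;> simp <;> linarith
  obtain ⟨y, hy, hmin⟩ := hKc.exists_isMinOn ⟨x₀, hx₀K⟩
    ((hc.mono (fun w hw => hball hw.1)).sub hφ.continuous.continuousOn)
  have hyV : y ∈ V := hball hy.1
  have hneg : u y - φ y < 0 := by
    have t : u y - φ y ≤ u x₀ - φ x₀ := hmin hx₀K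
    have : u x₀ - φ x₀ = -(κ * d ^ 2) := by simp [hφdef]
    have : 0 < κ * d ^ 2 := by positivity
    linarith
  have P0 := h0 y hyV
  have P1 := key y hyV
  set t : ℝ := inner ℝ e (y - x₀) with ht
  have htabs : t ^ 2 ≤ ‖y - x₀‖ ^ 2 := by
    have := abs_real_inner_le_norm e (y - x₀)
    rw [hen, one_mul, ← ht] at this
    rw [← sq_abs t]
    gcongr
  have hφy : φ y = u x₀ + a / 2 * ‖x₀ - y₀‖ ^ 2 - a / 2 * ‖y - y₀‖ ^ 2
    + κ * ((t + d) ^ 2 - γ * (‖y - x₀‖ ^ 2 - t ^ 2)) := rfl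
  have hpos : 0 < (t + d) ^ 2 - γ * (‖y - x₀‖ ^ 2 - t ^ 2) := by
    by_contra! hle
    have : κ * ((t + d) ^ 2 - γ * (‖y - x₀‖ ^ 2 - t ^ 2)) ≤ 0 :=
      mul_nonpos_of_nonneg_of_nonpos hκpos.le hle
    linarith
  obtain ⟨hy1, hy2, hy3⟩ := hy
  change -d ≤ t at hy2
  change t ≤ 2 * d at hy3
  have hA1 : -d < t := by
    rcases lt_or_eq_of_le hy2 with h | h
    · exact h
    · exfalso
      rw [← h] at hpos htabs
      have : 0 ≤ γ * (‖y - x₀‖ ^ 2 - (-d) ^ 2) := mul_nonneg hγpos.le (by linarith)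
      have h5 : (-d + d) ^ 2 = 0 := by ring
      linarith
  have hA2 : t < 2 * d := by
    rcases lt_or_eq_of_le hy3 with h | h
    · exact h
    · exfalso
      have e1 : κ * ((t + d) ^ 2 - γ * (‖y - x₀‖ ^ 2 - t ^ 2)) ≤ κ * (9 * d ^ 2) := by
        gcongr
        have : 0 ≤ γ * (‖y - x₀‖ ^ 2 - t ^ 2) := mul_nonneg hγpos.le (by linarith)
        have h5 : (t + d) ^ 2 = 9 * d ^ 2 := by rw [h]; ring
        linarith
      have e2 : κ * (9 * d ^ 2) = a * D * (t - d) := by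
        rw [h, hκ]; field_simp; ring
      linarith
  have hA3 : ‖y - x₀‖ < S * d := by
    have hle : ‖y - x₀‖ ≤ S * d := by simpa [dist_eq_norm] using hy1
    rcases lt_or_eq_of_le hle with h | h
    · exact h
    · exfalso
      rw [h] at hpos
      have e1 : (t + d) ^ 2 ≤ 9 * d ^ 2 := by
        have := pow_le_pow_left₀ (by linarith : 0 ≤ t + d) (by linarith : t + d ≤ 3 * d) 2
        linarith
      have e2 : t ^ 2 ≤ 4 * d ^ 2 := by
        have : t ^ 2 ≤ (2 * d) ^ 2 := sq_le_sq' (by linarith) (by linarith)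
        linarith
      have e3 : 9 ≤ γ * (S ^ 2 - 4) := by
        rw [hγ, div_mul_eq_mul_div, le_div_iff₀ (by positivity)]
        exact hS2
      have e4 : γ * (S ^ 2 - 4) * d ^ 2 ≤ γ * ((S * d) ^ 2 - t ^ 2) := by
        have : (S ^ 2 - 4) * d ^ 2 ≤ (S * d) ^ 2 - t ^ 2 := by linarith
        have := mul_le_mul_of_nonneg_left this hγpos.le
        linarith
      have e5 : 9 * d ^ 2 ≤ γ * (S ^ 2 - 4) * d ^ 2 := by gcongr
      linarith
  have hloc : IsLocalMin (fun x => u x - φ x) y := by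
    have o1 : IsOpen (Metric.ball x₀ (S * d) ∩
        {w | -d < inner ℝ e (w - x₀) ∧ inner ℝ e (w - x₀) < 2 * d}) := by
      refine Metric.isOpen_ball.inter ?_
      exact (isOpen_lt continuous_const hin.continuous).inter
        (isOpen_lt hin.continuous continuous_const)
    have o2 := o1.mem_nhds (x := y) ⟨by simpa [dist_eq_norm] using hA3, hA1, hA2⟩
    filter_upwards [o2] with w hw
    exact hmin ⟨Metric.ball_subset_closedBall hw.1, hw.2.1.le, hw.2.2.le⟩
  have di : ∀ w, HasFDerivAt (fun w : EucSp n => inner ℝ e (w - x₀)) (innerSL ℝ e) w := by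
    intro w
    exact (innerSL ℝ e).hasFDerivAt.comp w ((hasFDerivAt_id w).sub_const x₀)
  have d1 : ∀ w, HasFDerivAt φ (innerSL ℝ (-a • (w - y₀)
      + κ • ((2 * (inner ℝ e (w - x₀) + d) + 2 * γ * inner ℝ e (w - x₀)) • e
        - (2 * γ) • (w - x₀)))) w := by
    intro w
    have r1 := ((((hasFDerivAt_id w).sub_const y₀).norm_sq.const_mul (a / 2)).const_sub
      (u x₀ + a / 2 * ‖x₀ - y₀‖ ^ 2)).add
      ((((((di w).add_const d).pow 2).sub ((((hasFDerivAt_id w).sub_const x₀).norm_sq.sub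
        ((di w).pow 2)).const_mul γ)).const_mul κ))
    refine HasFDerivAt.congr_fderiv r1 ?_
    ext s
    simp [-neg_smul]
    ring
  have d2 := (((hasFDerivAt_id y).sub_const y₀).const_smul (-a)).add
    (((((((di y).add_const d).const_mul 2).add ((di y).const_mul (2 * γ))).smul_const e).sub
      (((hasFDerivAt_id y).sub_const x₀).const_smul (2 * γ))).const_smul κ)
  have fin := hs.test hφ hyV hloc d1 d2 (α := a + 2 * κ * γ) (β := 2 * κ * (1 + γ)) (v := e)
    (by positivity) (by positivity) (by
      intro w
      simp
      module)
  rw [hen] at fin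
  have f1 : 2 * κ * γ * (n * Lam) = κ * lam := by
    rw [hγ]; field_simp
  have f2 : 0 < 2 * κ * γ * lam := by positivity
  have f3 : a * (n * Lam) < κ * lam := by
    have : 9 * n * Lam * d < D * lam := by
      have := mul_lt_mul_of_pos_right hcon hlam
      have e : 9 * n * Lam / lam * d * lam = 9 * n * Lam * d := by field_simp
      linarith
    rw [hκ, div_mul_eq_mul_div, lt_div_iff₀ (by positivity)]
    have := mul_lt_mul_of_pos_left this ha
    linarith
  linarith


theorem volume_le_of_expand {n : ℕ} {C : ℝ} (s : Set (EucSp n))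
    (g : EucSp n → EucSp n) (h : ∀ y ∈ s, ∀ y' ∈ s, ‖y - y'‖ ≤ C * ‖g y - g y'‖) :
    volume s ≤ ENNReal.ofReal C ^ n * volume (g '' s) := by
  classical
  set ν : Measure (EucSp n) := Measure.hausdorffMeasure (n : ℝ) with hν
  have hHaar : ν.IsAddHaarMeasure := by
    simpa using MeasureTheory.isAddHaarMeasure_hausdorffMeasure (E := EucSp n)
  have e := Measure.isAddLeftInvariant_eq_smul (volume : Measure (EucSp n)) ν
  have hinj : Set.InjOn g s := by
    intro y hy y' hy' hg
    have := h y hy y' hy'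
    rw [hg, sub_self, norm_zero, mul_zero] at this
    exact sub_eq_zero.1 (norm_le_zero_iff.1 this)
  have hL : LipschitzOnWith C.toNNReal (Function.invFunOn g s) (g '' s) := by
    refine LipschitzOnWith.of_dist_le_mul ?_
    rintro _ ⟨y, hy, rfl⟩ _ ⟨y', hy', rfl⟩
    rw [hinj.leftInvOn_invFunOn hy, hinj.leftInvOn_invFunOn hy', dist_eq_norm, dist_eq_norm]
    refine (h y hy y' hy').trans ?_
    gcongr
    exact Real.le_coe_toNNReal C
  have h2 := hL.hausdorffMeasure_image_le (d := n) (by positivity)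
  rw [hinj.leftInvOn_invFunOn.image_image, ENNReal.rpow_natCast, ← hν] at h2
  rw [e]
  simp only [Measure.smul_apply]
  rw [ENNReal.smul_def, ENNReal.smul_def, smul_eq_mul, smul_eq_mul]
  calc _ ≤ _ := mul_le_mul_right h2 _
    _ = _ := by rw [ENNReal.ofReal]; ring

theorem point_measure0 {n : ℕ} (hn : 0 < n) {lam Lam : ℝ} (hlam : 0 < lam) (hLam : lam ≤ Lam)
    {u : EucSp n → ℝ} {S s h : ℝ} (hs : 0 < s) (hh : 0 < h) (hS : 0 < S)
    (hS2 : 9 * (2 * n * Lam) ≤ lam * (S ^ 2 - 4)) {z x₁ : EucSp n}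
    (hsup : PSuper n lam Lam (Metric.ball z ((2 * S + 1) * s)) u)
    (hc : ContinuousOn u (Metric.closedBall z ((2 * S + 1) * s)))
    (h0 : ∀ x ∈ Metric.closedBall z ((2 * S + 1) * s), 0 ≤ u x)
    (hx₁ : ‖x₁ - z‖ ≤ s / 8) (hux : u x₁ ≤ h) :
    volume (Metric.ball z (s / 8)) ≤ ENNReal.ofReal (9 * n * Lam / lam) ^ n *
      volume (Metric.ball z s ∩ {x | u x ≤ 2 * h}) := by
  set a : ℝ := 32 * h / s ^ 2 with ha
  have hapos : 0 < a := by positivity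
  have hx₁' : x₁ ∈ Metric.closedBall z ((2 * S + 1) * s) := by
    rw [Metric.mem_closedBall, dist_eq_norm]
    nlinarith
  have hex : ∀ y : EucSp n, ∃ x ∈ Metric.closedBall z ((2 * S + 1) * s),
      ∀ w ∈ Metric.closedBall z ((2 * S + 1) * s),
      u x + a / 2 * ‖x - y‖ ^ 2 ≤ u w + a / 2 * ‖w - y‖ ^ 2 := by
    intro y
    obtain ⟨x, hx, hm⟩ := (isCompact_closedBall z ((2 * S + 1) * s)).exists_isMinOn
      ⟨x₁, hx₁'⟩ (f := fun w => u w + a / 2 * ‖w - y‖ ^ 2)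
      (hc.add (by fun_prop))
    exact ⟨x, hx, fun w hw => hm hw⟩
  choose g hg1 hg2 using hex
  have hg3 : ∀ y ∈ Metric.ball z (s / 8), u (g y) ≤ 2 * h ∧ ‖g y - z‖ < s / 2 := by
    intro y hy
    have hy' : ‖y - z‖ < s / 8 := by simpa [dist_eq_norm] using hy
    have k1 := hg2 y x₁ hx₁'
    have k2 : ‖x₁ - y‖ ≤ s / 4 := by
      have : x₁ - y = (x₁ - z) - (y - z) := by abel
      rw [this]
      refine (norm_sub_le _ _).trans ?_
      linarith
    have k3 : a / 2 * ‖x₁ - y‖ ^ 2 ≤ a / 2 * (s / 4) ^ 2 := by gcongr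
    have k4 : a / 2 * (s / 4) ^ 2 = h := by rw [ha]; field_simp; norm_num
    have k5 : 0 ≤ a / 2 * ‖g y - y‖ ^ 2 := by positivity
    have k6 := h0 _ (hg1 y)
    refine ⟨by linarith, ?_⟩
    have k7 : ‖g y - y‖ ≤ 3 / 8 * s := by
      by_contra! hlt
      have : a / 2 * (3 / 8 * s) ^ 2 < a / 2 * ‖g y - y‖ ^ 2 := by gcongr
      have e : a / 2 * (3 / 8 * s) ^ 2 = 9 / 4 * h := by rw [ha]; field_simp; norm_num
      linarith
    have : g y - z = (g y - y) + (y - z) := by abel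
    rw [this]
    refine (norm_add_le _ _).trans_lt ?_
    linarith
  have hexp : ∀ y ∈ Metric.ball z (s / 8), ∀ y' ∈ Metric.ball z (s / 8),
      ‖y - y'‖ ≤ 9 * n * Lam / lam * ‖g y - g y'‖ := by
    intro y hy y' hy'
    have b1 := (hg3 y hy).2
    have b2 := (hg3 y' hy').2
    have hdist : ‖g y - g y'‖ < s := by
      have : g y - g y' = (g y - z) - (g y' - z) := by abel
      rw [this]
      refine (norm_sub_le _ _).trans_lt ?_
      linarith
    have key : ∀ d, 0 < d → d ≤ s → ‖g y - g y'‖ ≤ d → ‖y - y'‖ ≤ 9 * n * Lam / lam * d := by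
      intro d hd hds hyd
      refine contact hn hlam hLam (S := S) (a := a) (x₀ := g y') (x₁ := g y) hapos hd hS hS2 hsup
        (hc.mono Metric.ball_subset_closedBall) ?_ ?_ hyd
        (fun w hw => hg2 y' w (Metric.ball_subset_closedBall hw))
        (fun w hw => hg2 y w (Metric.ball_subset_closedBall hw))
      · refine Metric.closedBall_subset_ball' ?_
        rw [dist_eq_norm]
        nlinarith
      · rw [Metric.mem_ball, dist_eq_norm]
        nlinarith
    have hC : 0 < 9 * n * Lam / lam := by
      have : 0 < Lam := hlam.trans_le hLam
      positivity
    rcases (norm_nonneg (g y - g y')).eq_or_lt with h00 | hpos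
    · rw [← h00, mul_zero]
      refine le_of_forall_pos_le_add fun ε hε => ?_
      have := key (min s (ε / (9 * n * Lam / lam))) (by positivity) (min_le_left _ _)
        (by rw [← h00]; positivity)
      refine this.trans ?_
      rw [zero_add]
      calc _ ≤ 9 * n * Lam / lam * (ε / (9 * n * Lam / lam)) := by gcongr; exact min_le_right _ _
        _ = ε := mul_div_cancel₀ _ hC.ne'
    · exact key _ hpos hdist.le le_rfl
  refine (volume_le_of_expand _ g hexp).trans ?_
  gcongr
  rintro _ ⟨y, hy, rfl⟩
  refine ⟨?_, (hg3 y hy).1⟩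
  rw [Metric.mem_ball, dist_eq_norm]
  linarith [(hg3 y hy).2]

theorem real_volume_ball {n : ℕ} (hn : 0 < n) (x : EucSp n) {r : ℝ} (hr : 0 ≤ r) :
    volume.real (Metric.ball x r) = r ^ n * volume.real (Metric.ball (0 : EucSp n) 1) := by
  have : Nontrivial (EucSp n) := by
    have : Nonempty (Fin n) := ⟨⟨0, hn⟩⟩
    infer_instance
  rw [measureReal_def, Measure.addHaar_ball _ _ hr, ENNReal.toReal_mul,
    ENNReal.toReal_ofReal (by positivity), measureReal_def]
  simp

/-- Point-to-measure estimate. -/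
theorem point_measure (n : ℕ) (hn : 0 < n) (lam Lam : ℝ) (hlam : 0 < lam) (hLam : lam ≤ Lam) :
    ∃ R M K : ℝ, 6 ≤ R ∧ 1 < M ∧ 1 < K ∧ ∀ (u : EucSp n → ℝ) (s h : ℝ) (z x₀ : EucSp n),
      0 < s → 0 < h →
      PSuper n lam Lam (Metric.ball z (R * s)) u →
      ContinuousOn u (Metric.closedBall z (R * s)) →
      (∀ x ∈ Metric.closedBall z (R * s), 0 ≤ u x) →
      ‖x₀ - z‖ ≤ 5 * s → u x₀ ≤ h →
      volume.real (Metric.ball z s) ≤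
        K * volume.real (Metric.ball z s ∩ {x | u x ≤ M * h}) := by
  have hLam0 : 0 < Lam := hlam.trans_le hLam
  have hn' : (0 : ℝ) < n := by exact_mod_cast hn
  set q : ℝ := n * Lam / lam with hq
  have hqpos : 0 < q := by positivity
  set S : ℝ := 18 * q + 4 with hS
  have hS2 : 9 * (2 * n * Lam) ≤ lam * (S ^ 2 - 4) := by
    have e : n * Lam = q * lam := by rw [hq]; field_simp
    have : 18 * q ≤ S ^ 2 - 4 := by rw [hS]; nlinarith
    nlinarith
  set η : ℝ := Real.exp (-(64 * q) * 5 ^ 2) - Real.exp (-(64 * q) * 6 ^ 2) with hη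
  have hηpos : 0 < η := by
    rw [hη, sub_pos, Real.exp_lt_exp]; nlinarith
  have hη1 : η < 1 := by
    have : Real.exp (-(64 * q) * 5 ^ 2) ≤ 1 := by rw [Real.exp_le_one_iff]; nlinarith
    have := Real.exp_pos (-(64 * q) * 6 ^ 2)
    linarith
  refine ⟨2 * S + 1, 4 / η, 8 ^ n * (9 * n * Lam / lam) ^ n + 1, by linarith, ?_, ?_, ?_⟩
  · rw [lt_div_iff₀ hηpos]; linarith
  · have : 0 < (8 : ℝ) ^ n * (9 * n * Lam / lam) ^ n := by positivity
    linarith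
  intro u s h z x₀ hs hh hsup hc h0 hx₀ hux
  -- find a good point near the centre
  obtain ⟨x₁, hx₁, hux₁⟩ : ∃ x₁, ‖x₁ - z‖ ≤ s / 8 ∧ u x₁ ≤ 2 / η * h := by
    by_contra! hcon
    have hsub : 6 * s ≤ (2 * S + 1) * s := by nlinarith
    have := barrier hlam (u := u) (z := z) (ρ := 6 * s) (ρ₁ := s / 8) (m := 2 / η * h)
      (α := 64 * q / s ^ 2) (by positivity) (by positivity) (by positivity) (by
        have : 2 * (64 * q / s ^ 2) * lam * (s / 8) ^ 2 = 2 * (n * Lam) := by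
          rw [hq]; field_simp; norm_num
        rw [this]
        have : 0 < n * Lam := by positivity
        linarith)
      (hsup.mono (Metric.ball_subset_ball hsub))
      (hc.mono (Metric.closedBall_subset_closedBall hsub))
      (fun x hx => h0 x (Metric.closedBall_subset_closedBall hsub hx))
      (fun x hx => (hcon x (by simpa [dist_eq_norm] using hx)).le) x₀
      (by rw [Metric.mem_closedBall, dist_eq_norm]; linarith)
    have e1 : -(64 * q / s ^ 2) * (6 * s) ^ 2 = -(64 * q) * 6 ^ 2 := by field_simp
    have e2 : -(64 * q) * 5 ^ 2 ≤ -(64 * q / s ^ 2) * ‖x₀ - z‖ ^ 2 := by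
      have : 64 * q / s ^ 2 * ‖x₀ - z‖ ^ 2 ≤ 64 * q / s ^ 2 * (5 * s) ^ 2 := by gcongr
      have e : 64 * q / s ^ 2 * (5 * s) ^ 2 = 64 * q * 5 ^ 2 := by field_simp
      linarith
    rw [e1] at this
    have e3 := Real.exp_le_exp.2 e2
    have e4 : 2 / η * h * η ≤ 2 / η * h * (Real.exp (-(64 * q / s ^ 2) * ‖x₀ - z‖ ^ 2)
        - Real.exp (-(64 * q) * 6 ^ 2)) := by
      gcongr
      rw [hη]; gcongr
    have e5 : 2 / η * h * η = 2 * h := by field_simp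
    linarith
  have key := point_measure0 hn hlam hLam hs (by positivity) (by positivity) hS2 hsup hc h0 hx₁ hux₁
  set T := Metric.ball z s ∩ {x | u x ≤ 4 / η * h} with hT
  have eT : Metric.ball z s ∩ {x | u x ≤ 2 * (2 / η * h)} = T := by
    rw [hT]; congr 2; ext x; rw [show 2 * (2 / η * h) = 4 / η * h by ring]
  rw [eT] at key
  have hTfin : volume T ≠ ⊤ :=
    ((measure_mono inter_subset_left).trans_lt measure_ball_lt_top).ne
  have key2 : volume.real (Metric.ball z (s / 8))
      ≤ (9 * n * Lam / lam) ^ n * volume.real T := by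
    have := ENNReal.toReal_mono (ENNReal.mul_ne_top (ENNReal.pow_ne_top ENNReal.ofReal_ne_top) hTfin)
      key
    rw [ENNReal.toReal_mul, ENNReal.toReal_pow, ENNReal.toReal_ofReal (by positivity)] at this
    exact this
  have e1 : volume.real (Metric.ball z s) = 8 ^ n * volume.real (Metric.ball z (s / 8)) := by
    rw [real_volume_ball hn z hs.le, real_volume_ball hn z (by positivity : 0 ≤ s / 8), div_pow]
    field_simp
  rw [e1]
  have : 0 ≤ volume.real T := measureReal_nonneg
  calc _ ≤ 8 ^ n * ((9 * n * Lam / lam) ^ n * volume.real T) := by gcongr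
    _ ≤ _ := by linarith


theorem isOpen_superlevel {n : ℕ} {u : EucSp n → ℝ} {U : Set (EucSp n)} (hU : IsOpen U)
    (hc : ContinuousOn u U) (t : ℝ) : IsOpen (U ∩ {x | t < u x}) :=
  hc.isOpen_inter_preimage hU isOpen_Ioi

/-- Covering step. -/
theorem cover_step {n : ℕ} {F T : Set (EucSp n)} {r : ℝ} {C : ENNReal}
    (b : EucSp n → Set (EucSp n)) (hb : ∀ x ∈ F, MeasurableSet (b x))
    (hbT : ∀ x ∈ F, b x ⊆ T) (ρ : EucSp n → ℝ) (hρ : ∀ x ∈ F, 0 < ρ x) (hρr : ∀ x ∈ F, ρ x ≤ r)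
    (hbb : ∀ x ∈ F, b x ⊆ Metric.closedBall x (ρ x))
    (hv : ∀ x ∈ F, volume (Metric.closedBall x (5 * ρ x)) ≤ C * volume (b x)) :
    volume F ≤ C * volume T := by
  obtain ⟨t, htF, hdisj, hcov⟩ := Vitali.exists_disjoint_subfamily_covering_enlargement_closedBall
    F (fun x => x) ρ r hρr 5 (by norm_num)
  have hcount : t.Countable := by
    refine hdisj.countable_of_nonempty_interior fun x hx => ?_
    exact ⟨x, Metric.ball_subset_interior_closedBall (Metric.mem_ball_self (hρ x (htF hx)))⟩
  have h1 : F ⊆ ⋃ x ∈ t, Metric.closedBall x (5 * ρ x) := by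
    intro x hx
    obtain ⟨y, hy, hxy⟩ := hcov x hx
    exact mem_iUnion₂.2 ⟨y, hy, hxy (Metric.mem_closedBall_self (hρ x hx).le)⟩
  calc volume F ≤ volume (⋃ x ∈ t, Metric.closedBall x (5 * ρ x)) := measure_mono h1
    _ ≤ ∑' x : t, volume (Metric.closedBall (x : EucSp n) (5 * ρ x)) := measure_biUnion_le _ hcount _
    _ ≤ ∑' x : t, C * volume (b x) := ENNReal.tsum_le_tsum fun x => hv x (htF x.2)
    _ = C * ∑' x : t, volume (b x) := ENNReal.tsum_mul_left
    _ = C * volume (⋃ x ∈ t, b x) := by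
        rw [measure_biUnion hcount _ (fun x hx => hb x (htF hx))]
        intro x hx y hy hxy
        exact (hdisj hx hy hxy).mono (hbb x (htF hx)) (hbb y (htF hy))
    _ ≤ C * volume T := by
        gcongr
        exact iUnion₂_subset fun x hx => hbT x (htF hx)

/-- Decay of the measure of superlevel sets. -/
theorem decay (n : ℕ) (hn : 0 < n) (lam Lam : ℝ) (hlam : 0 < lam) (hLam : lam ≤ Lam) :
    ∃ R M θ : ℝ, 6 ≤ R ∧ 1 < M ∧ 0 < θ ∧ θ < 1 ∧ ∀ (u : EucSp n → ℝ) (r h : ℝ) (x₀ : EucSp n),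
      0 < r → 0 < h →
      PSuper n lam Lam (Metric.ball x₀ (R * r)) u →
      ContinuousOn u (Metric.closedBall x₀ (R * r)) →
      (∀ x ∈ Metric.closedBall x₀ (R * r), 0 ≤ u x) →
      u x₀ ≤ h → ∀ k : ℕ,
      volume.real (Metric.ball x₀ r ∩ {x | M ^ k * h < u x}) ≤
        θ ^ k * volume.real (Metric.ball x₀ r) := by
  obtain ⟨R, M, K, hR, hM, hK, hP⟩ := point_measure n hn lam Lam hlam hLam
  have hK20 : 1 < 20 ^ n * K := by
    have : (1 : ℝ) ≤ 20 ^ n := one_le_pow₀ (by norm_num)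
    nlinarith
  refine ⟨R, M, 1 - 1 / (20 ^ n * K), hR, hM, ?_, ?_, ?_⟩
  · rw [sub_pos, div_lt_one (by linarith)]; exact hK20
  · have : 0 < 1 / (20 ^ n * K) := by positivity
    linarith
  intro u r h x₀ hr hh hsup hc h0 hux k
  have hn1 : Nontrivial (EucSp n) := by
    have : Nonempty (Fin n) := ⟨⟨0, hn⟩⟩
    infer_instance
  induction k with
  | zero =>
    simp only [pow_zero, one_mul]
    exact measureReal_mono inter_subset_left measure_ball_lt_top.ne
  | succ k ih =>
    set H : ℝ := M ^ k * h with hH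
    have hHh : h ≤ H := by
      have : 1 ≤ M ^ k := one_le_pow₀ hM.le
      nlinarith
    have hHpos : 0 < H := hh.trans_le hHh
    have hMH : M ^ (k + 1) * h = M * H := by rw [hH]; ring
    rw [hMH]
    set F := Metric.ball x₀ r ∩ {x | H < u x} with hF
    set F' := Metric.ball x₀ r ∩ {x | M * H < u x} with hF'
    have hsubR : Metric.ball x₀ r ⊆ Metric.closedBall x₀ (R * r) :=
      Metric.ball_subset_closedBall.trans (Metric.closedBall_subset_closedBall (by nlinarith))
    have hF'o : IsOpen F' := isOpen_superlevel Metric.isOpen_ball (hc.mono hsubR) _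
    have hF'F : F' ⊆ F := by
      rintro x ⟨hx1, hx2⟩
      refine ⟨hx1, ?_⟩
      simp only [mem_ofPred_eq] at hx2 ⊢
      nlinarith
    -- the closed set where `u ≤ H`
    set G := Metric.closedBall x₀ (2 * r) ∩ u ⁻¹' Iic H with hG
    have hsub2 : Metric.closedBall x₀ (2 * r) ⊆ Metric.closedBall x₀ (R * r) :=
      Metric.closedBall_subset_closedBall (by nlinarith)
    have hGc : IsCompact G := by
      refine (isCompact_closedBall x₀ (2 * r)).of_isClosed_subset ?_ inter_subset_left
      exact (hc.mono hsub2).preimage_isClosed_of_isClosed Metric.isClosed_closedBall isClosed_Iic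
    have hx₀G : x₀ ∈ G := ⟨Metric.mem_closedBall_self (by positivity), hux.trans hHh⟩
    have claim : ∀ x ∈ F, ∃ ρ : ℝ, ∃ z : EucSp n, 0 < ρ ∧ ρ ≤ r ∧
        Metric.ball z (ρ / 4) ⊆ Metric.closedBall x ρ ∧ Metric.ball z (ρ / 4) ⊆ F ∧
        volume (Metric.closedBall x (5 * ρ)) ≤ ENNReal.ofReal (20 ^ n * K) *
          volume (Metric.ball z (ρ / 4) \ F') := by
      rintro x ⟨hx1, hx2⟩
      obtain ⟨w, hwG, hw⟩ := hGc.exists_infDist_eq_dist ⟨x₀, hx₀G⟩ x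
      have hx1' : ‖x - x₀‖ < r := by simpa [dist_eq_norm] using hx1
      have hxw : x ≠ w := by
        rintro rfl
        have a1 : u x ≤ H := hwG.2
        have a2 : H < u x := hx2
        linarith
      set ρ := dist x w with hρ
      have hρpos : 0 < ρ := dist_pos.2 hxw
      have hρx : ρ ≤ ‖x - x₀‖ := by
        rw [← hw, ← dist_eq_norm]
        exact Metric.infDist_le_dist_of_mem hx₀G
      set N := ‖x - x₀‖ with hN
      have hNpos : 0 < N := hρpos.trans_le hρx
      set z : EucSp n := x - (ρ / 4 / N) • (x - x₀) with hz
      have hzx : ‖z - x‖ = ρ / 4 := by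
        have : z - x = -((ρ / 4 / N) • (x - x₀)) := by rw [hz]; abel
        rw [this, norm_neg, norm_smul, ← hN, Real.norm_of_nonneg (by positivity)]
        field_simp
      have hzx₀ : ‖z - x₀‖ = N - ρ / 4 := by
        have : z - x₀ = (1 - ρ / 4 / N) • (x - x₀) := by rw [hz]; module
        have hle : ρ / 4 / N ≤ 1 := by rw [div_le_one hNpos]; linarith
        rw [this, norm_smul, ← hN, Real.norm_of_nonneg (by linarith)]
        field_simp
      have b1 : Metric.ball z (ρ / 4) ⊆ Metric.ball x ρ := by
        refine Metric.ball_subset_ball' ?_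
        rw [dist_eq_norm, hzx]; linarith
      have b2 : Metric.ball z (ρ / 4) ⊆ Metric.ball x₀ r := by
        refine Metric.ball_subset_ball' ?_
        rw [dist_eq_norm, hzx₀]; linarith
      refine ⟨ρ, z, hρpos, by linarith, b1.trans Metric.ball_subset_closedBall, ?_, ?_⟩
      · intro y hy
        refine ⟨b2 hy, ?_⟩
        by_contra hlt
        have hyG : y ∈ G := by
          have a1 : ¬ H < u y := hlt
          have a2 : u y ≤ H := not_lt.1 a1
          refine ⟨?_, a2⟩
          have := b2 hy
          rw [Metric.mem_ball] at this
          rw [Metric.mem_closedBall]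
          linarith
        have := Metric.infDist_le_dist_of_mem (x := x) hyG
        have h3 := b1 hy
        rw [Metric.mem_ball, dist_comm] at h3
        linarith
      · have bR : R * (ρ / 4) + dist z x₀ ≤ R * r := by
          rw [dist_eq_norm, hzx₀]; nlinarith
        have key := hP u (ρ / 4) H z w (by positivity) hHpos
          (hsup.mono (Metric.ball_subset_ball' bR))
          (hc.mono (Metric.closedBall_subset_closedBall' bR))
          (fun y hy => h0 y (Metric.closedBall_subset_closedBall' bR hy))
          (by
            have : w - z = -(x - w) - (z - x) := by abel
            rw [this]
            refine (norm_sub_le _ _).trans ?_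
            rw [norm_neg, ← dist_eq_norm, ← hρ, hzx]
            linarith) hwG.2
        have eset : Metric.ball z (ρ / 4) ∩ {x | u x ≤ M * H} = Metric.ball z (ρ / 4) \ F' := by
          ext y
          constructor
          · rintro ⟨h1, h2⟩
            have a1 : u y ≤ M * H := h2
            refine ⟨h1, fun h3 => ?_⟩
            have a2 : M * H < u y := h3.2
            linarith
          · rintro ⟨h1, h2⟩
            have a1 : u y ≤ M * H := by
              by_contra h3
              have a2 : M * H < u y := not_le.1 h3
              exact h2 ⟨b2 h1, a2⟩
            exact ⟨h1, a1⟩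
        rw [eset] at key
        have hfin : volume (Metric.ball z (ρ / 4) \ F') ≠ ⊤ :=
          ((measure_mono sdiff_subset).trans_lt measure_ball_lt_top).ne
        rw [← ofReal_measureReal (s := Metric.ball z (ρ / 4) \ F') hfin,
          ← ENNReal.ofReal_mul (by positivity), Measure.addHaar_closedBall_eq_addHaar_ball,
          ← ofReal_measureReal (s := Metric.ball x (5 * ρ)) measure_ball_lt_top.ne]
        refine ENNReal.ofReal_le_ofReal ?_
        have e : volume.real (Metric.ball x (5 * ρ))
            = 20 ^ n * volume.real (Metric.ball z (ρ / 4)) := by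
          rw [real_volume_ball hn x (by positivity), real_volume_ball hn z (by positivity),
            ← mul_assoc, ← mul_pow]
          congr 2
          ring
        rw [e, mul_assoc]
        gcongr
    choose! ρ z c1 c2 c3 c4 c5 using claim
    have hcov : volume F ≤ ENNReal.ofReal (20 ^ n * K) * volume (F \ F') :=
      cover_step (fun x => Metric.ball (z x) (ρ x / 4) \ F')
        (fun x _ => measurableSet_ball.diff hF'o.measurableSet)
        (fun x hx => sdiff_subset_sdiff_left (c4 x hx)) ρ c1 c2
        (fun x hx => sdiff_subset.trans (c3 x hx)) c5
    have hFfin : volume F ≠ ⊤ :=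
      ((measure_mono inter_subset_left).trans_lt measure_ball_lt_top).ne
    have hcov2 : volume.real F ≤ 20 ^ n * K * volume.real (F \ F') := by
      have hfin : volume (F \ F') ≠ ⊤ := ((measure_mono sdiff_subset).trans_lt hFfin.lt_top).ne
      have := ENNReal.toReal_mono (ENNReal.mul_ne_top ENNReal.ofReal_ne_top hfin) hcov
      rwa [ENNReal.toReal_mul, ENNReal.toReal_ofReal (by positivity)] at this
    have hsplit : volume.real (F \ F') = volume.real F - volume.real F' :=
      measureReal_sdiff hF'F hF'o.measurableSet
    rw [hsplit] at hcov2
    have hfin : volume.real F' ≤ (1 - 1 / (20 ^ n * K)) * volume.real F := by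
      have hdiv : volume.real F / (20 ^ n * K) ≤ volume.real F - volume.real F' := by
        rw [div_le_iff₀ (by linarith)]
        linarith
      have : (1 - 1 / (20 ^ n * K)) * volume.real F
        = volume.real F - volume.real F / (20 ^ n * K) := by ring
      linarith
    refine hfin.trans ?_
    rw [pow_succ', mul_assoc]
    refine mul_le_mul_of_nonneg_left ih ?_
    rw [sub_nonneg, div_le_one (by linarith)]; exact hK20.le

set_option maxHeartbeats 2000000 in
/-- The Harnack inequality. -/
lemma harnack (n : ℕ) (hn : 0 < n) (lam Lam : ℝ) (hlam : 0 < lam) (hLam : lam ≤ Lam) :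
    ∃ R C : ℝ, 6 ≤ R ∧ 0 < C ∧ ∀ (u : EucSp n → ℝ) (r h : ℝ) (x₀ p : EucSp n), 0 < r → 0 < h →
      PSuper n lam Lam (Metric.ball x₀ (R * r)) u →
      (∀ c : ℝ, PSuper n lam Lam (Metric.ball x₀ (R * r)) (fun x => c - u x)) →
      ContinuousOn u (Metric.closedBall x₀ (R * r)) →
      (∀ x ∈ Metric.closedBall x₀ (R * r), 0 ≤ u x) → u x₀ ≤ h → ‖p - x₀‖ ≤ r / 2 →
      u p ≤ C * h := by
  obtain ⟨R, M, θ, hR, hM, hθ, hθ1, hdec⟩ := decay n hn lam Lam hlam hLam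
  obtain ⟨m, hm⟩ : ∃ m : ℕ, θ ^ m < 1 / 2 := exists_pow_lt_of_lt_one (by norm_num) hθ1
  obtain ⟨j₀, hj₀⟩ : ∃ j : ℕ, M < (1 / θ) ^ j :=
    pow_unbounded_of_one_lt M (by rw [lt_div_iff₀ hθ]; linarith)
  set j := j₀ with hj
  have hMpos : 0 < M := by linarith
  have hRpos : 0 < R := by linarith
  set β : ℕ := n * j with hβ
  have hMm : 0 < M ^ m := by positivity
  set q : ℝ := 1 + 1 / (2 * M ^ m) with hq
  have hq1 : 1 < q := by
    have : 0 < 1 / (2 * M ^ m) := by positivity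
    linarith
  have hqpos : 0 < q := by linarith
  set τ : ℝ := (1 - 1 / q) / (β + 1) with hτ
  have hqi : 1 / q < 1 := by rw [div_lt_one hqpos]; exact hq1
  have hqi0 : 0 < 1 / q := by positivity
  have hτpos : 0 < τ := by
    have : 0 < 1 - 1 / q := by linarith
    positivity
  have hτ1 : τ * (β + 1) = 1 - 1 / q := by rw [hτ]; field_simp
  have hβ0 : (0 : ℝ) ≤ β := Nat.cast_nonneg _
  have hτlt : τ < 1 := by nlinarith
  have hbern : 1 / q ≤ (1 - τ) ^ β := by
    have h := one_add_mul_le_pow (a := -τ) (by linarith) β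
    rw [← sub_eq_add_neg] at h
    nlinarith
  have hK1 : 1 ≤ 2 * (R / τ) ^ n := by
    have : 1 ≤ (R / τ) ^ n := one_le_pow₀ (by rw [le_div_iff₀ hτpos]; linarith)
    linarith
  set K : ℝ := 2 * (R / τ) ^ n with hK
  have hKj : 1 ≤ K ^ j := one_le_pow₀ hK1
  refine ⟨R, 2 ^ β * (2 * M * K ^ j), hR, by positivity, ?_⟩
  intro u r h x₀ p hr hh hs hs' hc h0 hux hp
  have hsub : Metric.closedBall x₀ r ⊆ Metric.closedBall x₀ (R * r) :=
    Metric.closedBall_subset_closedBall (by nlinarith)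
  obtain ⟨x₁, hx₁, hmax⟩ := (isCompact_closedBall x₀ r).exists_isMaxOn
    (f := fun x => u x * (r - ‖x - x₀‖) ^ β) ⟨x₀, Metric.mem_closedBall_self hr.le⟩
    ((hc.mono hsub).mul (by fun_prop))
  have hmax' : ∀ y, ‖y - x₀‖ ≤ r → u y * (r - ‖y - x₀‖) ^ β ≤ u x₁ * (r - ‖x₁ - x₀‖) ^ β := by
    intro y hy
    exact hmax (show y ∈ Metric.closedBall x₀ r by rwa [Metric.mem_closedBall, dist_eq_norm])
  have hpb : p ∈ Metric.closedBall x₀ (R * r) :=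
    hsub (by rw [Metric.mem_closedBall, dist_eq_norm]; linarith)
  rcases (h0 p hpb).eq_or_lt with hup | hup
  · rw [← hup]; positivity
  have hfp : u p * (r / 2) ^ β ≤ u x₁ * (r - ‖x₁ - x₀‖) ^ β := by
    refine le_trans ?_ (hmax' p (by linarith))
    gcongr
    linarith
  set d := r - ‖x₁ - x₀‖ with hd
  set U := u x₁ with hU
  suffices hmain : U * d ^ β ≤ 2 * h * M * K ^ j * r ^ β by
    have h1 := hfp.trans hmain
    rw [div_pow, mul_div_assoc', div_le_iff₀ (by positivity)] at h1
    have h2 : 0 < r ^ β := by positivity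
    refine le_of_mul_le_mul_right (h1.trans (le_of_eq ?_)) h2
    ring
  have hx₁' : ‖x₁ - x₀‖ ≤ r := by rwa [Metric.mem_closedBall, dist_eq_norm] at hx₁
  have hd0 : 0 ≤ d := by rw [hd]; linarith
  have hdr : d ≤ r := by rw [hd]; linarith [norm_nonneg (x₁ - x₀)]
  have hU0 : 0 ≤ U := h0 _ (hsub hx₁)
  have hpos : 0 < U * d ^ β := lt_of_lt_of_le (by positivity) hfp
  have hUpos : 0 < U := by
    rcases hU0.eq_or_lt with h | h
    · rw [← h, zero_mul] at hpos; exact absurd hpos (lt_irrefl _)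
    · exact h
  rcases lt_or_ge U (2 * h) with hsmall | hbig
  · have h1 : d ^ β ≤ r ^ β := by gcongr
    have h2 : 2 * h * 1 * 1 ≤ 2 * h * M * K ^ j := by gcongr
    have h3 : U ≤ 2 * h * M * K ^ j := by linarith
    exact mul_le_mul h3 h1 (by positivity) (by linarith)
  obtain ⟨k, hk1, hk2⟩ := exists_nat_pow_near (x := U / (2 * h)) (y := M)
    (by rw [le_div_iff₀ (by positivity)]; linarith) hM
  rw [le_div_iff₀ (by positivity)] at hk1
  rw [div_lt_iff₀ (by positivity)] at hk2
  rcases hd0.eq_or_lt with hd00 | hdpos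
  · rcases Nat.eq_zero_or_pos β with hb | hb
    · have hj00 : j = 0 := by
        rcases Nat.mul_eq_zero.1 hb with h | h
        · omega
        · exact h
      rw [hj00] at hj₀
      simp only [pow_zero] at hj₀
      linarith
    · rw [← hd00, zero_pow hb.ne', mul_zero] at hpos
      exact absurd hpos (lt_irrefl _)
  -- bound near the maximum point
  have hup1 : ∀ y ∈ Metric.closedBall x₁ (τ * d), u y ≤ q * U := by
    intro y hy
    rw [Metric.mem_closedBall, dist_eq_norm] at hy
    have h1 : ‖y - x₀‖ ≤ ‖y - x₁‖ + ‖x₁ - x₀‖ := norm_sub_le_norm_sub_add_norm_sub _ _ _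
    have h2 : (1 - τ) * d ≤ r - ‖y - x₀‖ := by rw [hd] at hy ⊢; linarith
    have h2' : 0 < (1 - τ) * d := mul_pos (by linarith) hdpos
    have hyr : ‖y - x₀‖ ≤ r := by linarith
    have hy0 : 0 ≤ u y := h0 y (hsub (by rwa [Metric.mem_closedBall, dist_eq_norm]))
    have h3 : u y * ((1 / q) * d ^ β) ≤ U * d ^ β := by
      refine le_trans ?_ (hmax' y hyr)
      have : (1 / q) * d ^ β ≤ (r - ‖y - x₀‖) ^ β := by
        calc (1 / q) * d ^ β ≤ (1 - τ) ^ β * d ^ β := by gcongr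
          _ = ((1 - τ) * d) ^ β := (mul_pow _ _ _).symm
          _ ≤ _ := by gcongr
      gcongr
    rw [← mul_assoc] at h3
    have h4 := le_of_mul_le_mul_right h3 (by positivity)
    rw [mul_one_div, div_le_iff₀ hqpos] at h4
    linarith
  have hball : Metric.closedBall x₁ (τ * d) ⊆ Metric.closedBall x₀ (R * r) := by
    refine Metric.closedBall_subset_closedBall' ?_
    rw [dist_eq_norm]
    nlinarith
  have hball' : Metric.ball x₁ (τ * d) ⊆ Metric.ball x₀ (R * r) := by
    refine Metric.ball_subset_ball' ?_
    rw [dist_eq_norm]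
    nlinarith
  have hRr : R * (τ * d / R) = τ * d := by field_simp
  have hb0 : Metric.ball x₁ (τ * d / R) ⊆ Metric.ball x₀ r := by
    refine Metric.ball_subset_ball' ?_
    rw [dist_eq_norm]
    have : τ * d / R ≤ d := by
      rw [div_le_iff₀ hRpos]
      have e1 : τ * d ≤ 1 * d := mul_le_mul_of_nonneg_right hτlt.le hd0
      have e2 : d * 1 ≤ d * R := mul_le_mul_of_nonneg_left (by linarith) hd0
      linarith
    linarith
  have hwd := hdec (fun x => q * U - u x) (τ * d / R) ((q - 1) * U) x₁ (by positivity)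
    (mul_pos (by linarith) hUpos)
    (by rw [hRr]; exact (hs' _).mono hball')
    (by rw [hRr]; exact continuousOn_const.sub (hc.mono hball))
    (by rw [hRr]; intro x hx; have := hup1 x hx; linarith)
    (by linarith) m
  have hMU : M ^ m * ((q - 1) * U) = U / 2 := by rw [hq]; field_simp; ring
  rw [hMU] at hwd
  have hud := hdec u r h x₀ hr hh hs hc h0 hux k
  set b := Metric.ball x₁ (τ * d / R) with hb
  have hcover : b ⊆ (b ∩ {x | U / 2 < q * U - u x}) ∪ (Metric.ball x₀ r ∩ {x | M ^ k * h < u x}) := by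
    intro x hx
    by_cases hx2 : U / 2 < q * U - u x
    · exact Or.inl ⟨hx, hx2⟩
    · right
      refine ⟨hb0 hx, ?_⟩
      have : M ^ k * h < u x := by nlinarith
      exact this
  have hfin1 : volume (b ∩ {x | U / 2 < q * U - u x}) ≠ ⊤ :=
    ((measure_mono inter_subset_left).trans_lt measure_ball_lt_top).ne
  have hfin2 : volume (Metric.ball x₀ r ∩ {x | M ^ k * h < u x}) ≠ ⊤ :=
    ((measure_mono inter_subset_left).trans_lt measure_ball_lt_top).ne
  have hvol : volume.real b ≤ θ ^ m * volume.real b + θ ^ k * volume.real (Metric.ball x₀ r) := by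
    refine (measureReal_mono hcover ?_).trans ((measureReal_union_le _ _).trans (by linarith))
    exact (measure_union_lt_top hfin1.lt_top hfin2.lt_top).ne
  have hvb : 0 ≤ volume.real b := measureReal_nonneg
  have hvol2 : volume.real b ≤ 2 * (θ ^ k * volume.real (Metric.ball x₀ r)) := by nlinarith
  rw [hb, real_volume_ball hn x₁ (by positivity), real_volume_ball hn x₀ hr.le, ← mul_assoc,
    ← mul_assoc] at hvol2
  have hv1 : 0 < volume.real (Metric.ball (0 : EucSp n) 1) :=
    ENNReal.toReal_pos (Metric.measure_ball_pos _ _ one_pos).ne' measure_ball_lt_top.ne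
  have hvol3 := le_of_mul_le_mul_right hvol2 hv1
  have hθk : (1 / θ) ^ k * d ^ n ≤ K * r ^ n := by
    have e1 : (R / τ) ^ n * (τ * d / R) ^ n = d ^ n := by
      rw [← mul_pow]; congr 1; field_simp
    have e2 : (1 / θ) ^ k * θ ^ k = 1 := by
      rw [← mul_pow, one_div_mul_cancel hθ.ne', one_pow]
    calc (1 / θ) ^ k * d ^ n = (1 / θ) ^ k * (R / τ) ^ n * (τ * d / R) ^ n := by
          rw [mul_assoc, e1]
      _ ≤ (1 / θ) ^ k * (R / τ) ^ n * (2 * θ ^ k * r ^ n) := by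
          refine mul_le_mul_of_nonneg_left ?_ (by positivity)
          linarith
      _ = ((1 / θ) ^ k * θ ^ k) * (K * r ^ n) := by rw [hK]; ring
      _ = K * r ^ n := by rw [e2, one_mul]
  have hMk : M ^ k * d ^ β ≤ K ^ j * r ^ β := by
    calc M ^ k * d ^ β ≤ ((1 / θ) ^ j) ^ k * d ^ β := by gcongr
      _ = ((1 / θ) ^ k * d ^ n) ^ j := by rw [mul_pow, ← pow_mul, ← pow_mul, ← pow_mul, hβ, mul_comm j k]
      _ ≤ (K * r ^ n) ^ j := by gcongr
      _ = K ^ j * r ^ β := by rw [mul_pow, ← pow_mul]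
  calc U * d ^ β ≤ M ^ (k + 1) * (2 * h) * d ^ β := by gcongr
    _ = 2 * h * M * (M ^ k * d ^ β) := by ring
    _ ≤ 2 * h * M * (K ^ j * r ^ β) := by gcongr
    _ = _ := by ring

/-- Linear (Hopf) lower bound on a ball. -/
lemma hopf (n : ℕ) (lam Lam : ℝ) (hlam : 0 < lam) (hLam : lam ≤ Lam) (ρ ρ₁ : ℝ) (hρ : 0 < ρ)
    (hρ₁ : 0 < ρ₁) :
    ∃ η : ℝ, 0 < η ∧ ∀ (u : EucSp n → ℝ) (z : EucSp n) (m : ℝ), 0 < m →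
      PSuper n lam Lam (Metric.ball z ρ) u → ContinuousOn u (Metric.closedBall z ρ) →
      (∀ x ∈ Metric.closedBall z ρ, 0 ≤ u x) → (∀ x ∈ Metric.closedBall z ρ₁, m ≤ u x) →
      ∀ x ∈ Metric.closedBall z ρ, η * m * (ρ - ‖x - z‖) ≤ u x := by
  have hLpos : 0 < Lam := hlam.trans_le hLam
  set α : ℝ := (n * Lam) / (2 * lam * ρ₁ ^ 2) + 1 with hα
  have hαpos : 0 < α := by positivity
  have hα2 : n * Lam < 2 * α * lam * ρ₁ ^ 2 := by
    have : 2 * α * lam * ρ₁ ^ 2 = n * Lam + 2 * lam * ρ₁ ^ 2 := by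
      rw [hα]; field_simp
    have h2 : 0 < 2 * lam * ρ₁ ^ 2 := by positivity
    linarith
  refine ⟨α * Real.exp (-α * ρ ^ 2) * ρ, by positivity, ?_⟩
  intro u z m hm hs hc h0 h1 x hx
  refine le_trans ?_ (barrier hlam hρ₁ hm hαpos hα2 hs hc h0 h1 x hx)
  rw [Metric.mem_closedBall, dist_eq_norm] at hx
  set s := ‖x - z‖ with hs
  have hs0 : 0 ≤ s := norm_nonneg _
  have e1 : Real.exp (-α * s ^ 2) = Real.exp (-α * ρ ^ 2) * Real.exp (α * (ρ ^ 2 - s ^ 2)) := by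
    rw [← Real.exp_add]; congr 1; ring
  have e2 := Real.add_one_le_exp (α * (ρ ^ 2 - s ^ 2))
  have e3 : ρ * (ρ - s) ≤ ρ ^ 2 - s ^ 2 := by nlinarith
  have e4 : α * (ρ * (ρ - s)) ≤ α * (ρ ^ 2 - s ^ 2) := by gcongr
  have e5 : α * (ρ * (ρ - s)) ≤ Real.exp (α * (ρ ^ 2 - s ^ 2)) - 1 := by linarith
  have e6 : 0 < Real.exp (-α * ρ ^ 2) := Real.exp_pos _
  rw [e1]
  calc α * Real.exp (-α * ρ ^ 2) * ρ * m * (ρ - s)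
      = m * (Real.exp (-α * ρ ^ 2) * (α * (ρ * (ρ - s)))) := by ring
    _ ≤ m * (Real.exp (-α * ρ ^ 2) * (Real.exp (α * (ρ ^ 2 - s ^ 2)) - 1)) := by gcongr
    _ = _ := by ring

lemma lastCoord_add {n : ℕ} (x y : EucSp n) :
    lastCoord n (x + y) = lastCoord n x + lastCoord n y := by
  unfold lastCoord
  split_ifs <;> simp

lemma lastCoord_smul {n : ℕ} (c : ℝ) (x : EucSp n) :
    lastCoord n (c • x) = c * lastCoord n x := by
  unfold lastCoord
  split_ifs <;> simp

lemma lastCoord_lastBasis {n : ℕ} (hn : 0 < n) : lastCoord n (lastBasis n) = 1 := by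
  unfold lastCoord lastBasis
  simp [hn]

lemma norm_lastBasis {n : ℕ} (hn : 0 < n) : ‖lastBasis n‖ = 1 := by
  unfold lastBasis
  simp [hn]

lemma abs_lastCoord_le {n : ℕ} (x : EucSp n) : |lastCoord n x| ≤ ‖x‖ := by
  unfold lastCoord
  split_ifs
  · exact PiLp.norm_apply_le x _
  · simp

lemma lastCoord_ge {n : ℕ} (x y : EucSp n) : lastCoord n y - ‖x - y‖ ≤ lastCoord n x := by
  have h := abs_lastCoord_le (x - y)
  have h2 : lastCoord n x = lastCoord n (x - y) + lastCoord n y := by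
    rw [← lastCoord_add, sub_add_cancel]
  have := (abs_le.1 h).1
  linarith

lemma ball_sub_half {n : ℕ} {y : EucSp n} {ρ : ℝ} (h1 : ρ < lastCoord n y) (h2 : ‖y‖ + ρ < 1) :
    Metric.closedBall y ρ ⊆ upperHalfBall n 1 := by
  intro x hx
  rw [Metric.mem_closedBall, dist_eq_norm] at hx
  have h3 := lastCoord_ge x y
  have h4 : ‖x‖ ≤ ‖x - y‖ + ‖y‖ := by
    have := norm_add_le (x - y) y
    rwa [sub_add_cancel] at this
  have h5 : x ∈ Metric.ball (0 : EucSp n) 1 := by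
    rw [mem_ball_zero_iff]; linarith
  have h6 : 0 < lastCoord n x := by linarith
  exact ⟨h5, h6⟩

lemma ball_sub_half2 {n : ℕ} {y : EucSp n} {ρ : ℝ} (h1 : ρ ≤ lastCoord n y) (h2 : ‖y‖ + ρ < 1) :
    Metric.ball y ρ ⊆ upperHalfBall n 1 ∧
      Metric.closedBall y ρ ⊆ upperHalfBall n 1 ∪ flatPart n 1 := by
  have key : ∀ x : EucSp n, ‖x - y‖ ≤ ρ → x ∈ Metric.ball (0 : EucSp n) 1 := by
    intro x hx
    have h4 : ‖x‖ ≤ ‖x - y‖ + ‖y‖ := by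
      have := norm_add_le (x - y) y
      rwa [sub_add_cancel] at this
    rw [mem_ball_zero_iff]; linarith
  constructor
  · intro x hx
    rw [Metric.mem_ball, dist_eq_norm] at hx
    have h3 := lastCoord_ge x y
    have h6 : 0 < lastCoord n x := by linarith
    exact ⟨key x hx.le, h6⟩
  · intro x hx
    rw [Metric.mem_closedBall, dist_eq_norm] at hx
    have h3 := lastCoord_ge x y
    have h6 : 0 ≤ lastCoord n x := by linarith
    rcases h6.eq_or_lt with h | h
    · exact Or.inr ⟨key x hx, h.symm⟩
    · exact Or.inl ⟨key x hx, h⟩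

set_option maxHeartbeats 1000000 in
/-- Lemma 2.1: if `u ∈ S(λ,Λ,0)` in `B₁⁺`, `u ≥ 0`, `u = 0` on `T₁` and `u(eₙ/2) ≥ 1`,
then `u(x) ≥ c xₙ` in `B⁺_{1/2}` for a constant `c ∈ (0,1)` depending only on `n, λ, Λ`. -/
theorem stmt_3 {n : ℕ} (hn : 2 ≤ n) (lam Lam : ℝ) (hlam : 0 < lam) (hLam : lam ≤ Lam) :
    ∃ c : ℝ, 0 < c ∧ c < 1 ∧
      ∀ u : EucSp n → ℝ,
        ContinuousOn u (upperHalfBall n 1 ∪ flatPart n 1) →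
        InPucciStar n lam Lam 0 (upperHalfBall n 1) u →
        (∀ x ∈ upperHalfBall n 1, 0 ≤ u x) →
        (∀ x ∈ flatPart n 1, u x = 0) →
        1 ≤ u ((1 / 2 : ℝ) • lastBasis n) →
        ∀ x ∈ upperHalfBall n (1 / 2), c * lastCoord n x ≤ u x := by
  have hn0 : 0 < n := by omega
  obtain ⟨R, C, hR, hC, hH⟩ := harnack n hn0 lam Lam hlam hLam
  have hRpos : 0 < R := by linarith
  set r : ℝ := 1 / (4 * R) with hr
  have hrpos : 0 < r := by positivity
  have hRr : R * r = 1 / 4 := by rw [hr]; field_simp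
  have hr24 : r ≤ 1 / 24 := by nlinarith
  obtain ⟨η₁, hη₁, hop1⟩ := hopf n lam Lam hlam hLam (3 / 16) (r / 2) (by norm_num) (by positivity)
  obtain ⟨η₂, hη₂, hop2⟩ := hopf n lam Lam hlam hLam (3 / 16) (1 / 16) (by norm_num) (by norm_num)
  obtain ⟨η₃, hη₃, hop3⟩ := hopf n lam Lam hlam hLam (1 / 4) (1 / 16) (by norm_num) (by norm_num)
  set m₀ : ℝ := 1 / (2 * C) with hm₀
  have hm₀pos : 0 < m₀ := by positivity
  set m₁ : ℝ := η₁ * m₀ * (1 / 8) with hm₁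
  have hm₁pos : 0 < m₁ := by positivity
  set η : ℝ := η₂ * (1 / 16) with hη
  have hηpos : 0 < η := by positivity
  set m₂ : ℝ := η ^ 20 * m₁ with hm₂
  have hm₂pos : 0 < m₂ := by positivity
  set c : ℝ := min (1 / 2) (min m₂ (η₃ * m₂)) with hc
  have hcpos : 0 < c := by
    refine lt_min (by norm_num) (lt_min hm₂pos (by positivity))
  have hc1 : c ≤ 1 / 2 := min_le_left _ _
  have hc2 : c ≤ m₂ := (min_le_right _ _).trans (min_le_left _ _)
  have hc3 : c ≤ η₃ * m₂ := (min_le_right _ _).trans (min_le_right _ _)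
  refine ⟨c, hcpos, by linarith, ?_⟩
  intro u hcont hP hpos hflat hone x hx
  set D := upperHalfBall n 1 with hD
  have hcD : ContinuousOn u D := hcont.mono subset_union_left
  have hS := hP.psuper
  set p : EucSp n := (1 / 2 : ℝ) • lastBasis n with hp
  have hpn : ‖p‖ = 1 / 2 := by
    rw [hp, norm_smul, norm_lastBasis hn0]; norm_num
  have hpl : lastCoord n p = 1 / 2 := by
    rw [hp, lastCoord_smul, lastCoord_lastBasis hn0]; norm_num
  -- Harnack
  have hstart : ∀ y ∈ Metric.closedBall p (r / 2), m₀ ≤ u y := by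
    intro y hy
    rw [Metric.mem_closedBall, dist_eq_norm] at hy
    by_contra hlt
    have hlt' : u y < m₀ := not_le.1 hlt
    have h1 := lastCoord_ge y p
    have h2 : ‖y‖ ≤ ‖y - p‖ + ‖p‖ := by
      have := norm_add_le (y - p) p
      rwa [sub_add_cancel] at this
    have hb : Metric.closedBall y (R * r) ⊆ D := by
      refine ball_sub_half ?_ ?_ <;> rw [hRr] <;> linarith
    have hb' := Metric.ball_subset_closedBall.trans hb
    have h3 := hH u r m₀ y p hrpos hm₀pos (hS.mono hb') (fun c => (hP.psuper_neg c).mono hb')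
      (hcD.mono hb) (fun z hz => hpos z (hb hz)) hlt'.le (by rw [norm_sub_rev]; exact hy)
    have h4 : C * m₀ = 1 / 2 := by rw [hm₀]; field_simp
    linarith
  have hstart2 : ∀ y ∈ Metric.closedBall p (1 / 16), m₁ ≤ u y := by
    intro y hy
    have hb : Metric.closedBall p (3 / 16) ⊆ D := by
      refine ball_sub_half ?_ ?_ <;> linarith
    have h3 := hop1 u p m₀ hm₀pos (hS.mono (Metric.ball_subset_closedBall.trans hb))
      (hcD.mono hb) (fun z hz => hpos z (hb hz)) hstart y
      (Metric.closedBall_subset_closedBall (by norm_num) hy)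
    rw [Metric.mem_closedBall, dist_eq_norm] at hy
    refine le_trans ?_ h3
    rw [hm₁]
    gcongr
    linarith
  -- the target point
  obtain ⟨hx1, hx2⟩ : x ∈ Metric.ball (0 : EucSp n) (1 / 2) ∧ 0 < lastCoord n x := hx
  rw [mem_ball_zero_iff] at hx1
  have hxl : lastCoord n x < 1 / 2 := ((le_abs_self _).trans (abs_lastCoord_le x)).trans_lt hx1
  set t : ℝ := max (1 / 4 - lastCoord n x) 0 with ht
  have ht0 : 0 ≤ t := le_max_right _ _
  have ht1 : 1 / 4 - lastCoord n x ≤ t := le_max_left _ _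
  have ht4 : t ≤ 1 / 4 := max_le (by linarith) (by norm_num)
  set q : EucSp n := x + t • lastBasis n with hq
  have hqx : ‖x - q‖ = t := by
    have : x - q = -(t • lastBasis n) := by rw [hq]; abel
    rw [this, norm_neg, norm_smul, norm_lastBasis hn0, Real.norm_of_nonneg ht0, mul_one]
  have hqn : ‖q‖ < 3 / 4 := by
    have h1 := norm_sub_norm_le q x
    rw [norm_sub_rev, hqx] at h1
    linarith
  have hql : 1 / 4 ≤ lastCoord n q := by
    rw [hq, lastCoord_add, lastCoord_smul, lastCoord_lastBasis hn0]
    linarith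
  -- the chain
  have hchain : ∀ i : ℕ, i ≤ 20 →
      ∀ y ∈ Metric.closedBall (p + ((i : ℝ) / 20) • (q - p)) (1 / 16), η ^ i * m₁ ≤ u y := by
    intro i
    induction i with
    | zero =>
      intro _ y hy
      simp only [Nat.cast_zero, zero_div, zero_smul, add_zero] at hy
      simpa using hstart2 y hy
    | succ i ih =>
      intro hi y hy
      have ih' := ih (by omega)
      set s : ℝ := (i : ℝ) / 20 with hs
      have hi' : (i : ℝ) + 1 ≤ 20 := by exact_mod_cast hi
      have hs0 : 0 ≤ s := by positivity
      have hs1 : s ≤ 1 := by rw [hs, div_le_one (by norm_num)]; linarith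
      set a : EucSp n := p + s • (q - p) with ha
      have haeq : a = (1 - s) • p + s • q := by rw [ha]; module
      have hal : 1 / 4 ≤ lastCoord n a := by
        rw [haeq, lastCoord_add, lastCoord_smul _ q, lastCoord_smul (1 - s) p, hpl]
        nlinarith
      have han : ‖a‖ ≤ 3 / 4 := by
        rw [haeq]
        refine (norm_add_le _ _).trans ?_
        rw [norm_smul s q, norm_smul (1 - s) p, hpn, Real.norm_of_nonneg hs0,
          Real.norm_of_nonneg (by linarith : 0 ≤ 1 - s)]
        nlinarith
      have hb : Metric.closedBall a (3 / 16) ⊆ D := by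
        refine ball_sub_half ?_ ?_ <;> linarith
      have hya : ‖y - a‖ ≤ 1 / 8 := by
        rw [Metric.mem_closedBall, dist_eq_norm] at hy
        have e : y - a = (y - (p + (((i + 1 : ℕ) : ℝ) / 20) • (q - p))) + (1 / 20 : ℝ) • (q - p) := by
          rw [ha, hs]; push_cast; module
        rw [e]
        refine (norm_add_le _ _).trans ?_
        have hqp : ‖q - p‖ ≤ 5 / 4 := by
          have := norm_sub_le q p
          linarith
        rw [norm_smul (1 / 20 : ℝ), Real.norm_of_nonneg (by norm_num : (0 : ℝ) ≤ 1 / 20)]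
        linarith
      have h3 := hop2 u a (η ^ i * m₁) (by positivity)
        (hS.mono (Metric.ball_subset_closedBall.trans hb))
        (hcD.mono hb) (fun z hz => hpos z (hb hz)) ih' y
        (by rw [Metric.mem_closedBall, dist_eq_norm]; linarith)
      refine le_trans ?_ h3
      have e : η ^ (i + 1) * m₁ = η₂ * (η ^ i * m₁) * (1 / 16) := by
        rw [pow_succ, hη]; ring
      rw [e]
      gcongr
      linarith
  have hend : ∀ y ∈ Metric.closedBall q (1 / 16), m₂ ≤ u y := by
    have h := hchain 20 le_rfl
    have e : p + (((20 : ℕ) : ℝ) / 20) • (q - p) = q := by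
      have : (((20 : ℕ) : ℝ) / 20) = 1 := by norm_num
      rw [this, one_smul]; abel
    rwa [e] at h
  rcases le_or_gt (1 / 4) (lastCoord n x) with hbig | hsmall
  · have ht00 : t = 0 := max_eq_right (by linarith)
    have h1 : m₂ ≤ u x := by
      refine hend x ?_
      rw [Metric.mem_closedBall, dist_eq_norm, hqx, ht00]; norm_num
    have h2 : c * lastCoord n x ≤ c * 1 := by gcongr; linarith
    linarith
  · have htt : t = 1 / 4 - lastCoord n x := max_eq_left (by linarith)
    obtain ⟨b1, b2⟩ := ball_sub_half2 (ρ := 1 / 4) hql (by linarith)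
    have h3 := hop3 u q m₂ hm₂pos (hS.mono b1) (hcont.mono b2)
      (fun z hz => by
        rcases b2 hz with h | h
        · exact hpos z h
        · exact (hflat z h).ge) hend x
      (by rw [Metric.mem_closedBall, dist_eq_norm, hqx]; exact ht4)
    rw [hqx] at h3
    have e : (1 / 4 : ℝ) - t = lastCoord n x := by rw [htt]; ring
    rw [e] at h3
    refine le_trans ?_ h3
    gcongr
end
end

section
/- Let n ≥ 2 and 0 < λ ≤ Λ. There exist constants α₁ ∈ (0,1) and C > 0 depending only on n, λ, Λ with the following property: if u is bounded and continuous on the closure of B₁⁺, belongs to the viscosity Pucci class S(λ,Λ,0) in B₁⁺, and u = 0 on T₁, then there exists a ∈ ℝ with |a| ≤ C·‖u‖_{L∞(B₁⁺)} such that |u(x) − a·xₙ| ≤ C·|x|^{1+α₁}·‖u‖_{L∞(B₁⁺)} for all x ∈ B₁⁺ (pointwise boundary C^{1,α₁} regularity at a flat boundary). -/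
open MeasureTheory Set

noncomputable section

section Abstract
open Metric Filter Topology Module

variable {E : Type*} [NormedAddCommGroup E] [InnerProductSpace ℝ E]

/-- An abstract (jet) form of viscosity supersolutions, tested on quadratics with Hessian
`2 (e ⊗ e - d I)`. -/
def SSol (K : ℝ) (U : Set E) (u : E → ℝ) : Prop :=
  ∀ x ∈ U, ∀ p e : E, ∀ d : ℝ, 0 ≤ d →
    (∀ᶠ y in 𝓝 x, u x + inner ℝ p (y - x) + (inner ℝ e (y - x)) ^ 2 - d * ‖y - x‖ ^ 2 ≤ u y) →
    ‖e‖ ^ 2 ≤ K * d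

theorem SSol.mono {K : ℝ} {U V : Set E} {u : E → ℝ} (h : SSol K U u) (hVU : V ⊆ U) :
    SSol K V u := fun x hx => h x (hVU hx)

theorem SSol.add_linear {K : ℝ} {U : Set E} {u : E → ℝ} (h : SSol K U u) (q : E) :
    SSol K U (fun x => u x + inner ℝ q x) := by
  intro x hx p e d hd hy
  refine h x hx (p - q) e d hd ?_
  filter_upwards [hy] with y hy
  rw [inner_sub_left]
  have : inner ℝ q (y - x) = inner ℝ q y - inner ℝ q x := inner_sub_right _ _ _
  linarith

theorem SSol.scale {K : ℝ} {U : Set E} {u : E → ℝ} (h : SSol K U u) {s : ℝ} (hs : 0 < s) :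
    SSol K {x | s • x ∈ U} (fun x => u (s • x)) := by
  intro x hx p e d hd hy
  have key := h (s • x) hx (s⁻¹ • p) (s⁻¹ • e) (d / s ^ 2) (by positivity) ?_
  · rw [norm_smul, mul_pow, Real.norm_eq_abs, sq_abs] at key
    have h2 : (0:ℝ) < s ^ 2 := by positivity
    have : s⁻¹ ^ 2 * ‖e‖ ^ 2 = ‖e‖ ^ 2 / s ^ 2 := by field_simp
    rw [this, ← mul_div_assoc] at key
    exact (div_le_div_iff_of_pos_right h2).1 key
  · have hc : Tendsto (fun z : E => s⁻¹ • z) (𝓝 (s • x)) (𝓝 x) := by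
      have : Continuous (fun z : E => s⁻¹ • z) := continuous_const_smul _
      have h3 := this.tendsto (s • x)
      rwa [smul_smul, inv_mul_cancel₀ hs.ne', one_smul] at h3
    filter_upwards [hc.eventually hy] with z hz
    have e1 : s • s⁻¹ • z = z := by rw [smul_smul, mul_inv_cancel₀ hs.ne', one_smul]
    have e2 : s⁻¹ • z - x = s⁻¹ • (z - s • x) := by
      rw [smul_sub, smul_smul, inv_mul_cancel₀ hs.ne', one_smul]
    rw [e1, e2] at hz
    simp only [inner_smul_left, inner_smul_right, norm_smul, norm_inv, Real.norm_eq_abs,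
      abs_of_pos hs, conj_trivial] at hz ⊢
    have : d * (s⁻¹ * ‖z - s • x‖) ^ 2 = d / s ^ 2 * ‖z - s • x‖ ^ 2 := by
      field_simp
    rw [this] at hz
    exact hz

/-- Points of contact with sliding paraboloids: the vertex depends on the contact point in a
Lipschitz way, with universal constant. -/
theorem vertex_lipschitz [FiniteDimensional ℝ E] {K : ℝ} (hK : 1 ≤ K) {U D : Set E} {u : E → ℝ}
    (hu : ContinuousOn u U) (hS : SSol K U u) {a r : ℝ} (ha : 0 < a) (hr : 0 < r)
    {x0 x1 y0 y1 : E} (hDU : D ⊆ U) (hB : closedBall x0 (6 * K * r) ⊆ D) (hx1D : x1 ∈ D)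
    (hx01 : ‖x1 - x0‖ ≤ r)
    (h0 : ∀ z ∈ D, u x0 + a * ‖x0 - y0‖ ^ 2 ≤ u z + a * ‖z - y0‖ ^ 2)
    (h1 : ∀ z ∈ D, u x1 + a * ‖x1 - y1‖ ^ 2 ≤ u z + a * ‖z - y1‖ ^ 2) :
    ‖y1 - y0‖ ≤ 16 * K * r := by
  by_contra! hcon
  set s := ‖y1 - y0‖ with hs
  have hs0 : 0 < s := lt_trans (by positivity) hcon
  set e : E := s⁻¹ • (y1 - y0) with he
  have hen : ‖e‖ = 1 := by
    rw [he, norm_smul, norm_inv, Real.norm_eq_abs, abs_of_pos hs0, ← hs, inv_mul_cancel₀ hs0.ne']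
  have hyse : y1 - y0 = s • e := by rw [he, smul_smul, mul_inv_cancel₀ hs0.ne', one_smul]
  have hx0D : x0 ∈ D := hB (mem_closedBall_self (by positivity))
  -- the function w0
  set w : E → ℝ := fun z => u z + a * ‖z - y0‖ ^ 2 - (u x0 + a * ‖x0 - y0‖ ^ 2) with hw
  have hw0 : ∀ z ∈ D, 0 ≤ w z := fun z hz => by have := h0 z hz; simp only [hw]; linarith
  have hexp : ∀ z y : E, ‖z - y‖ ^ 2 = ‖z‖ ^ 2 - 2 * inner ℝ z y + ‖y‖ ^ 2 := fun z y =>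
    norm_sub_sq_real z y
  have hw1 : ∀ z ∈ D, 2 * a * s * (inner ℝ e (z - x0) - r) ≤ w z := by
    intro z hz
    have A := h1 z hz
    have B := h0 x1 hx1D
    have C : inner ℝ e (x1 - x0) ≤ r := by
      calc inner ℝ e (x1 - x0) ≤ ‖e‖ * ‖x1 - x0‖ := real_inner_le_norm _ _
        _ ≤ r := by rw [hen, one_mul]; exact hx01
    have D1 : inner ℝ (z - x1) (y1 - y0) = s * inner ℝ e (z - x1) := by
      rw [hyse, inner_smul_right, real_inner_comm]
    have D2 : inner ℝ e (z - x1) = inner ℝ e (z - x0) - inner ℝ e (x1 - x0) := by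
      rw [← inner_sub_right]; congr 1; abel
    have D3 : inner ℝ (z - x1) (y1 - y0) = inner ℝ z y1 - inner ℝ z y0 - inner ℝ x1 y1 + inner ℝ x1 y0 := by
      simp only [inner_sub_left, inner_sub_right]; ring
    simp only [hw]
    have E1 : a * s * (inner ℝ e (z - x0) - r) ≤ a * inner ℝ (z - x1) (y1 - y0) := by
      rw [D1, D2, mul_assoc]
      apply mul_le_mul_of_nonneg_left _ ha.le
      apply mul_le_mul_of_nonneg_left _ hs0.le
      linarith
    rw [D3] at E1
    rw [hexp, hexp] at A B ⊢
    nlinarith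
  set μ : ℝ := 1 / (2 * K) with hμ
  have hμ0 : 0 < μ := by positivity
  have hKμ : K * μ = 1 / 2 := by rw [hμ]; field_simp
  set k : ℝ := a * s / (8 * r) with hk
  have hk0 : 0 < k := by positivity
  have hkr : k * (8 * r) = a * s := by rw [hk]; field_simp
  set q : E → ℝ := fun z => k * ((inner ℝ e (z - x0) + 2 * r) ^ 2
      - μ * (‖z - x0‖ ^ 2 - (inner ℝ e (z - x0)) ^ 2)) with hq
  have hcs : ∀ z, (inner ℝ e (z - x0)) ^ 2 ≤ ‖z - x0‖ ^ 2 := by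
    intro z
    have := abs_real_inner_le_norm e (z - x0)
    rw [hen, one_mul] at this
    rw [← sq_abs]
    gcongr
  set T : Set E := closedBall x0 (6 * K * r) ∩ {z | |inner ℝ e (z - x0)| ≤ 2 * r} with hT
  have hcont : Continuous fun z : E => inner ℝ e (z - x0) := by fun_prop
  have hTc : IsCompact T := by
    apply (isCompact_closedBall x0 _).inter_right
    exact isClosed_le hcont.abs continuous_const
  have hx0T : x0 ∈ T := by
    refine ⟨mem_closedBall_self (by positivity), ?_⟩
    simp [hr.le]
  have hwc : ContinuousOn (fun z => w z - q z) T := by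
    have : ContinuousOn u T := hu.mono fun z hz => hDU (hB hz.1)
    have h2 : Continuous q := by fun_prop
    have h3 : Continuous fun z : E => a * ‖z - y0‖ ^ 2 - (u x0 + a * ‖x0 - y0‖ ^ 2) := by fun_prop
    have : ContinuousOn (fun z => u z + (a * ‖z - y0‖ ^ 2 - (u x0 + a * ‖x0 - y0‖ ^ 2)) - q z) T :=
      (this.add h3.continuousOn).sub h2.continuousOn
    refine this.congr fun z _ => ?_
    simp only [hw]; ring
  obtain ⟨z, hzT, hzmin⟩ := hTc.exists_isMinOn ⟨x0, hx0T⟩ hwc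
  have hneg : w z - q z < 0 := by
    have h4 : w z - q z ≤ w x0 - q x0 := hzmin hx0T
    have h5 : w x0 - q x0 = - (k * (2 * r) ^ 2) := by simp [hw, hq]
    have : 0 < k * (2 * r) ^ 2 := by positivity
    linarith
  have hzD : z ∈ D := hB hzT.1
  have hwz := hw0 z hzD
  have hzt : |inner ℝ e (z - x0)| ≤ 2 * r := hzT.2
  have hzt' := abs_le.1 hzt
  have ht2 : inner ℝ e (z - x0) < 2 * r := by
    by_contra! hge
    have heq : inner ℝ e (z - x0) = 2 * r := le_antisymm hzt'.2 hge
    have h6 := hw1 z hzD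
    have h7 : q z ≤ k * (4 * r) ^ 2 := by
      simp only [hq]
      apply mul_le_mul_of_nonneg_left _ hk0.le
      rw [heq]
      have := hcs z
      rw [heq] at this
      nlinarith
    rw [heq] at h6
    have : k * (4 * r) ^ 2 = 2 * a * s * r := by
      linear_combination 2 * r * hkr
    nlinarith
  have ht1 : -(2 * r) < inner ℝ e (z - x0) := by
    by_contra! hge
    have heq : inner ℝ e (z - x0) = -(2 * r) := le_antisymm hge hzt'.1
    have h7 : q z ≤ 0 := by
      simp only [hq]
      apply mul_nonpos_of_nonneg_of_nonpos hk0.le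
      have := hcs z
      rw [heq] at this ⊢
      nlinarith
    linarith
  have ht3 : ‖z - x0‖ < 6 * K * r := by
    by_contra! hge
    have h7 : q z ≤ 0 := by
      simp only [hq]
      apply mul_nonpos_of_nonneg_of_nonpos hk0.le
      have i1 : (inner ℝ e (z - x0)) ^ 2 ≤ 4 * r ^ 2 := by nlinarith
      have i2 : (inner ℝ e (z - x0) + 2 * r) ^ 2 ≤ 16 * r ^ 2 := by nlinarith
      have i3 : (6 * K * r) ^ 2 ≤ ‖z - x0‖ ^ 2 := by gcongr
      have i4 : 16 * r ^ 2 ≤ μ * ((6 * K * r) ^ 2 - 4 * r ^ 2) := by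
        have : μ * ((6 * K * r) ^ 2 - 4 * r ^ 2) - 16 * r ^ 2
            = (18 * K - 4 * μ - 16) * r ^ 2 := by
          linear_combination 36 * K * r ^ 2 * hKμ
        have hμ1 : μ ≤ 1 / 2 := by nlinarith
        have : 0 ≤ (18 * K - 4 * μ - 16) * r ^ 2 := by
          apply mul_nonneg _ (by positivity)
          linarith
        linarith
      have i5 : μ * ((6 * K * r) ^ 2 - 4 * r ^ 2) ≤
          μ * (‖z - x0‖ ^ 2 - (inner ℝ e (z - x0)) ^ 2) := by
        apply mul_le_mul_of_nonneg_left _ hμ0.le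
        linarith
      linarith
    linarith
  -- T is a neighbourhood of z
  have hTn : T ∈ 𝓝 z := by
    have o1 : IsOpen (ball x0 (6 * K * r) ∩ {z | |inner ℝ e (z - x0)| < 2 * r}) :=
      isOpen_ball.inter (isOpen_lt hcont.abs continuous_const)
    refine mem_of_superset (o1.mem_nhds ⟨by rwa [mem_ball, dist_eq_norm], abs_lt.2 ⟨ht1, ht2⟩⟩) ?_
    rintro y ⟨hy1, hy2⟩
    exact ⟨ball_subset_closedBall hy1, le_of_lt (show |inner ℝ e (y - x0)| < 2 * r from hy2)⟩
  have key := hS z (hDU hzD) ((2 * a) • (y0 - z) + (2 * k * (inner ℝ e (z - x0) + 2 * r) + 2 * k * μ * inner ℝ e (z - x0)) • e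
      - (2 * k * μ) • (z - x0)) (Real.sqrt (k * (1 + μ)) • e) (k * μ + a) (by positivity) ?_
  · rw [norm_smul, hen, mul_one, Real.norm_eq_abs, sq_abs, Real.sq_sqrt (by positivity)] at key
    have : k * (1 + μ) ≤ k * (K * μ) + K * a := by linarith
    rw [hKμ] at this
    have h8 : k * (8 * r) ≤ 2 * K * a * (8 * r) := by
      apply mul_le_mul_of_nonneg_right _ (by positivity)
      nlinarith
    rw [hkr] at h8
    have : s ≤ 16 * K * r := by
      have : a * s ≤ a * (16 * K * r) := by linarith
      exact le_of_mul_le_mul_left this ha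
    linarith
  · filter_upwards [hTn] with y hy
    have hm : w z - q z ≤ w y - q y := hzmin hy
    simp only [hw, hq] at hm
    set h := y - z with hh
    have e0 : y - x0 = (z - x0) + h := by rw [hh]; abel
    have e1 : y - y0 = h - (y0 - z) := by rw [hh]; abel
    have e2 : z - y0 = -(y0 - z) := by abel
    have e3 : ‖h - (y0 - z)‖ ^ 2 = ‖h‖ ^ 2 - 2 * inner ℝ (y0 - z) h + ‖y0 - z‖ ^ 2 := by
      rw [norm_sub_sq_real, real_inner_comm]
    have e4 : ‖(z - x0) + h‖ ^ 2 = ‖z - x0‖ ^ 2 + 2 * inner ℝ (z - x0) h + ‖h‖ ^ 2 :=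
      norm_add_sq_real _ _
    rw [e0, e1, e2, norm_neg, e3, e4, inner_add_right] at hm
    simp only [inner_sub_left, inner_add_left, inner_smul_left, conj_trivial, mul_pow,
      Real.sq_sqrt (show 0 ≤ k * (1 + μ) by positivity)] at hm ⊢
    linear_combination hm

end Abstract

section Abstract2
open Metric Filter Topology Module
open scoped ENNReal NNReal

/-- The Hausdorff measure of top dimension, used as the Haar measure on `E`. -/
def hm (E : Type*) [NormedAddCommGroup E] [InnerProductSpace ℝ E] [MeasurableSpace E]
    [BorelSpace E] : Measure E := Measure.hausdorffMeasure (finrank ℝ E : ℝ)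

variable {E : Type*} [NormedAddCommGroup E] [InnerProductSpace ℝ E] [FiniteDimensional ℝ E]
  [MeasurableSpace E] [BorelSpace E]

instance hm_isAddHaar : (hm E).IsAddHaarMeasure := isAddHaarMeasure_hausdorffMeasure

theorem contact_measure {K : ℝ} (hK : 1 ≤ K) {U : Set E} {u : E → ℝ}
    (hu : ContinuousOn u U) (hS : SSol K U u) {a R R' : ℝ} (ha : 0 < a) (hRR : R' < R) {c : E}
    (hcU : closedBall c R ⊆ U) {V A : Set E} (hA : MeasurableSet A)
    (hV : ∀ y ∈ V, ∃ x ∈ A, x ∈ closedBall c R' ∧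
      ∀ z ∈ closedBall c R, u x + a * ‖x - y‖ ^ 2 ≤ u z + a * ‖z - y‖ ^ 2) :
    hm E V ≤ (ENNReal.ofReal (16 * K)) ^ (finrank ℝ E) * hm E A := by
  classical
  have hK0 : 0 < K := by linarith
  choose! X hXA hXR hXmin using hV
  set δ : ℝ := (R - R') / (6 * K) with hδ
  have hδ0 : 0 < δ := div_pos (by linarith) (by positivity)
  have h6 : 6 * K * δ = R - R' := by rw [hδ]; field_simp
  have hanti : ∀ y ∈ V, ∀ y' ∈ V, dist (X y') (X y) < δ →
      dist y' y ≤ 16 * K * dist (X y') (X y) := by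
    intro y hy y' hy' hd
    have main : ∀ r, 0 < r → r ≤ δ → dist (X y') (X y) ≤ r → dist y' y ≤ 16 * K * r := by
      intro r hr hrδ hdr
      rw [dist_eq_norm]
      refine vertex_lipschitz hK hu hS (D := closedBall c R) ha hr hcU ?_ ?_ ?_ (hXmin y hy) (hXmin y' hy')
      · apply closedBall_subset_closedBall'
        have := hXR y hy
        rw [mem_closedBall] at this
        have : 6 * K * r ≤ 6 * K * δ := by gcongr
        linarith
      · exact closedBall_subset_closedBall hRR.le (hXR y' hy')
      · rwa [← dist_eq_norm]
    rcases eq_or_lt_of_le (dist_nonneg : 0 ≤ dist (X y') (X y)) with h0 | h0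
    · rw [← h0, mul_zero]
      apply le_of_forall_pos_le_add
      intro ε hε
      rw [zero_add]
      have hm0 : 0 < min δ (ε / (16 * K)) := lt_min hδ0 (by positivity)
      have := main _ hm0 (min_le_left _ _) (by rw [← h0]; exact hm0.le)
      refine this.trans ?_
      calc 16 * K * min δ (ε / (16 * K)) ≤ 16 * K * (ε / (16 * K)) := by
            gcongr; exact min_le_right _ _
        _ = ε := by field_simp
    · exact main _ h0 hd.le le_rfl
  -- partition
  set P : ℕ → Set E := disjointed (fun i => ball (TopologicalSpace.denseSeq E i) (δ / 2)) with hP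
  have hPm : ∀ i, MeasurableSet (P i) := fun i =>
    MeasurableSet.disjointed (fun i => measurableSet_ball) i
  have hPd : Pairwise (Function.onFun Disjoint P) := disjoint_disjointed _
  have hPu : ⋃ i, P i = univ := by
    rw [hP, iUnion_disjointed, eq_univ_iff_forall]
    intro x
    obtain ⟨i, hi⟩ := (TopologicalSpace.denseRange_denseSeq E).exists_dist_lt x (half_pos hδ0)
    exact mem_iUnion.2 ⟨i, hi⟩
  have hPδ : ∀ i, ∀ x ∈ P i, ∀ y ∈ P i, dist x y < δ := by
    intro i x hx y hy
    have h1 := disjointed_subset _ i hx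
    have h2 := disjointed_subset _ i hy
    rw [mem_ball] at h1 h2
    have := dist_triangle_right x y (TopologicalSpace.denseSeq E i)
    linarith
  have hpiece : ∀ i, hm E (V ∩ X ⁻¹' (P i)) ≤
      (ENNReal.ofReal (16 * K)) ^ (finrank ℝ E) * hm E (A ∩ P i) := by
    intro i
    set W := V ∩ X ⁻¹' (P i) with hW
    have hinj : InjOn X W := by
      intro y hy y' hy' heq
      have := hanti y hy.1 y' hy'.1 (by rw [heq, dist_self]; exact hδ0)
      rw [heq, dist_self, mul_zero] at this
      exact (dist_le_zero.1 this).symm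
    rcases W.eq_empty_or_nonempty with h0 | ⟨y0, hy0⟩
    · rw [h0]; simp
    have : Nonempty E := ⟨y0⟩
    set f := Function.invFunOn X W with hf
    have hfX : ∀ y ∈ W, f (X y) = y := fun y hy => hinj.leftInvOn_invFunOn hy
    have hlip : LipschitzOnWith (Real.toNNReal (16 * K)) f (X '' W) := by
      apply LipschitzOnWith.of_dist_le_mul
      rintro _ ⟨y, hy, rfl⟩ _ ⟨y', hy', rfl⟩
      rw [hfX y hy, hfX y' hy', Real.coe_toNNReal _ (by positivity)]
      exact hanti y' hy'.1 y hy.1 (hPδ i _ hy.2 _ hy'.2)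
    have hWeq : W = f '' (X '' W) := by
      rw [image_image]
      ext y
      constructor
      · intro hy; exact ⟨y, hy, hfX y hy⟩
      · rintro ⟨y', hy', rfl⟩
        show f (X y') ∈ W
        rwa [hfX y' hy']
    have h1 := hlip.hausdorffMeasure_image_le (d := (finrank ℝ E : ℝ)) (by positivity)
    rw [← hWeq, ENNReal.rpow_natCast] at h1
    refine h1.trans ?_
    have hsub : X '' W ⊆ A ∩ P i := by
      rintro _ ⟨y, hy, rfl⟩
      exact ⟨hXA y hy.1, hy.2⟩
    exact mul_le_mul_right (measure_mono hsub) _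
  calc hm E V = hm E (⋃ i, V ∩ X ⁻¹' (P i)) := by
        rw [← inter_iUnion, ← preimage_iUnion, hPu, preimage_univ, inter_univ]
    _ ≤ ∑' i, hm E (V ∩ X ⁻¹' (P i)) := measure_iUnion_le _
    _ ≤ ∑' i, (ENNReal.ofReal (16 * K)) ^ (finrank ℝ E) * hm E (A ∩ P i) :=
        ENNReal.tsum_le_tsum hpiece
    _ = (ENNReal.ofReal (16 * K)) ^ (finrank ℝ E) * ∑' i, hm E (A ∩ P i) := ENNReal.tsum_mul_left
    _ = (ENNReal.ofReal (16 * K)) ^ (finrank ℝ E) * hm E (⋃ i, A ∩ P i) := by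
        rw [measure_iUnion]
        · intro i j hij
          exact (hPd hij).mono inter_subset_right inter_subset_right
        · exact fun i => hA.inter (hPm i)
    _ = (ENNReal.ofReal (16 * K)) ^ (finrank ℝ E) * hm E A := by
        rw [← inter_iUnion, hPu, inter_univ]

/-- Measure fraction constant. -/
def epsK (E : Type*) [NormedAddCommGroup E] [InnerProductSpace ℝ E] (K : ℝ) : ℝ :=
  ((512 * K) ^ (finrank ℝ E))⁻¹

theorem epsK_pos {K : ℝ} (hK : 1 ≤ K) : 0 < epsK E K := by
  have : 0 < K := by linarith
  unfold epsK; positivity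

theorem small_measure {K : ℝ} (hK : 1 ≤ K) {U : Set E} {u : E → ℝ}
    (hu : ContinuousOn u U) (hS : SSol K U u) {x : E} {r m : ℝ} (hr : 0 < r) (hm0 : 0 < m)
    (hU : closedBall x r ⊆ U) (hpos : ∀ y ∈ closedBall x r, 0 ≤ u y)
    (hmeas : hm E (closedBall x r ∩ {y | u y < m}) <
      ENNReal.ofReal (epsK E K) * hm E (closedBall x r)) :
    ∀ z ∈ closedBall x (r / 2), m / 2 ≤ u z := by
  intro z hz
  by_contra! hlt
  have hK0 : 0 < K := by linarith
  have hDx : closedBall z (r / 2) ⊆ closedBall x r := by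
    apply closedBall_subset_closedBall'
    rw [mem_closedBall] at hz; linarith
  have hDU := hDx.trans hU
  set A : Set E := ball x r ∩ u ⁻¹' (Iio m) with hA
  have hAo : IsOpen A :=
    (hu.mono (ball_subset_closedBall.trans hU)).isOpen_inter_preimage isOpen_ball isOpen_Iio
  set a : ℝ := 16 * m / r ^ 2 with ha
  have ha0 : 0 < a := by positivity
  have har : a * r ^ 2 = 16 * m := by rw [ha]; field_simp
  have h := contact_measure hK hu hS ha0 (R := r / 2) (R' := 3 * r / 8) (by linarith) hDU
    (V := closedBall z (r / 16)) (A := A) hAo.measurableSet ?_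
  · have hAle : hm E A ≤ hm E (closedBall x r ∩ {y | u y < m}) :=
      measure_mono fun y hy => ⟨ball_subset_closedBall hy.1, hy.2⟩
    have h1 : hm E (closedBall z (r / 16)) = ENNReal.ofReal ((1 / 16) ^ finrank ℝ E) * hm E (closedBall x r) := by
      rw [Measure.addHaar_closedBall _ z (by positivity), Measure.addHaar_closedBall _ x hr.le, ← mul_assoc,
        ← ENNReal.ofReal_mul (by positivity), ← mul_pow]
      congr 3; ring
    have hfin : hm E (closedBall x r) ≠ ⊤ := measure_closedBall_lt_top.ne
    have hpos' : hm E (closedBall x r) ≠ 0 := (measure_closedBall_pos _ _ hr).ne'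
    rw [h1, ← ENNReal.ofReal_pow (by positivity)] at h
    have h2 : ENNReal.ofReal ((16 * K) ^ finrank ℝ E) * hm E A <
        ENNReal.ofReal ((16 * K) ^ finrank ℝ E) * (ENNReal.ofReal (epsK E K) * hm E (closedBall x r)) := by
      apply ENNReal.mul_lt_mul_right
      · rw [ne_eq, ENNReal.ofReal_eq_zero, not_le]; positivity
      · exact ENNReal.ofReal_ne_top
      · exact hAle.trans_lt hmeas
    have h3 := h.trans_lt h2
    rw [← mul_assoc, ← ENNReal.ofReal_mul (by positivity)] at h3
    have h4 : (16 * K) ^ finrank ℝ E * epsK E K ≤ (1 / 16) ^ finrank ℝ E := by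
      unfold epsK
      rw [← inv_pow, ← mul_pow]
      apply pow_le_pow_left₀ (by positivity)
      rw [mul_inv]
      field_simp
      norm_num
    have h5 : ENNReal.ofReal ((16 * K) ^ finrank ℝ E * epsK E K) * hm E (closedBall x r) ≤ ENNReal.ofReal ((1 / 16) ^ finrank ℝ E) * hm E (closedBall x r) := by
      gcongr
    exact absurd h3 (not_lt.2 h5)
  · intro y hy
    rw [mem_closedBall, dist_comm, dist_eq_norm] at hy
    have hc : ContinuousOn (fun w => u w + a * ‖w - y‖ ^ 2) (closedBall z (r / 2)) :=
      (hu.mono hDU).add (by fun_prop)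
    obtain ⟨w, hw, hwmin⟩ := (isCompact_closedBall z (r / 2)).exists_isMinOn
      ⟨z, mem_closedBall_self (by positivity)⟩ hc
    have h0 : u w + a * ‖w - y‖ ^ 2 ≤ u z + a * ‖z - y‖ ^ 2 := hwmin (mem_closedBall_self (by positivity))
    have h1 : a * ‖z - y‖ ^ 2 ≤ m / 16 := by
      have : a * ‖z - y‖ ^ 2 ≤ a * (r / 16) ^ 2 := by gcongr
      nlinarith
    have hw0 := hpos w (hDx hw)
    have h2 : ‖w - z‖ < 3 * r / 8 := by
      by_contra! hge
      have h3 : 5 * r / 16 ≤ ‖w - y‖ := by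
        have : ‖w - z‖ ≤ ‖w - y‖ + ‖z - y‖ := by
          have := norm_sub_le (w - y) (z - y)
          simpa using this
        linarith
      have : a * (5 * r / 16) ^ 2 ≤ a * ‖w - y‖ ^ 2 := by gcongr
      nlinarith
    have h3 : 0 ≤ a * ‖w - y‖ ^ 2 := by positivity
    refine ⟨w, ⟨?_, ?_⟩, ?_, fun t ht => hwmin ht⟩
    · rw [mem_closedBall] at hz
      rw [mem_ball]
      have := dist_triangle w z x
      rw [dist_eq_norm w z] at this
      linarith
    · show u w < m
      linarith
    · rw [mem_closedBall, dist_eq_norm]; exact h2.le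

end Abstract2

section Abstract3
open Metric Filter Topology Module
open scoped ENNReal NNReal

variable {E : Type*} [NormedAddCommGroup E] [InnerProductSpace ℝ E] 

/-- Comparison with the exponential barrier. -/
theorem compare_exp {K : ℝ} {Kc Ω : Set E} (hKc : IsCompact Kc) (hΩo : IsOpen Ω) (hΩ : Ω ⊆ Kc)
    {u : E → ℝ} (hu : ContinuousOn u Kc) (hS : SSol K Ω u) (z : E) {γ k : ℝ} (b : ℝ)
    (hγ0 : 0 < γ) (hk : 0 < k) (hγ : ∀ x ∈ Ω, 2 * K < γ * ‖x - z‖ ^ 2)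
    (hbd : ∀ x ∈ Kc, x ∉ Ω → k * (Real.exp (-γ * ‖x - z‖ ^ 2) - b) ≤ u x) :
    ∀ x ∈ Kc, k * (Real.exp (-γ * ‖x - z‖ ^ 2) - b) ≤ u x := by
  by_contra! hcon
  obtain ⟨x1, hx1, hlt⟩ := hcon
  have hc : ContinuousOn (fun x => u x - k * (Real.exp (-γ * ‖x - z‖ ^ 2) - b)) Kc :=
    hu.sub (by fun_prop)
  obtain ⟨x, hx, hmin⟩ := hKc.exists_isMinOn ⟨x1, hx1⟩ hc
  have hxΩ : x ∈ Ω := by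
    by_contra hxn
    have h1 := hbd x hx hxn
    have h2 : u x - k * (Real.exp (-γ * ‖x - z‖ ^ 2) - b) ≤
      u x1 - k * (Real.exp (-γ * ‖x1 - z‖ ^ 2) - b) := hmin hx1
    linarith
  set v := x - z with hv
  set G := Real.exp (-γ * ‖v‖ ^ 2) with hG
  have hG0 : 0 < G := Real.exp_pos _
  have key := hS x hxΩ ((-2 * (k * G * γ)) • v) (Real.sqrt (k * G) • γ • v) (2 * (k * G * γ))
    (by positivity) ?_
  · rw [norm_smul, norm_smul, Real.norm_eq_abs, Real.norm_eq_abs, mul_pow, mul_pow, sq_abs, sq_abs,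
      Real.sq_sqrt (by positivity)] at key
    have h1 := hγ x hxΩ
    have h2 : k * G * γ * (2 * K) < k * G * γ * (γ * ‖v‖ ^ 2) :=
      mul_lt_mul_of_pos_left h1 (by positivity)
    nlinarith
  · have c1 : ∀ᶠ y in 𝓝 x, |γ * inner ℝ v (y - x)| < 1 / 2 := by
      have : Continuous fun y : E => |γ * inner ℝ v (y - x)| := by fun_prop
      apply this.continuousAt.eventually_lt continuousAt_const
      simp
    have c2 : ∀ᶠ y in 𝓝 x, γ * ‖y - x‖ ^ 2 < 1 := by
      have : Continuous fun y : E => γ * ‖y - x‖ ^ 2 := by fun_prop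
      apply this.continuousAt.eventually_lt continuousAt_const
      simp
    filter_upwards [c1, c2, hΩo.mem_nhds hxΩ] with y h1 h2 hy
    have h3 : u x - k * (Real.exp (-γ * ‖x - z‖ ^ 2) - b) ≤
      u y - k * (Real.exp (-γ * ‖y - z‖ ^ 2) - b) := hmin (hΩ hy)
    set h := y - x with hh
    have e0 : y - z = v + h := by rw [hv, hh]; abel
    rw [← hv, e0, norm_add_sq_real] at h3
    set i := inner ℝ v h with hi
    set t := -γ * (2 * i + ‖h‖ ^ 2) with ht
    have e1 : Real.exp (-γ * (‖v‖ ^ 2 + 2 * i + ‖h‖ ^ 2)) = G * Real.exp (t / 2) ^ 2 := by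
      rw [hG, ← Real.exp_nat_mul, ← Real.exp_add]; congr 1; rw [ht]; push_cast; ring
    have h1' := abs_lt.1 h1
    have e2 : (1 + t / 2) ^ 2 ≤ Real.exp (t / 2) ^ 2 := by
      have p0 : 0 ≤ 1 + t / 2 := by rw [ht]; nlinarith
      have := Real.add_one_le_exp (t / 2)
      gcongr; linarith
    have e3 : 1 - 2 * γ * i + γ ^ 2 * i ^ 2 - 2 * γ * ‖h‖ ^ 2 ≤ (1 + t / 2) ^ 2 := by
      have p1 : 0 ≤ γ * ‖h‖ ^ 2 * (1 + γ * i) := mul_nonneg (by positivity) (by linarith)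
      have p2 : 0 ≤ (γ * ‖h‖ ^ 2) ^ 2 := sq_nonneg _
      rw [ht]; nlinarith
    have e4 : k * G * (1 - 2 * γ * i + γ ^ 2 * i ^ 2 - 2 * γ * ‖h‖ ^ 2) ≤
        k * G * Real.exp (t / 2) ^ 2 := by
      apply mul_le_mul_of_nonneg_left (e3.trans e2) (by positivity)
    rw [e1] at h3
    simp only [inner_smul_left, conj_trivial, mul_pow, Real.sq_sqrt (show 0 ≤ k * G by positivity)]
    rw [← hi]
    nlinarith

variable [FiniteDimensional ℝ E]

theorem spread {K : ℝ} (hK : 1 ≤ K) {z : E} {R ρ m : ℝ} (hρ : 0 < ρ) (hm : 0 < m)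
    {u : E → ℝ} (hu : ContinuousOn u (closedBall z R)) (hS : SSol K (ball z R) u)
    (hpos : ∀ y ∈ closedBall z R, 0 ≤ u y) (hρm : ∀ y ∈ closedBall z R, y ∈ closedBall z ρ → m ≤ u y) :
    ∀ y ∈ closedBall z R,
      m * (Real.exp (-(4 * K / ρ ^ 2) * ‖y - z‖ ^ 2) - Real.exp (-(4 * K / ρ ^ 2) * R ^ 2)) ≤ u y := by
  have hK0 : 0 < K := by linarith
  refine compare_exp (isCompact_closedBall z R) (Ω := ball z R ∩ (closedBall z ρ)ᶜ)
    (isOpen_ball.inter isClosed_closedBall.isOpen_compl) ?_ hu (hS.mono inter_subset_left) z _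
    (by positivity) hm ?_ ?_
  · exact inter_subset_left.trans ball_subset_closedBall
  · rintro x ⟨_, hx⟩
    rw [mem_compl_iff, mem_closedBall, not_le, dist_eq_norm] at hx
    have : ρ ^ 2 < ‖x - z‖ ^ 2 := by gcongr
    rw [div_mul_eq_mul_div, lt_div_iff₀ (by positivity)]
    nlinarith
  · intro x hx hxn
    by_cases h : x ∈ closedBall z ρ
    · refine le_trans ?_ (hρm x hx h)
      have : Real.exp (-(4 * K / ρ ^ 2) * ‖x - z‖ ^ 2) ≤ 1 := by
        rw [Real.exp_le_one_iff, neg_mul, neg_nonpos]; positivity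
      have := Real.exp_pos (-(4 * K / ρ ^ 2) * R ^ 2)
      nlinarith
    · have hR : ‖x - z‖ = R := by
        rw [mem_closedBall, dist_eq_norm] at hx
        apply le_antisymm hx
        by_contra! hlt
        exact hxn ⟨by rwa [mem_ball, dist_eq_norm], h⟩
      rw [hR, sub_self, mul_zero]
      exact hpos x hx

/-- Growth constant. -/
def etaK (K : ℝ) : ℝ := (Real.exp (-(64 * K)) - Real.exp (-(256 * K))) / 2

theorem etaK_pos {K : ℝ} (hK : 1 ≤ K) : 0 < etaK K := by
  have : Real.exp (-(256 * K)) < Real.exp (-(64 * K)) := by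
    rw [Real.exp_lt_exp]; linarith
  unfold etaK; linarith

theorem etaK_le {K : ℝ} (hK : 1 ≤ K) : etaK K ≤ 1 := by
  have h1 : Real.exp (-(64 * K)) ≤ 1 := by rw [Real.exp_le_one_iff]; linarith
  have h2 := Real.exp_pos (-(256 * K))
  unfold etaK; linarith

variable [MeasurableSpace E] [BorelSpace E]

theorem growth {K : ℝ} (hK : 1 ≤ K) {U : Set E} {u : E → ℝ}
    (hu : ContinuousOn u U) (hS : SSol K U u) {x : E} {r m : ℝ} (hr : 0 < r) (hm0 : 0 < m)
    (hU : closedBall x (4 * r) ⊆ U) (hpos : ∀ y ∈ closedBall x (4 * r), 0 ≤ u y)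
    (hmeas : hm E (closedBall x r ∩ {y | u y < m}) <
      ENNReal.ofReal (epsK E K) * hm E (closedBall x r)) :
    ∀ z ∈ closedBall x (2 * r), etaK K * m ≤ u z := by
  have hsub : closedBall x r ⊆ closedBall x (4 * r) := closedBall_subset_closedBall (by linarith)
  have h1 := small_measure hK hu hS hr hm0 (hsub.trans hU) (fun y hy => hpos y (hsub hy)) hmeas
  intro z hz
  have hz4 : z ∈ closedBall x (4 * r) := closedBall_subset_closedBall (by linarith) hz
  have h2 := spread hK (z := x) (R := 4 * r) (ρ := r / 2) (m := m / 2) (by positivity)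
    (by positivity) (hu.mono hU) (hS.mono (ball_subset_closedBall.trans hU)) hpos
    (fun y _ hy => h1 y hy) z hz4
  refine le_trans ?_ h2
  have hzn : ‖z - x‖ ≤ 2 * r := by rwa [mem_closedBall, dist_eq_norm] at hz
  have e1 : -(4 * K / (r / 2) ^ 2) * (4 * r) ^ 2 = -(256 * K) := by field_simp; ring
  have e2 : -(64 * K) ≤ -(4 * K / (r / 2) ^ 2) * ‖z - x‖ ^ 2 := by
    have e3 : -(4 * K / (r / 2) ^ 2) * (2 * r) ^ 2 = -(64 * K) := by field_simp; ring
    rw [← e3, neg_mul, neg_mul, neg_le_neg_iff]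
    gcongr
  rw [e1]
  have := Real.exp_le_exp.2 e2
  unfold etaK
  nlinarith

theorem ink_spots {S F : Set E} (hSm : MeasurableSet S) (hSF : S ⊆ F) {ε rs : ℝ} (hε : 0 < ε)
    (h : ∀ᵐ x ∂(hm E).restrict S, ∃ ρ, 0 < ρ ∧ ρ ≤ rs ∧ closedBall x ρ ⊆ F ∧
      ENNReal.ofReal ε * hm E (closedBall x ρ) ≤ hm E (closedBall x ρ \ S)) :
    ENNReal.ofReal (1 + ε / 5 ^ (finrank ℝ E)) * hm E S ≤ hm E F := by
  rw [ae_restrict_iff' hSm] at h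
  set t : Set E := {x | x ∈ S ∧ ∃ ρ, 0 < ρ ∧ ρ ≤ rs ∧ closedBall x ρ ⊆ F ∧
      ENNReal.ofReal ε * hm E (closedBall x ρ) ≤ hm E (closedBall x ρ \ S)} with ht
  have hSt : hm E S ≤ hm E t := by
    apply measure_mono_ae
    filter_upwards [h] with x hx hxS
    exact ⟨hxS, hx hxS⟩
  have hex : ∀ x ∈ t, ∃ ρ, 0 < ρ ∧ ρ ≤ rs ∧ closedBall x ρ ⊆ F ∧
      ENNReal.ofReal ε * hm E (closedBall x ρ) ≤ hm E (closedBall x ρ \ S) := fun x hx => hx.2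
  choose! ρ hρ0 hρr hρF hρm using hex
  obtain ⟨v, hvt, hvd, hvc⟩ := Vitali.exists_disjoint_subfamily_covering_enlargement_closedBall
    t (fun x => x) ρ rs hρr 5 (by norm_num)
  have hvcount : v.Countable := by
    apply hvd.countable_of_nonempty_interior
    intro x hx
    refine ⟨x, ?_⟩
    apply ball_subset_interior_closedBall
    exact mem_ball_self (hρ0 x (hvt hx))
  have h5 : ∀ x ∈ v, hm E (closedBall x (5 * ρ x)) = ENNReal.ofReal (5 ^ finrank ℝ E) * hm E (closedBall x (ρ x)) := by
    intro x hx
    have := hρ0 x (hvt hx)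
    rw [Measure.addHaar_closedBall _ x (by positivity), Measure.addHaar_closedBall _ x this.le, ← mul_assoc,
        ← ENNReal.ofReal_mul (by positivity), ← mul_pow]
  have hcov : t ⊆ ⋃ x ∈ v, closedBall x (5 * ρ x) := by
    intro x hx
    obtain ⟨b, hb, hsub⟩ := hvc x hx
    exact mem_biUnion hb (hsub (mem_closedBall_self (hρ0 x hx).le))
  have hle : hm E S ≤ ENNReal.ofReal (5 ^ finrank ℝ E) * ∑' x : v, hm E (closedBall (x : E) (ρ x)) := by
    calc hm E S ≤ hm E t := hSt
      _ ≤ hm E (⋃ x ∈ v, closedBall x (5 * ρ x)) := measure_mono hcov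
      _ ≤ ∑' x : v, hm E (closedBall (x : E) (5 * ρ x)) := measure_biUnion_le _ hvcount _
      _ = ∑' x : v, ENNReal.ofReal (5 ^ finrank ℝ E) * hm E (closedBall (x : E) (ρ x)) :=
          tsum_congr fun x => h5 x x.2
      _ = _ := ENNReal.tsum_mul_left
  have hge : ENNReal.ofReal ε * ∑' x : v, hm E (closedBall (x : E) (ρ x)) ≤ hm E (F \ S) := by
    calc ENNReal.ofReal ε * ∑' x : v, hm E (closedBall (x : E) (ρ x))
        = ∑' x : v, ENNReal.ofReal ε * hm E (closedBall (x : E) (ρ x)) := ENNReal.tsum_mul_left.symm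
      _ ≤ ∑' x : v, hm E (closedBall (x : E) (ρ x) \ S) :=
          ENNReal.tsum_le_tsum fun x => hρm x (hvt x.2)
      _ = hm E (⋃ x ∈ v, (closedBall x (ρ x) \ S)) := by
          rw [measure_biUnion hvcount]
          · intro x hx y hy hxy
            exact (hvd hx hy hxy).mono sdiff_subset sdiff_subset
          · exact fun x _ => measurableSet_closedBall.diff hSm
      _ ≤ hm E (F \ S) := by
          apply measure_mono
          apply iUnion₂_subset
          intro x hx
          exact sdiff_subset_sdiff_left (hρF x (hvt hx))
  have hF : hm E S + hm E (F \ S) = hm E F := by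
    have := measure_inter_add_sdiff (μ := hm E) F hSm
    rwa [inter_eq_right.2 hSF] at this
  rw [← hF, ENNReal.ofReal_add (by norm_num) (by positivity), add_mul, ENNReal.ofReal_one, one_mul]
  gcongr
  refine le_trans ?_ hge
  calc ENNReal.ofReal (ε / 5 ^ finrank ℝ E) * hm E S
      ≤ ENNReal.ofReal (ε / 5 ^ finrank ℝ E) * (ENNReal.ofReal (5 ^ finrank ℝ E) * ∑' x : v, hm E (closedBall (x : E) (ρ x))) := by gcongr
    _ = _ := by
      rw [← mul_assoc, ← ENNReal.ofReal_mul (by positivity)]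
      congr 2
      field_simp

theorem density_scale {S : Set E} (hSm : MeasurableSet S) {ε rs : ℝ} (hε : 0 < ε) (hrs : 0 < rs) :
    ∀ᵐ x ∂(hm E).restrict S, ∃ j : ℕ,
      hm E (closedBall x (rs / 2 ^ j) \ S) < ENNReal.ofReal ε * hm E (closedBall x (rs / 2 ^ j)) := by
  filter_upwards [Besicovitch.ae_tendsto_measure_inter_div (hm E) S] with x hx
  have hlim : Tendsto (fun j : ℕ => rs / 2 ^ j) atTop (𝓝[>] 0) := by
    rw [tendsto_nhdsWithin_iff]
    refine ⟨?_, Eventually.of_forall fun j => by simp only [mem_Ioi]; positivity⟩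
    have := (tendsto_pow_atTop_nhds_zero_of_lt_one (r := (1/2 : ℝ)) (by norm_num) (by norm_num)).const_mul rs
    rw [mul_zero] at this
    refine this.congr fun j => ?_
    rw [one_div, inv_pow]; rfl
  have h1 := hx.comp hlim
  set ε' := min ε (1 / 2) with hε'
  have hε'0 : 0 < ε' := lt_min hε (by norm_num)
  have hε'1 : ε' ≤ 1 / 2 := min_le_right _ _
  have h2 : ∀ᶠ j : ℕ in atTop, ENNReal.ofReal (1 - ε') <
      hm E (S ∩ closedBall x (rs / 2 ^ j)) / hm E (closedBall x (rs / 2 ^ j)) := by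
    apply h1.eventually_const_lt
    rw [← ENNReal.ofReal_one]
    exact (ENNReal.ofReal_lt_ofReal_iff (by norm_num)).2 (by linarith)
  obtain ⟨j, hj⟩ := h2.exists
  refine ⟨j, ?_⟩
  set B := closedBall x (rs / 2 ^ j) with hB
  have hBf : hm E B ≠ ⊤ := measure_closedBall_lt_top.ne
  have hB0 : hm E B ≠ 0 := (measure_closedBall_pos _ _ (by positivity)).ne'
  rw [ENNReal.lt_div_iff_mul_lt (Or.inl hB0) (Or.inl hBf), inter_comm] at hj
  have hadd := measure_inter_add_sdiff (μ := hm E) B hSm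
  have hle : ENNReal.ofReal ε' * hm E B ≤ ENNReal.ofReal ε * hm E B := by
    gcongr; exact min_le_left _ _
  refine lt_of_lt_of_le ?_ hle
  by_contra! hge
  have h3 : ENNReal.ofReal (1 - ε') * hm E B + ENNReal.ofReal ε' * hm E B < hm E B := by
    nth_rewrite 3 [← hadd]
    exact ENNReal.add_lt_add_of_lt_of_le (ENNReal.mul_ne_top ENNReal.ofReal_ne_top hBf) hj hge
  rw [← add_mul, ← ENNReal.ofReal_add (by linarith) hε'0.le] at h3
  simp at h3

end Abstract3

section Abstract4
open Metric Filter Topology Module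
open scoped ENNReal NNReal

variable (E : Type*) [NormedAddCommGroup E] [InnerProductSpace ℝ E] [FiniteDimensional ℝ E]
  [MeasurableSpace E] [BorelSpace E]

theorem weak_harnack {K : ℝ} (hK : 1 ≤ K) : ∃ c : ℝ, 0 < c ∧
    ∀ (U : Set E) (u : E → ℝ) (z0 : E) (m : ℝ), 0 < m → ContinuousOn u U → SSol K U u →
      closedBall z0 6 ⊆ U → (∀ y ∈ closedBall z0 6, 0 ≤ u y) →
      hm E (closedBall z0 1) ≤ 2 * hm E (closedBall z0 1 ∩ {y | m ≤ u y}) →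
      ∀ y ∈ closedBall z0 1, c * m ≤ u y := by
  have hK0 : 0 < K := by linarith
  set ε := epsK E K with hεdef
  have hε : 0 < ε := epsK_pos hK
  set η := etaK K with hη
  have hη0 : 0 < η := etaK_pos hK
  have hη1 : η ≤ 1 := etaK_le hK
  set κ : ℝ := 1 + ε / 5 ^ (finrank ℝ E) with hκ
  have hκ1 : 1 < κ := by
    have : 0 < ε / 5 ^ (finrank ℝ E) := by positivity
    linarith
  obtain ⟨N, hN⟩ := pow_unbounded_of_one_lt ((2:ℝ) ^ (finrank ℝ E) * 2) hκ1
  have hN0 : 0 < N := by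
    rcases Nat.eq_zero_or_pos N with h | h
    · rw [h, pow_zero] at hN
      have : (1:ℝ) ≤ 2 ^ finrank ℝ E := one_le_pow₀ (by norm_num)
      linarith
    · exact h
  have hNR : (0:ℝ) < N := by exact_mod_cast hN0
  have hN1 : (1:ℝ) ≤ N := by exact_mod_cast hN0
  set rs : ℝ := 1 / N with hrs
  have hrs0 : 0 < rs := by positivity
  have hrs1 : rs ≤ 1 := by rw [hrs, div_le_one hNR]; exact hN1
  have hNrs : N * rs = 1 := by rw [hrs]; field_simp
  set c1 : ℝ := Real.exp (-(4 * K / (2 * rs) ^ 2) * 3 ^ 2) - Real.exp (-(4 * K / (2 * rs) ^ 2) * 4 ^ 2) with hc1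
  have hc10 : 0 < c1 := by
    rw [hc1, sub_pos, Real.exp_lt_exp]
    have : 0 < 4 * K / (2 * rs) ^ 2 := by positivity
    linarith
  refine ⟨η ^ N * c1, by positivity, ?_⟩
  intro U u z0 m hm0 hu hS hU hpos hmeas
  set S : ℕ → Set E := fun k => closedBall z0 (1 + k * rs) ∩ {y | η ^ k * m ≤ u y} with hSdef
  have hk2 : ∀ k : ℕ, k ≤ N → 1 + k * rs ≤ 2 := by
    intro k hk
    have : (k:ℝ) * rs ≤ N * rs := by gcongr
    linarith
  have hSsub : ∀ k ≤ N, S k ⊆ closedBall z0 2 := fun k hk =>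
    inter_subset_left.trans (closedBall_subset_closedBall (hk2 k hk))
  have hSm : ∀ k ≤ N, MeasurableSet (S k) := by
    intro k hk
    have h1 : ContinuousOn u (closedBall z0 (1 + k * rs)) := hu.mono
      ((closedBall_subset_closedBall (by have := hk2 k hk; linarith)).trans hU)
    exact (h1.preimage_isClosed_of_isClosed isClosed_closedBall isClosed_Ici).measurableSet
  -- growth on a ball where S k is dense
  have hgrow : ∀ k ≤ N, ∀ x ∈ S k, ∀ r, 0 < r → r ≤ rs →
      hm E (closedBall x r \ S k) < ENNReal.ofReal ε * hm E (closedBall x r) →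
      r + dist x z0 ≤ 1 + k * rs ∨ True →
      hm E (closedBall x r ∩ {y | u y < η ^ k * m}) < ENNReal.ofReal ε * hm E (closedBall x r) ∧
      ∀ z ∈ closedBall x (2 * r), η ^ (k + 1) * m ≤ u z := by
    intro k hk x hx r hr hrr hlt _
    have h1 : hm E (closedBall x r ∩ {y | u y < η ^ k * m}) < ENNReal.ofReal ε * hm E (closedBall x r) := by
      refine lt_of_le_of_lt (measure_mono ?_) hlt
      rintro y ⟨hy1, hy2⟩
      refine ⟨hy1, fun hy3 => ?_⟩
      have h3 : η ^ k * m ≤ u y := hy3.2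
      have h4 : u y < η ^ k * m := hy2
      linarith
    refine ⟨h1, ?_⟩
    have hx2 := hSsub k hk hx
    rw [mem_closedBall] at hx2
    have hsub : closedBall x (4 * r) ⊆ closedBall z0 6 :=
      closedBall_subset_closedBall' (by linarith)
    have h2 := growth hK hu hS hr (m := η ^ k * m) (by positivity) (hsub.trans hU)
      (fun y hy => hpos y (hsub hy)) h1
    intro z hz
    have := h2 z hz
    rw [pow_succ']
    linarith
  by_cases hgood : ∃ k < N, ∃ x ∈ S k, hm E (closedBall x rs \ S k) < ENNReal.ofReal ε * hm E (closedBall x rs)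
  · obtain ⟨k, hk, x, hx, hlt⟩ := hgood
    have h1 := (hgrow k hk.le x hx rs hrs0 le_rfl hlt (Or.inr trivial)).2
    have hx2 := hSsub k hk.le hx
    rw [mem_closedBall] at hx2
    have hsub : closedBall x 4 ⊆ closedBall z0 6 :=
      closedBall_subset_closedBall' (by linarith)
    intro y hy
    rw [mem_closedBall] at hy
    have hyx : dist y x ≤ 3 := by
      have := dist_triangle_right y x z0
      linarith
    have h2 := spread hK (z := x) (R := 4) (ρ := 2 * rs) (m := η ^ N * m) (by positivity)
      (by positivity) (hu.mono (hsub.trans hU)) (hS.mono (ball_subset_closedBall.trans (hsub.trans hU)))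
      (fun y hy => hpos y (hsub hy)) ?_ y (by rw [mem_closedBall]; linarith)
    · refine le_trans ?_ h2
      rw [dist_eq_norm] at hyx
      have h3 : Real.exp (-(4 * K / (2 * rs) ^ 2) * 3 ^ 2) ≤ Real.exp (-(4 * K / (2 * rs) ^ 2) * ‖y - x‖ ^ 2) := by
        rw [Real.exp_le_exp, neg_mul, neg_mul, neg_le_neg_iff]
        gcongr
      have h4 : c1 ≤ Real.exp (-(4 * K / (2 * rs) ^ 2) * ‖y - x‖ ^ 2) - Real.exp (-(4 * K / (2 * rs) ^ 2) * 4 ^ 2) := by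
        rw [hc1]; linarith
      have h5 : 0 ≤ η ^ N * m := by positivity
      calc η ^ N * c1 * m = η ^ N * m * c1 := by ring
        _ ≤ _ := mul_le_mul_of_nonneg_left h4 h5
    · intro w _ hw
      refine le_trans ?_ (h1 w hw)
      have : η ^ N ≤ η ^ (k + 1) := pow_le_pow_of_le_one hη0.le hη1 hk
      gcongr
  · exfalso
    push Not at hgood
    have hiter : ∀ k ≤ N, ENNReal.ofReal (κ ^ k) * hm E (S 0) ≤ hm E (S k) := by
      intro k
      induction k with
      | zero => intro _; simp
      | succ k ih =>
        intro hk
        have hkN : k < N := hk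
        have ih' := ih hkN.le
        have step : ENNReal.ofReal κ * hm E (S k) ≤ hm E (S (k + 1)) := by
          refine ink_spots (rs := rs) (hSm k hkN.le) ?_ hε ?_
          · rintro y ⟨hy1, hy2⟩
            refine ⟨closedBall_subset_closedBall (by push_cast; linarith) hy1, ?_⟩
            have h3 : η ^ k * m ≤ u y := hy2
            have h4 : η ^ (k + 1) * m ≤ η ^ k * m := by
              have : η ^ (k + 1) ≤ η ^ k := pow_le_pow_of_le_one hη0.le hη1 (Nat.le_succ k)
              gcongr
            exact h4.trans h3
          · filter_upwards [density_scale (hSm k hkN.le) hε hrs0, ae_restrict_mem (hSm k hkN.le)] with x hx hxS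
            classical
            have hspec := Nat.find_spec hx
            set j := Nat.find hx with hj
            have hj0 : j ≠ 0 := by
              intro h0
              rw [h0, pow_zero, div_one] at hspec
              exact absurd hspec (not_lt.2 (hgood k hkN x hxS))
            obtain ⟨i, hi⟩ := Nat.exists_eq_succ_of_ne_zero hj0
            have hmin : ¬ (hm E (closedBall x (rs / 2 ^ i) \ S k) < ENNReal.ofReal ε * hm E (closedBall x (rs / 2 ^ i))) :=
              Nat.find_min hx (by omega)
            have hp : ∀ l : ℕ, rs / 2 ^ l ≤ rs := fun l =>
              div_le_self hrs0.le (one_le_pow₀ (by norm_num))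
            refine ⟨rs / 2 ^ i, by positivity, hp i, ?_, not_lt.1 hmin⟩
            have h2 := (hgrow k hkN.le x hxS (rs / 2 ^ j) (by positivity) (hp j) hspec (Or.inr trivial)).2
            have h3 : 2 * (rs / 2 ^ j) = rs / 2 ^ i := by
              rw [hi, Nat.succ_eq_add_one, pow_succ]; field_simp
            rw [h3] at h2
            intro y hy
            refine ⟨?_, h2 y hy⟩
            have h4 := hxS.1
            have h5 := hp i
            rw [mem_closedBall] at hy h4 ⊢
            have := dist_triangle y x z0
            push_cast
            linarith
        calc ENNReal.ofReal (κ ^ (k + 1)) * hm E (S 0)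
            = ENNReal.ofReal κ * (ENNReal.ofReal (κ ^ k) * hm E (S 0)) := by
              rw [← mul_assoc, ← ENNReal.ofReal_mul (by linarith), pow_succ']
          _ ≤ ENNReal.ofReal κ * hm E (S k) := by gcongr
          _ ≤ _ := step
    have hfin := hiter N le_rfl
    have hS0 : S 0 = closedBall z0 1 ∩ {y | m ≤ u y} := by simp [hSdef]
    have hB1 : hm E (closedBall z0 1) ≠ 0 := (measure_closedBall_pos _ _ one_pos).ne'
    have hS00 : hm E (S 0) ≠ 0 := by
      intro h0
      rw [← hS0, h0, mul_zero] at hmeas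
      exact hB1 (le_antisymm hmeas bot_le)
    have hS0t : hm E (S 0) ≠ ⊤ :=
      ((measure_mono (hSsub 0 (Nat.zero_le _))).trans_lt measure_closedBall_lt_top).ne
    have h2 : hm E (S N) ≤ ENNReal.ofReal ((2:ℝ) ^ (finrank ℝ E) * 2) * hm E (S 0) := by
      calc hm E (S N) ≤ hm E (closedBall z0 2) := measure_mono (hSsub N le_rfl)
        _ = ENNReal.ofReal ((2:ℝ) ^ (finrank ℝ E)) * hm E (closedBall z0 1) := by
          rw [Measure.addHaar_closedBall _ z0 (by norm_num), Measure.addHaar_closedBall _ z0 zero_le_one]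
          simp
        _ ≤ ENNReal.ofReal ((2:ℝ) ^ (finrank ℝ E)) * (2 * hm E (S 0)) := by
          rw [hS0]; gcongr
        _ = _ := by
          rw [ENNReal.ofReal_mul (by positivity), mul_assoc]
          simp
    have h3 := hfin.trans h2
    rw [ENNReal.mul_le_mul_iff_left hS00 hS0t] at h3
    have h4 := (ENNReal.ofReal_le_ofReal_iff (by positivity)).1 h3
    linarith

end Abstract4

section Abstract5
set_option linter.unusedSectionVars false
open Metric Filter Topology Module
open scoped ENNReal NNReal

variable {E : Type*} [NormedAddCommGroup E] [InnerProductSpace ℝ E] [FiniteDimensional ℝ E]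
  [MeasurableSpace E] [BorelSpace E]

/-- open half ball -/
def HB (e : E) (r : ℝ) : Set E := {x | ‖x‖ < r ∧ 0 < inner ℝ e x}

/-- half ball with flat boundary -/
def HBc (e : E) (r : ℝ) : Set E := {x | ‖x‖ < r ∧ 0 ≤ inner ℝ e x}

theorem HB_sub (e : E) (r : ℝ) : HB e r ⊆ HBc e r := fun _ hx => ⟨hx.1, hx.2.le⟩

theorem inner_self_unit {e : E} (he : ‖e‖ = 1) : inner ℝ e e = (1:ℝ) := by
  rw [real_inner_self_eq_norm_sq, he]; norm_num

theorem inner_le_norm_unit {e : E} (he : ‖e‖ = 1) (x : E) : inner ℝ e x ≤ ‖x‖ := by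
  have := real_inner_le_norm e x
  rwa [he, one_mul] at this

theorem proj_norm_le {e : E} (he : ‖e‖ = 1) (x : E) : ‖x - (inner ℝ e x : ℝ) • e‖ ≤ ‖x‖ := by
  have h : ‖x - (inner ℝ e x : ℝ) • e‖ ^ 2 = ‖x‖ ^ 2 - (inner ℝ e x : ℝ) ^ 2 := by
    rw [norm_sub_sq_real, inner_smul_right, norm_smul, he, real_inner_comm, Real.norm_eq_abs,
      mul_one, sq_abs]
    ring
  have := sq_nonneg (inner ℝ e x : ℝ)
  exact le_of_sq_le_sq (by linarith) (norm_nonneg _)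

def CA (K : ℝ) : ℝ := 48 * K * Real.exp (-(3 * K)) / (Real.exp (-(3 * K)) - Real.exp (-(12 * K)))

theorem CA_pos {K : ℝ} (hK : 1 ≤ K) : 0 < CA K := by
  have : Real.exp (-(12 * K)) < Real.exp (-(3 * K)) := Real.exp_lt_exp.2 (by linarith)
  have h2 := Real.exp_pos (-(3 * K))
  unfold CA
  apply div_pos
  · positivity
  · linarith

theorem boundary_lip {e : E} (he : ‖e‖ = 1) {K : ℝ} (hK : 1 ≤ K) {v : E → ℝ} {M : ℝ} (hM : 0 < M)
    (hv : ContinuousOn v (HBc e 1)) (hS : SSol K (HB e 1) v) (hlow : ∀ x ∈ HBc e 1, -M ≤ v x)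
    (h0 : ∀ x ∈ HBc e 1, inner ℝ e x = (0:ℝ) → 0 ≤ v x) :
    ∀ x ∈ HBc e (1/4), -(CA K * M) * inner ℝ e x ≤ v x := by
  rintro x ⟨hx1, hx2⟩
  set t : ℝ := inner ℝ e x with ht
  have ht4 : t < 1/4 := (inner_le_norm_unit he x).trans_lt hx1
  set z : E := x - (t + 1/4) • e with hz
  have hee := inner_self_unit he
  have hez : ∀ y : E, inner ℝ e (y - z) = (inner ℝ e y : ℝ) + 1/4 := by
    intro y
    rw [hz, inner_sub_right, inner_sub_right, inner_smul_right, hee, ← ht]; ring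
  have hzn : ‖z‖ < 1/2 := by
    have : z = (x - t • e) - (1/4:ℝ) • e := by rw [hz, add_smul]; abel
    rw [this]
    have h1 := norm_sub_le (x - t • e) ((1/4:ℝ) • e)
    have h2 := proj_norm_le he x
    rw [norm_smul, he] at h1
    norm_num at h1
    linarith
  have hge : ∀ y : E, 0 ≤ (inner ℝ e y : ℝ) → 1/4 ≤ ‖y - z‖ := by
    intro y hy
    have := inner_le_norm_unit he (y - z)
    rw [hez] at this; linarith
  set Kc : Set E := closedBall z (1/2) ∩ {y | 0 ≤ (inner ℝ e y : ℝ)} with hKc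
  set Ω : Set E := ball z (1/2) ∩ {y | 0 < (inner ℝ e y : ℝ)} with hΩ
  have hcont : Continuous fun y : E => (inner ℝ e y : ℝ) := by fun_prop
  have hKcH : Kc ⊆ HBc e 1 := by
    rintro y ⟨hy1, hy2⟩
    refine ⟨?_, hy2⟩
    have h1 : ‖y - z‖ ≤ 1/2 := by simpa [dist_eq_norm] using hy1
    have h2 := norm_add_le (y - z) z
    rw [sub_add_cancel] at h2
    linarith
  have hΩK : Ω ⊆ Kc := fun y hy => ⟨ball_subset_closedBall hy.1, (show 0 < (inner ℝ e y : ℝ) from hy.2).le⟩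
  have hd : 0 < Real.exp (-(3 * K)) - Real.exp (-(12 * K)) := by
    have : Real.exp (-(12 * K)) < Real.exp (-(3 * K)) := Real.exp_lt_exp.2 (by linarith)
    linarith
  set k := M / (Real.exp (-(3 * K)) - Real.exp (-(12 * K))) with hk
  have hk0 : 0 < k := div_pos hM hd
  have key := compare_exp (K := K) (u := v) (Kc := Kc) (Ω := Ω)
    ((isCompact_closedBall z (1/2)).inter_right (isClosed_le continuous_const hcont))
    (isOpen_ball.inter (isOpen_lt continuous_const hcont)) hΩK (hv.mono hKcH)
    (hS.mono (fun y hy => ⟨(hKcH (hΩK hy)).1, hy.2⟩)) z (γ := 48 * K) (k := k)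
    (Real.exp (-(3 * K))) (by linarith) hk0
    (by
      intro y hy
      have h1 := hge y (le_of_lt hy.2)
      have : (1/4:ℝ)^2 ≤ ‖y - z‖^2 := by gcongr
      nlinarith)
    (by
      intro y hy hyn
      by_cases hy0 : (inner ℝ e y : ℝ) = 0
      · have h1 := hge y hy0.ge
        have h2 : (1/4:ℝ)^2 ≤ ‖y - z‖^2 := by gcongr
        have h3 : Real.exp (-(48 * K) * ‖y - z‖^2) ≤ Real.exp (-(3 * K)) :=
          Real.exp_le_exp.2 (by nlinarith)
        have h4 := h0 y (hKcH hy) hy0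
        nlinarith
      · have hpos : 0 < (inner ℝ e y : ℝ) := lt_of_le_of_ne hy.2 (Ne.symm hy0)
        have h1 : ¬ dist y z < 1/2 := fun h => hyn ⟨h, hpos⟩
        have h2 : dist y z ≤ 1/2 := hy.1
        have h3 : ‖y - z‖ = 1/2 := by rw [← dist_eq_norm]; linarith
        rw [h3]
        have h5 : (-(48 * K) * (1/2:ℝ)^2) = -(12 * K) := by ring
        rw [h5]
        have h6 : k * (Real.exp (-(12 * K)) - Real.exp (-(3 * K))) = -M := by
          have h7 := div_mul_cancel₀ M hd.ne'
          rw [← hk] at h7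
          linarith
        rw [h6]
        exact hlow y (hKcH hy))
  have hxz : ‖x - z‖ = t + 1/4 := by
    rw [hz, sub_sub_cancel, norm_smul, he, mul_one, Real.norm_of_nonneg (by linarith)]
  have hxK : x ∈ Kc := by
    refine ⟨?_, hx2⟩
    rw [mem_closedBall, dist_eq_norm, hxz]; linarith
  have h1 := key x hxK
  rw [hxz] at h1
  refine le_trans ?_ h1
  have h2 : Real.exp (-(48 * K) * (t + 1/4)^2)
      = Real.exp (-(3*K)) * Real.exp (-(48 * K * (t^2 + t/2))) := by
    rw [← Real.exp_add]; congr 1; ring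
  have h3 := Real.add_one_le_exp (-(48 * K * (t^2 + t/2)))
  have h4 : CA K * M = k * (48 * K * Real.exp (-(3*K))) := by
    rw [hk, CA]; ring
  rw [h4, h2]
  have hE := Real.exp_pos (-(3*K))
  have h5 : Real.exp (-(3*K)) * (-(48 * K * t)) ≤
     Real.exp (-(3*K)) * Real.exp (-(48 * K * (t^2 + t/2))) - Real.exp (-(3*K)) := by
    have : -(48 * K * t) ≤ Real.exp (-(48 * K * (t^2 + t/2))) - 1 := by
      have h6 : t^2 + t/2 ≤ t := by nlinarith
      have h7 : 48 * K * (t^2 + t/2) ≤ 48 * K * t := by gcongr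
      linarith
    nlinarith
  have := mul_le_mul_of_nonneg_left h5 hk0.le
  nlinarith

/-- exponential constants for the interior Hopf estimate -/
theorem hopf_s4 {e : E} (he : ‖e‖ = 1) {K : ℝ} (hK : 1 ≤ K) : ∃ c : ℝ, 0 < c ∧
    ∀ (w : E → ℝ) (m : ℝ), 0 < m → ContinuousOn w (HBc e 20) → SSol K (HB e 20) w →
      (∀ x ∈ HBc e 20, 0 ≤ w x) →
      hm E (closedBall ((8:ℝ) • e) 1) ≤ 2 * hm E (closedBall ((8:ℝ) • e) 1 ∩ {y | m ≤ w y}) →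
      ∀ x ∈ HBc e (1/2), c * m * inner ℝ e x ≤ w x := by
  obtain ⟨c, hc, hWH⟩ := weak_harnack E hK
  have hee := inner_self_unit he
  set γ : ℝ := 4 * K / (1/2:ℝ)^2 with hγ
  have hγ0 : 0 < γ := by positivity
  refine ⟨c * (Real.exp (-γ * 8^2) * γ * 8), by positivity, ?_⟩
  intro w m hm0 hw hS hpos hmeas x hx
  have h8 : ‖(8:ℝ) • e‖ = 8 := by rw [norm_smul, he]; norm_num
  have hsub : closedBall ((8:ℝ) • e) 6 ⊆ HB e 20 := by
    intro y hy
    rw [mem_closedBall, dist_eq_norm] at hy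
    constructor
    · have := norm_add_le (y - (8:ℝ) • e) ((8:ℝ) • e)
      rw [sub_add_cancel, h8] at this; linarith
    · have h1 := inner_le_norm_unit he ((8:ℝ) • e - y)
      rw [inner_sub_right, inner_smul_right, hee, norm_sub_rev] at h1
      linarith
  have hW := hWH (HB e 20) w ((8:ℝ) • e) m hm0 (hw.mono (HB_sub e 20)) hS hsub
    (fun y hy => hpos y (HB_sub e 20 (hsub hy))) hmeas
  obtain ⟨hx1, hx2⟩ := hx
  set t : ℝ := inner ℝ e x with ht
  have ht4 : t < 1/2 := (inner_le_norm_unit he x).trans_lt hx1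
  set z : E := x - t • e + (8:ℝ) • e with hz
  have hez : inner ℝ e z = (8:ℝ) := by
    rw [hz, inner_add_right, inner_sub_right, inner_smul_right, inner_smul_right, hee, ← ht]; ring
  have hzn : ‖z‖ < 9 := by
    have h1 := norm_add_le (x - t • e) ((8:ℝ) • e)
    have h2 := proj_norm_le he x
    rw [h8] at h1
    linarith
  have hnorm : ∀ y, ‖y - z‖ ≤ 8 → ‖y‖ < 20 := by
    intro y hy
    have := norm_add_le (y - z) z
    rw [sub_add_cancel] at this; linarith
  have hin : ∀ y, 8 - (inner ℝ e y : ℝ) ≤ ‖y - z‖ := by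
    intro y
    have h1 := inner_le_norm_unit he (z - y)
    rw [inner_sub_right, hez, norm_sub_rev] at h1
    exact h1
  have hcb : closedBall z 8 ⊆ HBc e 20 := by
    intro y hy
    rw [mem_closedBall, dist_eq_norm] at hy
    exact ⟨hnorm y hy, by linarith [hin y]⟩
  have hob : ball z 8 ⊆ HB e 20 := by
    intro y hy
    rw [mem_ball, dist_eq_norm] at hy
    exact ⟨hnorm y hy.le, by linarith [hin y]⟩
  have hsp := spread hK (u := w) (z := z) (R := 8) (ρ := 1/2) (m := c * m) (by norm_num)
    (by positivity) (hw.mono hcb) (hS.mono hob) (fun y hy => hpos y (hcb hy))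
    (by
      intro y _ hy
      apply hW
      rw [mem_closedBall, dist_eq_norm] at hy ⊢
      have h2 := proj_norm_le he x
      have h3 : y - (8:ℝ) • e = (y - z) + (x - t • e) := by rw [hz]; abel
      rw [h3]
      have := norm_add_le (y - z) (x - t • e)
      linarith)
  have hxz : ‖x - z‖ = 8 - t := by
    have : x - z = -((8 - t) • e) := by rw [hz, sub_smul]; abel
    rw [this, norm_neg, norm_smul, he, mul_one, Real.norm_of_nonneg (by linarith)]
  have h1 := hsp x (by rw [mem_closedBall, dist_eq_norm, hxz]; linarith)
  rw [hxz] at h1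
  refine le_trans ?_ h1
  have h2 : Real.exp (-γ * (8 - t)^2) = Real.exp (-γ * 8^2) * Real.exp (γ * (16 * t - t^2)) := by
    rw [← Real.exp_add]; congr 1; ring
  have h3 := Real.add_one_le_exp (γ * (16 * t - t^2))
  have hE := Real.exp_pos (-γ * 8^2)
  have h4 : γ * (8 * t) ≤ γ * (16 * t - t^2) := by
    apply mul_le_mul_of_nonneg_left _ hγ0.le; nlinarith
  have h5 : Real.exp (-γ * 8^2) * (γ * (8 * t)) ≤ Real.exp (-γ * 8^2) * (Real.exp (γ * (16 * t - t^2)) - 1) :=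
    mul_le_mul_of_nonneg_left (by linarith) hE.le
  have h6 : c * m * (Real.exp (-γ * 8^2) * (γ * (8 * t))) ≤
      c * m * (Real.exp (-γ * 8^2) * (Real.exp (γ * (16 * t - t^2)) - 1)) :=
    mul_le_mul_of_nonneg_left h5 (by positivity)
  rw [h2]
  calc _ = c * m * (Real.exp (-γ * 8^2) * (γ * (8 * t))) := by ring
    _ ≤ _ := h6
    _ = _ := by ring

theorem dichotomy {e : E} (he : ‖e‖ = 1) {K : ℝ} (hK : 1 ≤ K) : ∃ c : ℝ, 0 < c ∧ c ≤ 1/2 ∧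
    ∀ (w : E → ℝ) (β : ℝ), 0 < β → ContinuousOn w (HBc e 20) → SSol K (HB e 20) w →
      SSol K (HB e 20) (fun x => - w x) →
      (∀ x ∈ HBc e 20, 0 ≤ w x) → (∀ x ∈ HBc e 20, w x ≤ β * inner ℝ e x) →
      (∀ x ∈ HBc e (1/2), c * β * inner ℝ e x ≤ w x) ∨
      (∀ x ∈ HBc e (1/2), w x ≤ (1 - c) * β * inner ℝ e x) := by
  obtain ⟨c, hc, H⟩ := hopf_s4 he hK
  have hee := inner_self_unit he
  refine ⟨min c (1/2), by positivity, min_le_right _ _, ?_⟩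
  intro w β hβ hw hS hS' hpos hle
  have hmono : ∀ x ∈ HBc e (1/2), min c (1/2) * β * inner ℝ e x ≤ c * β * inner ℝ e x := by
    intro x hx
    exact mul_le_mul_of_nonneg_right (mul_le_mul_of_nonneg_right (min_le_left _ _) hβ.le) hx.2
  set B := closedBall ((8:ℝ) • e) 1 with hB
  have hcover : B ⊆ (B ∩ {y | β ≤ w y}) ∪ (B ∩ {y | β ≤ β * inner ℝ e y - w y}) := by
    intro y hy
    have hy' := hy
    rw [hB, mem_closedBall, dist_eq_norm] at hy'
    have h1 := inner_le_norm_unit he ((8:ℝ) • e - y)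
    rw [inner_sub_right, inner_smul_right, hee, norm_sub_rev] at h1
    by_cases h : β ≤ w y
    · exact Or.inl ⟨hy, h⟩
    · refine Or.inr ⟨hy, ?_⟩
      push Not at h
      show β ≤ β * inner ℝ e y - w y
      nlinarith
  have hmle := (measure_mono (μ := hm E) hcover).trans (measure_union_le _ _)
  rcases le_total (hm E (B ∩ {y | β ≤ w y})) (hm E (B ∩ {y | β ≤ β * inner ℝ e y - w y})) with h | h
  · right
    have hh : hm E B ≤ 2 * hm E (B ∩ {y | β ≤ β * inner ℝ e y - w y}) := by
      rw [two_mul]; exact hmle.trans (by gcongr)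
    have hSS : SSol K (HB e 20) (fun x => β * inner ℝ e x - w x) := by
      have := hS'.add_linear (β • e)
      have heq : (fun x => β * inner ℝ e x - w x) = fun x => -w x + inner ℝ (β • e) x := by
        funext x; rw [inner_smul_left]; simp; ring
      rw [heq]; exact this
    have := H (fun x => β * inner ℝ e x - w x) β hβ (by fun_prop) hSS
      (fun x hx => by linarith [hle x hx]) hh
    intro x hx
    have h1 := this x hx
    have h2 := hmono x hx
    linarith
  · left
    have hh : hm E B ≤ 2 * hm E (B ∩ {y | β ≤ w y}) := by
      rw [two_mul]; exact hmle.trans (by gcongr)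
    intro x hx
    exact (hmono x hx).trans (H w β hβ hw hS hpos hh x hx)

end Abstract5

section Abstract6
set_option linter.unusedSectionVars false
open Metric Filter Topology Module
open scoped ENNReal NNReal

variable {E : Type*} [NormedAddCommGroup E] [InnerProductSpace ℝ E] [FiniteDimensional ℝ E]
  [MeasurableSpace E] [BorelSpace E]

theorem HBc_smul {e : E} {s r : ℝ} (hs : 0 < s) {x : E} : s • x ∈ HBc e (s * r) ↔ x ∈ HBc e r := by
  simp only [HBc, mem_ofPred_eq, norm_smul, inner_smul_right, Real.norm_of_nonneg hs.le]
  rw [mul_lt_mul_iff_right₀ hs, mul_nonneg_iff_of_pos_left hs]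

theorem HB_smul {e : E} {s r : ℝ} (hs : 0 < s) {x : E} : s • x ∈ HB e (s * r) ↔ x ∈ HB e r := by
  simp only [HB, mem_ofPred_eq, norm_smul, inner_smul_right, Real.norm_of_nonneg hs.le]
  rw [mul_lt_mul_iff_right₀ hs, mul_pos_iff_of_pos_left hs]

theorem improve {e : E} (he : ‖e‖ = 1) {K : ℝ} (hK : 1 ≤ K) : ∃ c : ℝ, 0 < c ∧ c ≤ 1/2 ∧
    ∀ (u : E → ℝ) (r a b : ℝ), 0 < r → a < b → ContinuousOn u (HBc e r) → SSol K (HB e r) u →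
      SSol K (HB e r) (fun x => - u x) →
      (∀ x ∈ HBc e r, a * inner ℝ e x ≤ u x ∧ u x ≤ b * inner ℝ e x) →
      ∃ a' b' : ℝ, a ≤ a' ∧ b' ≤ b ∧ b' - a' = (1 - c) * (b - a) ∧
        ∀ x ∈ HBc e (r / 40), a' * inner ℝ e x ≤ u x ∧ u x ≤ b' * inner ℝ e x := by
  obtain ⟨c, hc, hc2, H⟩ := dichotomy he hK
  refine ⟨c, hc, hc2, ?_⟩
  intro u r a b hr hab hu hS hS' hb
  set s := r / 20 with hsd
  have hs : 0 < s := by positivity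
  have hr20 : r = s * 20 := by rw [hsd]; ring
  have hr40 : r / 40 = s * (1/2) := by rw [hsd]; ring
  have hba : 0 < b - a := by linarith
  have hmem : ∀ x ∈ HBc e 20, s • x ∈ HBc e r := by
    intro x hx; rw [hr20]; exact (HBc_smul hs).2 hx
  have hmem' : HB e 20 ⊆ {x | s • x ∈ HB e r} := by
    intro x hx
    show s • x ∈ HB e r
    rw [hr20]; exact (HB_smul hs).2 hx
  have hc1 : ContinuousOn (fun x => u (s • x)) (HBc e 20) :=
    hu.comp (by fun_prop) hmem
  have hw := H (fun x => u (s • x) + inner ℝ (-(a * s) • e) x) ((b - a) * s) (by positivity)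
    (hc1.add (by fun_prop)) (((hS.scale hs).mono hmem').add_linear _)
    (by
      have := ((hS'.scale hs).mono hmem').add_linear ((a * s) • e)
      convert this using 2 with x
      rw [inner_smul_left, inner_smul_left]; simp; ring)
    (by
      intro x hx
      have := (hb _ (hmem x hx)).1
      rw [inner_smul_right] at this
      rw [inner_smul_left]; simp; linarith)
    (by
      intro x hx
      have := (hb _ (hmem x hx)).2
      rw [inner_smul_right] at this
      rw [inner_smul_left]; simp; linarith)
  have hsub : ∀ y ∈ HBc e (r / 40), y ∈ HBc e r := by
    intro y hy; exact ⟨hy.1.trans (by linarith), hy.2⟩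
  have hback : ∀ y ∈ HBc e (r / 40), s⁻¹ • y ∈ HBc e (1/2) := by
    intro y hy
    rw [← HBc_smul hs, ← hr40, smul_inv_smul₀ hs.ne']; exact hy
  have hsi : ∀ q : ℝ, s * (s⁻¹ * q) = q := fun q => mul_inv_cancel_left₀ hs.ne' q
  rcases hw with h | h
  · refine ⟨a + c * (b - a), b, by nlinarith, le_rfl, by ring, ?_⟩
    intro y hy
    refine ⟨?_, (hb y (hsub y hy)).2⟩
    have h1 := h _ (hback y hy)
    rw [smul_inv_smul₀ hs.ne', inner_smul_left, inner_smul_right] at h1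
    simp only [conj_trivial] at h1
    have h2 := hsi (inner ℝ e y)
    have h3 : c * ((b - a) * s) * (s⁻¹ * inner ℝ e y) = c * (b - a) * inner ℝ e y := by
      linear_combination (c * (b - a)) * h2
    have h4 : -(a * s) * (s⁻¹ * inner ℝ e y) = - (a * inner ℝ e y) := by
      linear_combination (-a) * h2
    rw [h3, h4] at h1
    linarith
  · refine ⟨a, b - c * (b - a), le_rfl, by nlinarith, by ring, ?_⟩
    intro y hy
    refine ⟨(hb y (hsub y hy)).1, ?_⟩
    have h1 := h _ (hback y hy)
    rw [smul_inv_smul₀ hs.ne', inner_smul_left, inner_smul_right] at h1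
    simp only [conj_trivial] at h1
    have h2 := hsi (inner ℝ e y)
    have h3 : (1 - c) * ((b - a) * s) * (s⁻¹ * inner ℝ e y) = (1 - c) * (b - a) * inner ℝ e y := by
      linear_combination ((1 - c) * (b - a)) * h2
    have h4 : -(a * s) * (s⁻¹ * inner ℝ e y) = - (a * inner ℝ e y) := by
      linear_combination (-a) * h2
    rw [h3, h4] at h1
    linarith

theorem boundary_main {e : E} (he : ‖e‖ = 1) {K : ℝ} (hK : 1 ≤ K) :
    ∃ α C : ℝ, 0 < α ∧ α < 1 ∧ 0 < C ∧
    ∀ (u : E → ℝ) (M : ℝ), 0 < M → ContinuousOn u (HBc e 1) → SSol K (HB e 1) u →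
      SSol K (HB e 1) (fun x => - u x) → (∀ x ∈ HBc e 1, |u x| ≤ M) →
      (∀ x ∈ HBc e 1, inner ℝ e x = (0:ℝ) → u x = 0) →
      ∃ a : ℝ, |a| ≤ C * M ∧ ∀ x ∈ HB e 1, |u x - a * inner ℝ e x| ≤ C * ‖x‖ ^ (1 + α) * M := by
  obtain ⟨c, hc, hc2, H⟩ := improve he hK
  set θ := 1 - c with hθ
  have hθ0 : 1/2 ≤ θ := by linarith
  have hθ1 : θ < 1 := by linarith
  have hθp : 0 < θ := by linarith
  set σ : ℝ := 1/40 with hσ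
  have hσ0 : 0 < σ := by norm_num [hσ]
  have hσ1 : σ < 1 := by norm_num [hσ]
  have hlσ : Real.log σ < 0 := Real.log_neg hσ0 hσ1
  set α := Real.log θ / Real.log σ with hα
  have hα0 : 0 < α := div_pos_of_neg_of_neg (Real.log_neg hθp hθ1) hlσ
  have hα1 : α < 1 := by
    rw [hα, div_lt_one_of_neg hlσ]
    exact Real.log_lt_log hσ0 (by rw [hσ]; linarith)
  have hσα : σ ^ α = θ := by
    rw [Real.rpow_def_of_pos hσ0, hα, mul_div_cancel₀ _ hlσ.ne, Real.exp_log hθp]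
  set C0 := CA K with hC0
  have hC0p : 0 < C0 := CA_pos hK
  refine ⟨α, 64 * (1 + C0), hα0, hα1, by positivity, ?_⟩
  intro u M hM hu hS hS' hbd h0
  have hee := inner_self_unit he
  have hl1 := boundary_lip he hK hM hu hS (fun x hx => (abs_le.1 (hbd x hx)).1)
    (fun x hx h => (h0 x hx h).ge)
  have hl2 := boundary_lip he hK hM hu.neg hS'
    (fun x hx => by have := (abs_le.1 (hbd x hx)).2; simp only [Pi.neg_apply]; linarith)
    (fun x hx h => by simp only [Pi.neg_apply]; rw [h0 x hx h]; simp)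
  set D := 2 * C0 * M with hD
  have hDp : 0 < D := by positivity
  have hP : ∀ k : ℕ, ∃ a b : ℝ, -(C0 * M) ≤ a ∧ b ≤ C0 * M ∧ b - a = θ ^ k * D ∧
      ∀ x ∈ HBc e (1/4 * σ ^ k), a * inner ℝ e x ≤ u x ∧ u x ≤ b * inner ℝ e x := by
    intro k
    induction k with
    | zero =>
      refine ⟨-(C0 * M), C0 * M, le_rfl, le_rfl, by rw [hD]; ring, ?_⟩
      intro x hx
      rw [pow_zero, mul_one] at hx
      have h1 := hl1 x hx
      have h2 := hl2 x hx
      simp only [Pi.neg_apply] at h2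
      exact ⟨h1, by linarith⟩
    | succ k ih =>
      obtain ⟨a, b, ha, hb, hab, hx⟩ := ih
      have hr0 : 0 < 1/4 * σ ^ k := by positivity
      have hr1 : 1/4 * σ ^ k ≤ 1 := by
        have : σ ^ k ≤ 1 := pow_le_one₀ hσ0.le hσ1.le
        linarith
      have hpos : 0 < θ ^ k * D := by positivity
      obtain ⟨a', b', h1, h2, h3, h4⟩ := H u (1/4 * σ ^ k) a b hr0 (by linarith)
        (hu.mono fun x hx => ⟨hx.1.trans_le hr1, hx.2⟩)
        (hS.mono fun x hx => ⟨hx.1.trans_le hr1, hx.2⟩)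
        (hS'.mono fun x hx => ⟨hx.1.trans_le hr1, hx.2⟩) hx
      refine ⟨a', b', ha.trans h1, h2.trans hb, by rw [h3, hab]; ring, ?_⟩
      have : 1/4 * σ ^ (k+1) = 1/4 * σ ^ k / 40 := by rw [pow_succ, hσ]; ring
      rw [this]; exact h4
  set S : Set ℝ := {a' | ∃ r : ℝ, 0 < r ∧ ∀ x ∈ HBc e r, a' * inner ℝ e x ≤ u x} with hSdef
  have hup : ∀ (r b : ℝ), 0 < r → (∀ x ∈ HBc e r, u x ≤ b * inner ℝ e x) → ∀ a' ∈ S, a' ≤ b := by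
    rintro r b hr hb a' ⟨r', hr', ha'⟩
    set t := min r r' / 2 with ht
    have hm0 : 0 < min r r' := lt_min hr hr'
    have ht0 : 0 < t := by positivity
    have htn : ‖t • e‖ = t := by rw [norm_smul, he, mul_one, Real.norm_of_nonneg ht0.le]
    have hti : inner ℝ e (t • e) = t := by rw [inner_smul_right, hee, mul_one]
    have e1 := ha' (t • e) ⟨by rw [htn]; linarith [min_le_right r r'], by rw [hti]; exact ht0.le⟩
    have e2 := hb (t • e) ⟨by rw [htn]; linarith [min_le_left r r'], by rw [hti]; exact ht0.le⟩
    rw [hti] at e1 e2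
    exact le_of_mul_le_mul_right (e1.trans e2) ht0
  set A := sSup S with hA
  have hrp : ∀ k : ℕ, 0 < 1/4 * σ ^ k := fun k => by positivity
  have hmem : ∀ k a b, (∀ x ∈ HBc e (1/4 * σ ^ k), a * inner ℝ e x ≤ u x ∧ u x ≤ b * inner ℝ e x) →
      a ≤ A ∧ A ≤ b := by
    intro k a b h
    have haS : a ∈ S := ⟨_, hrp k, fun x hx => (h x hx).1⟩
    have hbS := hup _ b (hrp k) (fun x hx => (h x hx).2)
    exact ⟨le_csSup ⟨b, hbS⟩ haS, csSup_le ⟨a, haS⟩ hbS⟩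
  have hAbd : |A| ≤ C0 * M := by
    obtain ⟨a, b, ha, hb, -, h⟩ := hP 0
    obtain ⟨h1, h2⟩ := hmem 0 a b h
    exact abs_le.2 ⟨by linarith, by linarith⟩
  refine ⟨A, ?_, ?_⟩
  · nlinarith
  intro x hx
  have hxn : 0 ≤ (inner ℝ e x : ℝ) := hx.2.le
  have hxle := inner_le_norm_unit he x
  have hx0 : 0 < ‖x‖ := hx.2.trans_le hxle
  have hx1 : ‖x‖ < 1 := hx.1
  rcases le_or_gt ‖x‖ (1/8) with h8 | h8
  · obtain ⟨k, hk1, hk2⟩ := exists_nat_pow_near_of_lt_one (x := 8 * ‖x‖) (y := σ)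
      (by positivity) (by linarith) hσ0 hσ1
    obtain ⟨a, b, -, -, hab, h⟩ := hP k
    obtain ⟨h1, h2⟩ := hmem k a b h
    obtain ⟨h3, h4⟩ := h x ⟨by linarith [hrp k], hxn⟩
    have h5 : |u x - A * inner ℝ e x| ≤ (b - a) * inner ℝ e x := by
      rw [abs_le]; constructor <;> nlinarith
    have h6 : θ ^ (k+1) ≤ 8 * ‖x‖ ^ α := by
      calc θ ^ (k+1) = (σ ^ (k+1)) ^ α := by
            rw [← hσα, ← Real.rpow_natCast, ← Real.rpow_natCast, ← Real.rpow_mul hσ0.le,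
              ← Real.rpow_mul hσ0.le, mul_comm]
        _ ≤ (8 * ‖x‖) ^ α := Real.rpow_le_rpow (by positivity) hk1.le hα0.le
        _ = 8 ^ α * ‖x‖ ^ α := Real.mul_rpow (by norm_num) hx0.le
        _ ≤ 8 * ‖x‖ ^ α := by
            gcongr
            calc (8:ℝ) ^ α ≤ 8 ^ (1:ℝ) := Real.rpow_le_rpow_of_exponent_le (by norm_num) hα1.le
              _ = 8 := Real.rpow_one 8
    have h7 : θ ^ k ≤ 16 * ‖x‖ ^ α := by
      rw [pow_succ] at h6
      have : 0 < θ ^ k := by positivity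
      nlinarith
    rw [Real.rpow_add hx0, Real.rpow_one]
    have hxa : 0 < ‖x‖ ^ α := Real.rpow_pos_of_pos hx0 α
    calc _ ≤ (b - a) * inner ℝ e x := h5
      _ = θ ^ k * D * inner ℝ e x := by rw [hab]
      _ ≤ (16 * ‖x‖ ^ α) * D * ‖x‖ := by gcongr
      _ = 32 * C0 * (‖x‖ * ‖x‖ ^ α) * M := by rw [hD]; ring
      _ ≤ 64 * (1 + C0) * (‖x‖ * ‖x‖ ^ α) * M := by gcongr <;> linarith
  · have h1 : (1/64:ℝ) ≤ ‖x‖ ^ (1 + α) := by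
      calc (1/64:ℝ) = (1/8)^2 := by norm_num
        _ ≤ ‖x‖ ^ 2 := by gcongr
        _ = ‖x‖ ^ (2:ℝ) := (Real.rpow_two _).symm
        _ ≤ ‖x‖ ^ (1 + α) := Real.rpow_le_rpow_of_exponent_ge hx0 hx1.le (by linarith)
    have h2 := hbd x (HB_sub e 1 hx)
    have h3 : |A * inner ℝ e x| ≤ C0 * M := by
      rw [abs_mul, abs_of_nonneg hxn]
      calc _ ≤ C0 * M * 1 := by gcongr; linarith
        _ = _ := mul_one _
    have h4 := abs_sub (u x) (A * inner ℝ e x)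
    calc _ ≤ (1 + C0) * M := by linarith
      _ = 64 * (1 + C0) * (1/64) * M := by ring
      _ ≤ _ := by gcongr

end Abstract6

section Bridge
open Metric Filter Topology Module

theorem hess_quad {n : ℕ} (p e x : EucSp n) (c1 c2 : ℝ) :
    hessianMatrix n (fun y => inner ℝ p (y - x) + c1 * (inner ℝ e (y - x))^2 + c2 * ‖y - x‖^2) x
      = (2 * c1) • Matrix.vecMulVec e.ofLp e.ofLp + (2 * c2) • (1 : Matrix (Fin n) (Fin n) ℝ) := by
  have h1 : fderiv ℝ (fun y : EucSp n => inner ℝ p (y - x) + c1 * (inner ℝ e (y - x))^2 + c2 * ‖y - x‖^2)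
      = fun y => innerSL ℝ p + (2 * c1 * inner ℝ e (y - x)) • innerSL ℝ e
        + (2 * c2) • innerSL ℝ (y - x) := by
    funext y
    have hid : HasFDerivAt (fun y : EucSp n => y - x) (ContinuousLinearMap.id ℝ _) y :=
      (hasFDerivAt_id y).sub_const x
    have hp : HasFDerivAt (fun y : EucSp n => inner ℝ p (y - x)) (innerSL ℝ p) y := by
      exact (innerSL ℝ p).hasFDerivAt.comp y hid
    have he : HasFDerivAt (fun y : EucSp n => inner ℝ e (y - x)) (innerSL ℝ e) y := by
      exact (innerSL ℝ e).hasFDerivAt.comp y hid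
    have h := (hp.add ((he.pow 2).const_mul c1)).add ((hid.norm_sq).const_mul c2)
    refine HasFDerivAt.fderiv (h.congr_fderiv ?_)
    ext v
    simp
    ring
  ext i j
  rw [hessianMatrix, Matrix.of_apply, iteratedFDeriv_two_apply, h1]
  obtain ⟨J, hJ⟩ : ∃ J : EucSp n →L[ℝ] EucSp n →L[ℝ] ℝ, ∀ v, J v = innerSL ℝ v :=
    ⟨innerSL ℝ, fun _ => rfl⟩
  have h2 : HasFDerivAt (fun y : EucSp n => innerSL ℝ p + (2 * c1 * inner ℝ e (y - x)) • innerSL ℝ e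
        + (2 * c2) • innerSL ℝ (y - x))
      (((2 * c1) • innerSL ℝ e).smulRight (innerSL ℝ e) + (2 * c2) • J) x := by
    have hid : HasFDerivAt (fun y : EucSp n => y - x) (ContinuousLinearMap.id ℝ _) x :=
      (hasFDerivAt_id x).sub_const x
    have he : HasFDerivAt (fun y : EucSp n => inner ℝ e (y - x)) (innerSL ℝ e) x := by
      exact (innerSL ℝ e).hasFDerivAt.comp x hid
    have hi : HasFDerivAt (fun y : EucSp n => innerSL ℝ (y - x)) J x := by
      simp only [← hJ]
      exact J.hasFDerivAt.comp x hid
    exact (((he.const_mul (2 * c1)).smul_const (innerSL ℝ e)).const_add _).add (hi.const_smul (2 * c2))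
  rw [h2.fderiv]
  simp [hJ, Matrix.vecMulVec_apply, Matrix.one_apply, EuclideanSpace.inner_single_left,
    EuclideanSpace.inner_single_right]
  ring_nf
  simp [eq_comm]

theorem ell_trace {n : ℕ} {lam Lam : ℝ} {A : Matrix (Fin n) (Fin n) ℝ} (hA : IsElliptic n lam Lam A)
    (e : EucSp n) : ∃ q t : ℝ, lam * ‖e‖^2 ≤ q ∧ t ≤ n * Lam ∧ ∀ c1 c2 : ℝ,
    (A * ((2 * c1) • Matrix.vecMulVec e.ofLp e.ofLp + (2 * c2) • (1 : Matrix (Fin n) (Fin n) ℝ))).trace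
      = 2 * c1 * q + 2 * c2 * t := by
  refine ⟨e.ofLp ⬝ᵥ (A.mulVec e.ofLp), A.trace, ?_, ?_, ?_⟩
  · have := hA.2.1.dotProduct_mulVec_nonneg e.ofLp
    rw [Matrix.sub_mulVec, dotProduct_sub, Matrix.smul_mulVec, Matrix.one_mulVec, dotProduct_smul,
      star_trivial] at this
    have h2 : ‖e‖^2 = e.ofLp ⬝ᵥ e.ofLp := by
      rw [EuclideanSpace.norm_sq_eq, dotProduct]
      simp [sq]
    rw [h2]; simp at this; linarith
  · have := hA.2.2.trace_nonneg
    rw [Matrix.trace_sub, Matrix.trace_smul, Matrix.trace_one] at this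
    simp at this; linarith
  · intro c1 c2
    rw [mul_add, Matrix.trace_add, mul_smul_comm, mul_smul_comm, Matrix.trace_smul,
      Matrix.trace_smul, mul_one, Matrix.mul_vecMulVec, Matrix.trace_vecMulVec, dotProduct_comm]
    simp

theorem bridge {n : ℕ} {lam Lam : ℝ} (hlam : 0 < lam) {U : Set (EucSp n)} {u : EucSp n → ℝ}
    (h : InPucciStar n lam Lam 0 U u) :
    SSol (n * Lam / lam) U u ∧ SSol (n * Lam / lam) U (fun x => - u x) := by
  have hcd : ∀ (p e x : EucSp n) (c1 c2 : ℝ), ContDiff ℝ 2 (fun y : EucSp n =>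
      inner ℝ p (y - x) + c1 * (inner ℝ e (y - x))^2 + c2 * ‖y - x‖^2) := by
    intro p e x c1 c2
    have h0 : ContDiff ℝ 2 (fun y : EucSp n => y - x) := contDiff_id.sub contDiff_const
    exact ((contDiff_const.inner ℝ h0).add (contDiff_const.mul ((contDiff_const.inner ℝ h0).pow 2))).add
      (contDiff_const.mul (h0.norm_sq ℝ))
  constructor
  · intro x hx p e d hd hev
    obtain ⟨A, hA, htr⟩ := (h _ (hcd p e x 1 (-d))).2 x hx (by
      refine Filter.Eventually.filter_mono nhdsWithin_le_nhds ?_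
      filter_upwards [hev] with y hy
      simp
      linarith)
    rw [hess_quad] at htr
    obtain ⟨q, t, hq, ht, heq⟩ := ell_trace hA e
    rw [heq] at htr
    simp at htr
    have : d * t ≤ d * (n * Lam) := mul_le_mul_of_nonneg_left ht hd
    rw [div_mul_eq_mul_div, le_div_iff₀ hlam]
    linarith
  · intro x hx p e d hd hev
    obtain ⟨A, hA, htr⟩ := (h _ (hcd (-p) e x (-1) d)).1 x hx (by
      refine Filter.Eventually.filter_mono nhdsWithin_le_nhds ?_
      filter_upwards [hev] with y hy
      simp
      linarith)
    rw [hess_quad] at htr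
    obtain ⟨q, t, hq, ht, heq⟩ := ell_trace hA e
    rw [heq] at htr
    simp at htr
    have : d * t ≤ d * (n * Lam) := mul_le_mul_of_nonneg_left ht hd
    rw [div_mul_eq_mul_div, le_div_iff₀ hlam]
    linarith

end Bridge
/-- Lemma 2.2: pointwise boundary `C^{1,α₁}` regularity at a flat boundary. There exist
`α₁ ∈ (0,1)` and `C > 0` depending only on `n, λ, Λ` such that if `u ∈ S(λ,Λ,0)` in `B₁⁺`
is bounded, continuous up to the boundary and vanishes on `T₁`, then there is `a` with
`|a| ≤ C‖u‖_{L^∞(B₁⁺)}` and `|u(x) − a xₙ| ≤ C|x|^{1+α₁}‖u‖_{L^∞(B₁⁺)}` in `B₁⁺`. -/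
theorem stmt_4 {n : ℕ} (hn : 2 ≤ n) (lam Lam : ℝ) (hlam : 0 < lam) (hLam : lam ≤ Lam) :
    ∃ α₁ C : ℝ, 0 < α₁ ∧ α₁ < 1 ∧ 0 < C ∧
      ∀ u : EucSp n → ℝ,
        (∃ M : ℝ, ∀ x ∈ closure (upperHalfBall n 1), |u x| ≤ M) →
        ContinuousOn u (closure (upperHalfBall n 1)) →
        InPucciStar n lam Lam 0 (upperHalfBall n 1) u →
        (∀ x ∈ flatPart n 1, u x = 0) →
        ∃ a : ℝ,
          |a| ≤ C * sSup ((fun x => |u x|) '' upperHalfBall n 1) ∧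
          ∀ x ∈ upperHalfBall n 1,
            |u x - a * lastCoord n x| ≤
              C * ‖x‖ ^ (1 + α₁) * sSup ((fun x => |u x|) '' upperHalfBall n 1) := by
  have hn0 : 0 < n := by omega
  set e : EucSp n := lastBasis n with he
  have hen : ‖e‖ = 1 := by
    rw [he, lastBasis, dif_pos hn0]; simp
  have hlc : ∀ x : EucSp n, lastCoord n x = inner ℝ e x := by
    intro x
    rw [he, lastBasis, dif_pos hn0, lastCoord, dif_pos hn0, EuclideanSpace.inner_single_left]
    simp
  have hHB : upperHalfBall n 1 = HB e 1 := by
    ext x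
    simp [upperHalfBall, HB, hlc]
  have hK : (1:ℝ) ≤ n * Lam / lam := by
    rw [le_div_iff₀ hlam]
    have : (1:ℝ) ≤ n := by exact_mod_cast hn0
    nlinarith
  obtain ⟨α, C, hα0, hα1, hC, H⟩ := boundary_main hen hK
  refine ⟨α, C, hα0, hα1, hC, ?_⟩
  rintro u ⟨M0, hM0⟩ hu hP hflat
  have hcl : HBc e 1 ⊆ closure (upperHalfBall n 1) := by
    rintro x ⟨hx1, hx2⟩
    rw [hHB]
    have hc : Filter.Tendsto (fun t : ℝ => x + t • e) (nhdsWithin 0 (Ioi 0)) (nhds x) := by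
      have : Continuous fun t : ℝ => x + t • e := by fun_prop
      have h := this.tendsto 0
      simp only [zero_smul, add_zero] at h
      exact h.mono_left nhdsWithin_le_nhds
    refine mem_closure_of_tendsto hc ?_
    have h1 : ∀ᶠ t : ℝ in nhdsWithin 0 (Ioi 0), ‖x + t • e‖ < 1 :=
      hc.norm.eventually (gt_mem_nhds hx1)
    filter_upwards [h1, self_mem_nhdsWithin] with t ht ht0
    refine ⟨ht, ?_⟩
    have ht0' : 0 < t := ht0
    rw [inner_add_right, inner_smul_right, inner_self_unit hen]
    linarith
  set M := sSup ((fun x => |u x|) '' upperHalfBall n 1) with hM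
  have hbdd : BddAbove ((fun x => |u x|) '' upperHalfBall n 1) := by
    refine ⟨M0, ?_⟩
    rintro _ ⟨x, hx, rfl⟩
    exact hM0 x (subset_closure hx)
  have hle : ∀ x ∈ upperHalfBall n 1, |u x| ≤ M := fun x hx => le_csSup hbdd ⟨x, hx, rfl⟩
  have hMnn : 0 ≤ M := by
    apply Real.sSup_nonneg
    rintro _ ⟨x, hx, rfl⟩
    exact abs_nonneg _
  obtain ⟨hS1, hS2⟩ := bridge hlam hP
  rw [hHB] at hS1 hS2
  have hz : ∀ x ∈ HBc e 1, inner ℝ e x = (0:ℝ) → u x = 0 := by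
    intro x hx h0
    apply hflat
    refine ⟨by simpa using hx.1, by rw [hlc]; exact h0⟩
  rcases hMnn.eq_or_lt with h0 | hpos
  · refine ⟨0, by rw [← h0]; simp, ?_⟩
    intro x hx
    have := hle x hx
    rw [← h0] at this ⊢
    simpa using this
  · obtain ⟨a, ha, hb⟩ := H u M hpos (hu.mono hcl) hS1 hS2 (by
      intro x hx
      rcases hx.2.eq_or_lt with h | h
      · rw [hz x hx h.symm]; simpa using hMnn
      · exact hle x (by rw [hHB]; exact ⟨hx.1, h⟩)) hz
    refine ⟨a, ha, ?_⟩
    intro x hx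
    rw [hlc]
    exact hb x (by rw [← hHB]; exact hx)
end
end

section
/- Let 0 < η < 1, 0 ≤ θ < 1 with (1−θ)(1−η) ≥ 1/2, and c₀ > 0. Let ω : (0,1] → [0,∞) be nondecreasing with ω(1) ≤ c₀ and ∫₀¹ ω(r)/r dr ≤ c₀. Define the sequence (A_k)_{k≥0} by A₀ = c₀ and A_k = max(ω(η^{k−1}), θ·A_{k−1}) for k ≥ 1. Then ∑_{i=0}^{∞} A_i ≤ 6c₀. -/
open MeasureTheory Set

theorem aux_sum_le (η : ℝ) (hη0 : 0 < η) (hη1 : η < 1)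
    (ω : ℝ → ℝ) (hmono : MonotoneOn ω (Ioc 0 1)) (hnn : ∀ r ∈ Ioc (0 : ℝ) 1, 0 ≤ ω r) (n : ℕ) :
    ENNReal.ofReal ((1 - η) * ∑ k ∈ Finset.range n, ω (η ^ (k + 1))) ≤
      ∫⁻ r in Ioc (η ^ n) 1, ENNReal.ofReal (ω r / r) := by
  have hmem : ∀ k : ℕ, η ^ k ∈ Ioc (0 : ℝ) 1 := fun k =>
    ⟨pow_pos hη0 k, pow_le_one₀ hη0.le hη1.le⟩
  induction n with
  | zero => simp
  | succ n ih =>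
    have hle : η ^ (n + 1) ≤ η ^ n := pow_le_pow_of_le_one hη0.le hη1.le (Nat.le_succ n)
    have hn := hmem n
    have hn1 := hmem (n + 1)
    rw [← Ioc_union_Ioc_eq_Ioc hle hn.2, lintegral_union measurableSet_Ioc
      (Set.disjoint_left.2 fun x hx hy => absurd hx.2 (not_le.2 hy.1)),
      Finset.sum_range_succ, mul_add, add_comm]
    refine ENNReal.ofReal_add_le.trans (add_le_add ?_ ih)
    have hconst : ∫⁻ _ in Ioc (η ^ (n + 1)) (η ^ n),
        ENNReal.ofReal (ω (η ^ (n + 1)) / η ^ n) = ENNReal.ofReal ((1 - η) * ω (η ^ (n + 1))) := by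
      rw [setLIntegral_const, Real.volume_Ioc, ← ENNReal.ofReal_mul
        (div_nonneg (hnn _ hn1) hn.1.le)]
      congr 1
      have := hn.1.ne'
      field_simp
      ring
    rw [← hconst]
    refine setLIntegral_mono' measurableSet_Ioc fun x hx => ENNReal.ofReal_le_ofReal ?_
    have hx0 : 0 < x := hn1.1.trans hx.1
    have hxm : x ∈ Ioc (0 : ℝ) 1 := ⟨hx0, hx.2.trans hn.2⟩
    exact div_le_div₀ (hnn _ hxm) (hmono hn1 hxm hx.1.le) hx0 hx.2

/-- The summation estimate (4.4): if `(1−θ)(1−η) ≥ 1/2`, `ω : (0,1] → [0,∞)` is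
nondecreasing with `ω(1) ≤ c₀` and `∫₀¹ ω(r)/r dr ≤ c₀`, and `A₀ = c₀`,
`A_k = max(ω(η^{k−1}), θ A_{k−1})`, then `∑_{i=0}^∞ A_i ≤ 6c₀`. -/
theorem stmt_11 (η θ c₀ : ℝ) (hη0 : 0 < η) (hη1 : η < 1) (hθ0 : 0 ≤ θ) (hθ1 : θ < 1)
    (hηθ : 1 / 2 ≤ (1 - θ) * (1 - η)) (hc₀ : 0 < c₀)
    (ω : ℝ → ℝ) (hmono : MonotoneOn ω (Ioc 0 1)) (hnn : ∀ r ∈ Ioc (0 : ℝ) 1, 0 ≤ ω r)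
    (hω1 : ω 1 ≤ c₀)
    (hint : ∫⁻ r in Ioc (0 : ℝ) 1, ENNReal.ofReal (ω r / r) ≤ ENNReal.ofReal c₀)
    (A : ℕ → ℝ) (hA0 : A 0 = c₀)
    (hA : ∀ k : ℕ, A (k + 1) = max (ω (η ^ k)) (θ * A k)) :
    ∀ N : ℕ, ∑ i ∈ Finset.range N, A i ≤ 6 * c₀ := by
  have hmem : ∀ k : ℕ, η ^ k ∈ Ioc (0 : ℝ) 1 := fun k =>
    ⟨pow_pos hη0 k, pow_le_one₀ hη0.le hη1.le⟩
  have hkey : ∀ n : ℕ, (1 - η) * ∑ k ∈ Finset.range n, ω (η ^ (k + 1)) ≤ c₀ := fun n => by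
    rw [← ENNReal.ofReal_le_ofReal_iff hc₀.le]
    exact ((aux_sum_le η hη0 hη1 ω hmono hnn n).trans
      (lintegral_mono_set (Ioc_subset_Ioc_left (hmem n).1.le))).trans hint
  have hApos : ∀ k, 0 ≤ A k := by
    intro k
    cases k with
    | zero => rw [hA0]; exact hc₀.le
    | succ k => rw [hA]; exact le_max_of_le_left (hnn _ (hmem k))
  have hstep : ∀ k, A (k + 1) ≤ ω (η ^ k) + θ * A k := fun k => by
    rw [hA]
    exact max_le_add_of_nonneg (hnn _ (hmem k)) (mul_nonneg hθ0 (hApos k))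
  have hrec : ∀ n : ℕ, ∑ i ∈ Finset.range (n + 2), A i ≤
      2 * c₀ + ∑ k ∈ Finset.range n, ω (η ^ (k + 1)) + θ * ∑ i ∈ Finset.range (n + 1), A i := by
    intro n
    induction n with
    | zero =>
      have h := hstep 0
      simp only [pow_zero] at h
      simp [Finset.sum_range_succ]
      simp at h
      linarith
    | succ n ih =>
      rw [Finset.sum_range_succ, Finset.sum_range_succ _ n, Finset.sum_range_succ A (n + 1)]
      rw [Finset.sum_range_succ A (n + 1)] at ih
      have h : A (n + 2) ≤ ω (η ^ (n + 1)) + θ * A (n + 1) := hstep (n + 1)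
      linarith
  intro N
  have h1 : ∑ i ∈ Finset.range N, A i ≤ ∑ i ∈ Finset.range (N + 1), A i := by
    rw [Finset.sum_range_succ]; linarith [hApos N]
  have h2 : ∑ i ∈ Finset.range (N + 1), A i ≤ ∑ i ∈ Finset.range (N + 2), A i := by
    rw [Finset.sum_range_succ _ (N + 1)]; linarith [hApos (N + 1)]
  have h3 := hrec N
  have h4 := hkey N
  refine h1.trans ?_
  have hS0 : 0 ≤ ∑ i ∈ Finset.range (N + 1), A i := Finset.sum_nonneg fun i _ => hApos i
  generalize ∑ i ∈ Finset.range (N + 1), A i = S at *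
  generalize ∑ k ∈ Finset.range N, ω (η ^ (k + 1)) = W at *
  have h5 : (1 - θ) * S ≤ 2 * c₀ + W := by linarith
  have h6 := mul_le_mul_of_nonneg_left h5 (sub_nonneg.2 hη1.le)
  have h7 := mul_le_mul_of_nonneg_right hηθ hS0
  nlinarith [mul_pos hη0 hc₀]
end

section
/- Let 0 < η < 1/4 and 0 < μ < 1/4, and let β > 0 be defined by η^β = 1 − μ. Let 0 ≤ θ ≤ (1−μ)/2, c₀ > 0 and C̄ > 0. Let σ : (0,1] → [0,∞) be nondecreasing with σ(1) ≤ c₀ and s^β · ∫_s^1 σ(t)/t^{1+β} dt ≤ c₀ for all s ∈ (0,1). Define A₀ = c₀ and A_k = max(σ(η^{k−1}), θ·A_{k−1}) for k ≥ 1, and let (a_k)_{k≥0} be any sequence of nonnegative reals with a₀ = 0 and a_k ≤ (1−μ)·a_{k−1} + C̄·A_{k−1} for all k ≥ 1. Then for every k ≥ 1: a_k ≤ (6C̄/((1−μ)³(1−η))) · (c₀·η^{kβ} + η^{kβ}·∫_{η^k}^1 σ(t)/t^{1+β} dt); in particular a_k ≤ 12·C̄·c₀/((1−μ)³(1−η))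 for all k ≥ 0. -/
open MeasureTheory Set

lemma aux_integrable (σ : ℝ → ℝ) (hmono : MonotoneOn σ (Ioc 0 1)) (β s : ℝ) (hs : 0 < s) :
    IntegrableOn (fun t => σ t / t ^ (1 + β)) (Ioc s 1) := by
  have h1 : IntegrableOn σ (Icc s 1) :=
    MonotoneOn.integrableOn_isCompact isCompact_Icc
      (hmono.mono (fun x hx => ⟨lt_of_lt_of_le hs hx.1, hx.2⟩))
  have hc : ContinuousOn (fun t : ℝ => (t ^ (1 + β))⁻¹) (Icc s 1) := by
    intro t ht
    have ht0 : 0 < t := lt_of_lt_of_le hs ht.1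
    exact ((Real.continuousAt_rpow_const t (1 + β) (Or.inl ht0.ne')).inv₀
      (Real.rpow_pos_of_pos ht0 _).ne').continuousWithinAt
  have h2 := h1.mul_continuousOn hc isCompact_Icc
  simp only [div_eq_mul_inv]
  exact h2.mono_set Ioc_subset_Icc_self

lemma aux_piece (η β : ℝ) (hη0 : 0 < η) (hη1 : η < 1) (hβ : 0 < β)
    (σ : ℝ → ℝ) (hmono : MonotoneOn σ (Ioc 0 1)) (hnn : ∀ r ∈ Ioc (0 : ℝ) 1, 0 ≤ σ r) (k : ℕ) :
    σ (η ^ (k + 1)) * (1 - η) ≤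
      (η ^ β) ^ k * ∫ t in Ioc (η ^ (k + 1)) (η ^ k), σ t / t ^ (1 + β) := by
  have hp : 0 < η ^ (k + 1) := pow_pos hη0 _
  have hpk : 0 < η ^ k := pow_pos hη0 _
  have hk1 : η ^ k ≤ 1 := pow_le_one₀ hη0.le hη1.le
  have hle : η ^ (k + 1) ≤ η ^ k := pow_le_pow_of_le_one hη0.le hη1.le (Nat.le_succ k)
  have hmem : η ^ (k + 1) ∈ Ioc (0 : ℝ) 1 := ⟨hp, hle.trans hk1⟩
  have hi : IntegrableOn (fun t => σ t / t ^ (1 + β)) (Ioc (η ^ (k + 1)) (η ^ k)) :=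
    (aux_integrable σ hmono β _ hp).mono_set (Ioc_subset_Ioc_right hk1)
  have hconst : ∫ t in Ioc (η ^ (k + 1)) (η ^ k), σ (η ^ (k + 1)) / (η ^ k) ^ (1 + β)
      ≤ ∫ t in Ioc (η ^ (k + 1)) (η ^ k), σ t / t ^ (1 + β) := by
    refine setIntegral_mono_on (integrableOn_const (by simp)) hi measurableSet_Ioc ?_
    intro t ht
    have ht0 : 0 < t := hp.trans ht.1
    have hm : σ (η ^ (k + 1)) ≤ σ t := hmono hmem ⟨ht0, ht.2.trans hk1⟩ ht.1.le
    have h0 := hnn _ hmem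
    exact div_le_div₀ (h0.trans hm) hm (Real.rpow_pos_of_pos ht0 _)
      (Real.rpow_le_rpow ht0.le ht.2 (by linarith))
  rw [setIntegral_const, Measure.real, Real.volume_Ioc, ENNReal.toReal_ofReal (by linarith),
    smul_eq_mul] at hconst
  have hq : 0 < (η ^ β) ^ k := pow_pos (Real.rpow_pos_of_pos hη0 _) _
  have e : (η ^ k) ^ (1 + β) = η ^ k * (η ^ β) ^ k := by
    rw [Real.rpow_add hpk, Real.rpow_one, ← Real.rpow_natCast, ← Real.rpow_natCast,
      ← Real.rpow_mul hη0.le, ← Real.rpow_mul hη0.le, mul_comm (k : ℝ) β]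
  rw [e] at hconst
  refine le_trans (le_of_eq ?_) (mul_le_mul_of_nonneg_left hconst hq.le)
  field_simp
  ring

/-- The estimate (3.9) on the sequence `(a_k)`: under the recursions
`A_k = max(σ(η^{k−1}), θ A_{k−1})` and `a_k ≤ (1−μ)a_{k−1} + C̄ A_{k−1}` with
`η^β = 1 − μ`, `θ ≤ (1−μ)/2`, one has for `k ≥ 1`
`a_k ≤ (6C̄/((1−μ)³(1−η)))(c₀ η^{kβ} + η^{kβ} ∫_{η^k}^1 σ(t)/t^{1+β} dt)`,
and in particular `a_k ≤ 12 C̄ c₀ /((1−μ)³(1−η))` for all `k`. -/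
theorem stmt_12 (η μ : ℝ) (hη0 : 0 < η) (hη4 : η < 1 / 4) (hμ0 : 0 < μ) (hμ4 : μ < 1 / 4)
    (β : ℝ) (hβ : 0 < β) (hβdef : η ^ β = 1 - μ)
    (θ : ℝ) (hθ0 : 0 ≤ θ) (hθ : θ ≤ (1 - μ) / 2)
    (c₀ Cb : ℝ) (hc₀ : 0 < c₀) (hCb : 0 < Cb)
    (σ : ℝ → ℝ) (hmono : MonotoneOn σ (Ioc 0 1)) (hnn : ∀ r ∈ Ioc (0 : ℝ) 1, 0 ≤ σ r)
    (hσ1 : σ 1 ≤ c₀)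
    (hint : ∀ s : ℝ, 0 < s → s < 1 →
      s ^ β * ∫ t in Ioc s 1, σ t / t ^ (1 + β) ≤ c₀)
    (A : ℕ → ℝ) (hA0 : A 0 = c₀)
    (hA : ∀ k : ℕ, A (k + 1) = max (σ (η ^ k)) (θ * A k))
    (a : ℕ → ℝ) (ha0 : a 0 = 0) (hann : ∀ k, 0 ≤ a k)
    (harec : ∀ k : ℕ, a (k + 1) ≤ (1 - μ) * a k + Cb * A k) :
    (∀ k : ℕ, 1 ≤ k →
      a k ≤ 6 * Cb / ((1 - μ) ^ 3 * (1 - η)) *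
        (c₀ * η ^ ((k : ℝ) * β) +
          η ^ ((k : ℝ) * β) * ∫ t in Ioc (η ^ k : ℝ) 1, σ t / t ^ (1 + β))) ∧
    ∀ k : ℕ, a k ≤ 12 * Cb * c₀ / ((1 - μ) ^ 3 * (1 - η)) := by
  have hq0 : 0 < 1 - μ := by linarith
  have hη1 : η < 1 := by linarith
  have hA_nn : ∀ k, 0 ≤ A k := by
    intro k
    induction k with
    | zero => rw [hA0]; exact hc₀.le
    | succ k ih => rw [hA]; exact le_max_of_le_right (mul_nonneg hθ0 ih)
  have hpmem : ∀ k : ℕ, η ^ k ∈ Ioc (0 : ℝ) 1 :=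
    fun k => ⟨pow_pos hη0 _, pow_le_one₀ hη0.le hη1.le⟩
  obtain ⟨q, hq⟩ : ∃ q, q = 1 - μ := ⟨_, rfl⟩
  rw [← hq] at hβdef hθ hq0 ⊢
  simp only [← hq] at harec
  have hq1 : q < 1 := by linarith
  obtain ⟨K, hK⟩ : ∃ K, K = 6 * Cb / (q ^ 3 * (1 - η)) := ⟨_, rfl⟩
  have h1η : 0 < 1 - η := by linarith
  have hK0 : 0 < K := by rw [hK]; positivity
  have hKe : K * (q ^ 3 * (1 - η)) = 6 * Cb := by rw [hK]; field_simp
  obtain ⟨m, hm⟩ : ∃ m, m = 2 * Cb / q := ⟨_, rfl⟩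
  have hm0 : 0 < m := by rw [hm]; positivity
  have hme : m * q = 2 * Cb := by rw [hm]; field_simp
  obtain ⟨I, hI⟩ : ∃ I : ℕ → ℝ, I = fun k => ∫ t in Ioc (η ^ k : ℝ) 1, σ t / t ^ (1 + β) :=
    ⟨_, rfl⟩
  obtain ⟨J, hJ⟩ : ∃ J : ℕ → ℝ,
      J = fun k => ∫ t in Ioc (η ^ (k + 1) : ℝ) (η ^ k), σ t / t ^ (1 + β) := ⟨_, rfl⟩
  have hIJ : ∀ k, I (k + 1) = J k + I k := by
    intro k
    have hle : η ^ (k + 1) ≤ η ^ k := pow_le_pow_of_le_one hη0.le hη1.le (Nat.le_succ k)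
    have hi := aux_integrable σ hmono β (η ^ (k + 1)) (pow_pos hη0 _)
    simp only [hI, hJ]
    rw [← Ioc_union_Ioc_eq_Ioc hle (hpmem k).2]
    exact setIntegral_union (Ioc_disjoint_Ioc_of_le le_rfl) measurableSet_Ioc
      (hi.mono_set (Ioc_subset_Ioc_right (hpmem k).2)) (hi.mono_set (Ioc_subset_Ioc_left hle))
  have hpiece : ∀ k, σ (η ^ (k + 1)) * (1 - η) ≤ q ^ k * J k := by
    intro k
    have := aux_piece η β hη0 hη1 hβ σ hmono hnn k
    rw [hβdef] at this
    simpa only [hJ] using this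
  have hJ0 : ∀ k, 0 ≤ J k := by
    intro k
    have h1 : 0 ≤ q ^ k * J k :=
      (mul_nonneg (hnn _ (hpmem (k + 1))) h1η.le).trans (hpiece k)
    exact nonneg_of_mul_nonneg_right h1 (pow_pos hq0 k)
  have hI0 : I 0 = 0 := by simp [hI]
  have hV : ∀ k, a (k + 1) + m * A (k + 1) ≤ q * (a k + m * A k) + m * σ (η ^ k) := by
    intro k
    have h1 : A (k + 1) ≤ σ (η ^ k) + q / 2 * A k := by
      rw [hA]
      have h2 : θ * A k ≤ q / 2 * A k := mul_le_mul_of_nonneg_right hθ (hA_nn k)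
      have h3 : 0 ≤ q / 2 * A k := mul_nonneg (by linarith) (hA_nn k)
      have h4 := hnn _ (hpmem k)
      exact max_le (by linarith) (by linarith)
    have h5 := mul_le_mul_of_nonneg_left h1 hm0.le
    have h6 := harec k
    have h7 : m * (q / 2 * A k) = Cb * A k := by linear_combination (A k / 2) * hme
    have h8 : q * (m * A k) = 2 * (Cb * A k) := by linear_combination (A k) * hme
    linarith
  have hKm : 3 * m ≤ K * q ^ 2 := by
    have h1 : K * q ^ 2 * (1 - η) = 3 * m := by
      have : q * (K * q ^ 2 * (1 - η)) = q * (3 * m) := by linear_combination hKe - 3 * hme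
      exact mul_left_cancel₀ hq0.ne' this
    have : 0 < K * q ^ 2 * η := by positivity
    linarith
  have hmain : ∀ k, a (k + 1) + m * A (k + 1) ≤ K * q ^ (k + 1) * (c₀ + I k) := by
    intro k
    induction k with
    | zero =>
      have h := hV 0
      rw [ha0, hA0, pow_zero] at h
      rw [hI0]
      have h1 : m * σ 1 ≤ m * c₀ := mul_le_mul_of_nonneg_left hσ1 hm0.le
      have h2 : q * (m * c₀) ≤ m * c₀ := mul_le_of_le_one_left (by positivity) hq1.le
      have h3 : K * q ^ 2 ≤ K * q := by
        apply mul_le_mul_of_nonneg_left _ hK0.le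
        nlinarith
      have h4 : 3 * m * c₀ ≤ K * q * c₀ := mul_le_mul_of_nonneg_right (hKm.trans h3) hc₀.le
      have h5 : 0 < m * c₀ := by positivity
      simp only [zero_add, pow_one, add_zero] at h ⊢
      linarith
    | succ k ih =>
      have h := hV (k + 1)
      have h1 := mul_le_mul_of_nonneg_left ih hq0.le
      have h2 : m * σ (η ^ (k + 1)) ≤ K * q ^ (k + 2) * J k := by
        have h3 := mul_le_mul_of_nonneg_left (hpiece k) hm0.le
        have h4 : K * q ^ 2 * (1 - η) = 3 * m := by
          have : q * (K * q ^ 2 * (1 - η)) = q * (3 * m) := by linear_combination hKe - 3 * hme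
          exact mul_left_cancel₀ hq0.ne' this
        have h5 : 0 ≤ m * (q ^ k * J k) :=
          mul_nonneg hm0.le (mul_nonneg (pow_pos hq0 k).le (hJ0 k))
        have h6 : (K * q ^ (k + 2) * J k) * (1 - η) = 3 * (m * (q ^ k * J k)) := by
          linear_combination (q ^ k * J k) * h4
        refine le_of_mul_le_mul_right ?_ h1η
        rw [h6]
        linarith
      rw [hIJ]
      have e : K * q ^ (k + 1 + 1) * (c₀ + (J k + I k)) =
        q * (K * q ^ (k + 1) * (c₀ + I k)) + K * q ^ (k + 2) * J k := by ring
      rw [e]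
      linarith
  have hpow : ∀ k : ℕ, η ^ ((k : ℝ) * β) = q ^ k := by
    intro k
    rw [mul_comm, Real.rpow_mul hη0.le, hβdef, Real.rpow_natCast]
  have hfirst : ∀ k : ℕ, 1 ≤ k → a k ≤ K * (c₀ * q ^ k + q ^ k * I k) := by
    intro k hk
    obtain ⟨j, rfl⟩ : ∃ j, k = j + 1 := ⟨k - 1, by omega⟩
    have h1 := hmain j
    have h2 : 0 ≤ m * A (j + 1) := mul_nonneg hm0.le (hA_nn _)
    have h3 : 0 ≤ K * q ^ (j + 1) * J j :=
      mul_nonneg (mul_nonneg hK0.le (pow_pos hq0 _).le) (hJ0 j)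
    have e : K * (c₀ * q ^ (j + 1) + q ^ (j + 1) * I (j + 1)) =
        K * q ^ (j + 1) * (c₀ + I j) + K * q ^ (j + 1) * J j := by rw [hIJ]; ring
    rw [e]
    linarith
  refine ⟨?_, ?_⟩
  · intro k hk
    rw [hpow, ← hK]
    have := hfirst k hk
    simpa only [hI] using this
  · intro k
    have e : 12 * Cb * c₀ / (q ^ 3 * (1 - η)) = K * (c₀ + c₀) := by rw [hK]; ring
    rw [e]
    rcases Nat.eq_zero_or_pos k with rfl | hk
    · rw [ha0]; positivity
    · refine (hfirst k hk).trans (mul_le_mul_of_nonneg_left (add_le_add ?_ ?_) hK0.le)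
      · exact mul_le_of_le_one_right hc₀.le (pow_le_one₀ hq0.le hq1.le)
      · have h := hint (η ^ k) (pow_pos hη0 k) (pow_lt_one₀ hη0.le hη1 (by omega))
        rw [← Real.rpow_natCast_mul hη0.le, hpow] at h
        simpa only [hI] using h
end

section
/- Let n ≥ 2 and 0 < λ ≤ Λ, set α = nΛ/λ, and define v(x) = 2(1 − |x + eₙ|^{−α}) for x ≠ −eₙ. Then: (i) for every x with xₙ > 0 and every real symmetric n×n matrix A with λI ≼ A ≼ ΛI in the Loewner order, tr(A · D²v(x)) ≤ 0 (i.e. M⁺(D²v, λ, Λ) ≤ 0 in the upper half-space); (ii) v(x) ≥ 0 whenever xₙ ≥ 0; (iii) v(x) ≥ 1 whenever |x| = 1 and xₙ ≥ 0; (iv) v(0) = 0; (v) v(t·eₙ) ≤ 2αt for all t ≥ 0. -/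
open MeasureTheory Set

noncomputable section

lemma aux_coord {n : ℕ} (hn : 2 ≤ n) (x : EucSp n) :
    lastCoord n x = inner ℝ x (lastBasis n) := by
  have h : 0 < n := by omega
  simp [lastCoord, lastBasis, h, EuclideanSpace.inner_single_right]

lemma aux_norm {n : ℕ} (hn : 2 ≤ n) : ‖lastBasis n‖ = 1 := by
  have h : 0 < n := by omega
  simp [lastBasis, h]

lemma aux_sq {n : ℕ} (hn : 2 ≤ n) (x : EucSp n) :
    ‖x + lastBasis n‖ ^ 2 = ‖x‖ ^ 2 + 2 * lastCoord n x + 1 := by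
  rw [norm_add_sq_real, aux_norm hn, aux_coord hn]; norm_num

lemma aux_rpow (r α : ℝ) (hr : 0 ≤ r) : r ^ (-α) = (r ^ 2) ^ (-α / 2) := by
  rw [← Real.rpow_natCast r 2, ← Real.rpow_mul hr]
  congr 1; push_cast; ring

lemma aux_fderiv {E : Type*} [NormedAddCommGroup E] [InnerProductSpace ℝ E] (e : E) (p : ℝ)
    (x : E) (hx : x + e ≠ 0) :
    HasFDerivAt (fun z : E => (‖z + e‖ ^ 2) ^ p)
      ((2 * p * (‖x + e‖ ^ 2) ^ (p - 1)) • innerSL ℝ (x + e)) x := by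
  have h1 : HasFDerivAt (fun z : E => ‖z + e‖ ^ 2) (2 • innerSL ℝ (x + e)) x := by
    have := ((hasFDerivAt_id x).add_const e).norm_sq
    simpa using this
  have h2 := h1.rpow_const (p := p) (Or.inl (by positivity))
  convert h2 using 1
  ext h
  simp
  ring

lemma aux_hess {E : Type*} [NormedAddCommGroup E] [InnerProductSpace ℝ E] (e : E) (p : ℝ)
    (v : E → ℝ) (hv : ∀ x, v x = 2 * (1 - (‖x + e‖ ^ 2) ^ p))
    (x : E) (hx : x + e ≠ 0) (h k : E) :
    iteratedFDeriv ℝ 2 v x ![h, k] =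
      -2 * (4 * p * (p - 1) * (‖x + e‖ ^ 2) ^ (p - 2) * inner ℝ (x + e) h * inner ℝ (x + e) k
        + 2 * p * (‖x + e‖ ^ 2) ^ (p - 1) * inner ℝ h k) := by
  rw [iteratedFDeriv_two_apply]
  have hev : ∀ᶠ z in nhds x, z + e ≠ 0 := by
    have : Continuous fun z : E => z + e := by fun_prop
    exact this.continuousAt.eventually_ne hx
  have h1 : fderiv ℝ v =ᶠ[nhds x]
      fun z => (-4 * p * (‖z + e‖ ^ 2) ^ (p - 1)) • innerSL ℝ (z + e) := by
    filter_upwards [hev] with z hz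
    have hv' : v = fun x => 2 * (1 - (‖x + e‖ ^ 2) ^ p) := funext hv
    have := ((aux_fderiv e p z hz).const_sub 1).const_mul 2
    rw [hv', this.fderiv]
    ext h
    simp
    ring
  rw [h1.fderiv_eq]
  have h2 := (aux_fderiv e (p - 1) x hx).const_mul (-4 * p)
  have h3 : HasFDerivAt (fun z : E => innerSL ℝ (z + e)) (innerSL ℝ : E →L[ℝ] E →L[ℝ] ℝ) x := by
    have := (innerSL ℝ : E →L[ℝ] E →L[ℝ] ℝ).hasFDerivAt.comp x ((hasFDerivAt_id x).add_const e)
    exact this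
  have h4 := h2.smul h3
  have h5 : fderiv ℝ (fun z => (-4 * p * (‖z + e‖ ^ 2) ^ (p - 1)) • innerSL ℝ (z + e)) x = _ :=
    h4.fderiv
  rw [h5]
  have : p - 1 - 1 = p - 2 := by ring
  have hk : ((innerSL ℝ : E →L[ℝ] E →L[ℝ] ℝ) h) k = inner ℝ h k := rfl
  simp [this, hk, -map_add]
  ring

lemma aux_trace {n : ℕ} (lam Lam : ℝ) (A : Matrix (Fin n) (Fin n) ℝ)
    (hA : IsElliptic n lam Lam A) : A.trace ≤ n * Lam := by
  have := hA.2.2.trace_nonneg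
  simp [Matrix.trace_sub, Matrix.trace_smul] at this
  linarith

lemma aux_quad {n : ℕ} (lam Lam : ℝ) (A : Matrix (Fin n) (Fin n) ℝ)
    (hA : IsElliptic n lam Lam A) (y : EucSp n) :
    lam * ‖y‖ ^ 2 ≤ ∑ i, ∑ j, A i j * (y j * y i) := by
  have := hA.2.1.dotProduct_mulVec_nonneg (y : Fin n → ℝ)
  rw [Matrix.sub_mulVec, dotProduct_sub, Matrix.smul_mulVec, Matrix.one_mulVec,
    dotProduct_smul] at this
  rw [EuclideanSpace.real_norm_sq_eq]
  simp only [dotProduct, Matrix.mulVec, star_trivial, Pi.star_apply, smul_eq_mul] at this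
  have e1 : ∑ i, y i * ∑ j, A i j * y j = ∑ i, ∑ j, A i j * (y j * y i) := by
    simp only [Finset.mul_sum]
    refine Finset.sum_congr rfl fun i _ => Finset.sum_congr rfl fun j _ => by ring
  have e2 : ∑ i, y i * y i = ∑ i, y i ^ 2 :=
    Finset.sum_congr rfl fun i _ => by ring
  rw [e1, e2] at this
  linarith

/-- The barrier `v(x) = 2(1 − |x + eₙ|^{−α})` with `α = nΛ/λ`: it is a supersolution of
the Pucci maximal operator in the upper half-space (`M⁺(D²v,λ,Λ) ≤ 0`), nonnegative on
`{xₙ ≥ 0}`, at least `1` on the upper unit sphere, vanishes at `0`, and grows at most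
linearly along the `eₙ`-axis. -/
theorem stmt_17 {n : ℕ} (hn : 2 ≤ n) (lam Lam : ℝ) (hlam : 0 < lam) (hLam : lam ≤ Lam)
    (α : ℝ) (hα : α = n * Lam / lam)
    (v : EucSp n → ℝ) (hv : ∀ x, v x = 2 * (1 - ‖x + lastBasis n‖ ^ (-α))) :
    (∀ x : EucSp n, 0 < lastCoord n x →
      ∀ A : Matrix (Fin n) (Fin n) ℝ, IsElliptic n lam Lam A →
        (A * hessianMatrix n v x).trace ≤ 0) ∧
    (∀ x : EucSp n, 0 ≤ lastCoord n x → 0 ≤ v x) ∧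
    (∀ x : EucSp n, ‖x‖ = 1 → 0 ≤ lastCoord n x → 1 ≤ v x) ∧
    v 0 = 0 ∧
    (∀ t : ℝ, 0 ≤ t → v (t • lastBasis n) ≤ 2 * α * t) := by
  have hα2 : 2 ≤ α := by
    have h2 : (2 : ℝ) ≤ n := by exact_mod_cast hn
    rw [hα, le_div_iff₀ hlam]; nlinarith
  have hv2 : ∀ x, v x = 2 * (1 - (‖x + lastBasis n‖ ^ 2) ^ (-α / 2)) := fun x => by
    rw [hv, aux_rpow _ _ (norm_nonneg _)]
  refine ⟨?_, ?_, ?_, ?_, ?_⟩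
  · intro x hx A hA
    have hs : 0 < ‖x + lastBasis n‖ ^ 2 := by rw [aux_sq hn]; positivity
    have hne : x + lastBasis n ≠ 0 := by
      intro h; rw [h] at hs; simp at hs
    have hH := fun i j : Fin n => aux_hess (lastBasis n) (-α / 2) v hv2 x hne
      (EuclideanSpace.single i 1) (EuclideanSpace.single j 1)
    set y := x + lastBasis n with hy
    set s := ‖y‖ ^ 2 with hsdef
    have hq := aux_quad lam Lam A hA y
    have ht := aux_trace lam Lam A hA
    have key : (A * hessianMatrix n v x).trace
        = -2 * α * s ^ (-α / 2 - 2) *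
          ((α + 2) * (∑ i, ∑ j, A i j * (y j * y i)) - s * A.trace) := by
      have hs1 : s ^ (-α / 2 - 1) = s ^ (-α / 2 - 2) * s := by
        rw [← Real.rpow_add_one hs.ne']; congr 1; ring
      have hent : ∀ i j, hessianMatrix n v x j i = -2 * α * s ^ (-α / 2 - 2) *
          ((α + 2) * (y j * y i) - s * (if i = j then 1 else 0)) := by
        intro i j
        simp only [hessianMatrix, Matrix.of_apply]
        rw [hH, hs1]
        simp only [EuclideanSpace.inner_single_right, EuclideanSpace.inner_single_left]
        simp [PiLp.single_apply]
        split_ifs <;> ring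
      have htr : A.trace = ∑ i, ∑ j, A i j * (if i = j then 1 else 0) := by
        simp [Matrix.trace]
      rw [htr, Matrix.trace]
      simp only [Matrix.diag_apply, Matrix.mul_apply, hent, Finset.mul_sum,
        ← Finset.sum_sub_distrib]
      refine Finset.sum_congr rfl fun i _ => Finset.sum_congr rfl fun j _ => by ring
    rw [key]
    have hc : 0 < s ^ (-α / 2 - 2) := Real.rpow_pos_of_pos hs _
    have hαl : α * lam = n * Lam := by rw [hα]; field_simp
    have hb : 0 ≤ (α + 2) * (∑ i, ∑ j, A i j * (y j * y i)) - s * A.trace := by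
      have a1 := mul_le_mul_of_nonneg_left hq (by linarith : 0 ≤ α + 2)
      have a2 := mul_le_mul_of_nonneg_left ht hs.le
      have a3 : (α + 2) * (lam * s) = s * (n * Lam) + 2 * lam * s := by rw [← hαl]; ring
      have a4 : 0 < lam * s := by positivity
      linarith
    have : 0 ≤ 2 * α * s ^ (-α / 2 - 2) := by positivity
    nlinarith [mul_nonneg this hb]
  · intro x hx
    rw [hv2]
    have h1 : 1 ≤ ‖x + lastBasis n‖ ^ 2 := by
      rw [aux_sq hn]; nlinarith [sq_nonneg ‖x‖]
    have := Real.rpow_le_one_of_one_le_of_nonpos h1 (by linarith : -α / 2 ≤ 0)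
    linarith
  · intro x hx1 hx
    rw [hv2]
    have h1 : 2 ≤ ‖x + lastBasis n‖ ^ 2 := by
      rw [aux_sq hn, hx1]; linarith
    have h2 := Real.rpow_le_rpow_of_exponent_le (by linarith : 1 ≤ ‖x + lastBasis n‖ ^ 2)
      (by linarith : -α / 2 ≤ -1)
    rw [Real.rpow_neg_one] at h2
    have h3 : (‖x + lastBasis n‖ ^ 2)⁻¹ ≤ 2⁻¹ := inv_anti₀ (by norm_num) h1
    linarith
  · rw [hv, zero_add, aux_norm hn]; simp
  · intro t ht
    have h1 : ‖t • lastBasis n + lastBasis n‖ = 1 + t := by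
      have : t • lastBasis n + lastBasis n = (1 + t) • lastBasis n := by
        rw [add_smul, one_smul, add_comm]
      rw [this, norm_smul, aux_norm hn, Real.norm_of_nonneg (by linarith), mul_one]
    rw [hv, h1, Real.rpow_def_of_pos (by linarith)]
    have h2 := Real.add_one_le_exp (Real.log (1 + t) * -α)
    have h3 := Real.log_le_sub_one_of_pos (by linarith : 0 < 1 + t)
    nlinarith
end
end
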